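/- arXiv:2209.02657 — 2 statements merged into one kernel-verified Lean document; each statement's English description precedes it below -/
import Mathlib

section
/- Let n ≥ 2 and let q > 2 be a prime power. Let Σ be a nonempty family of hyperplanes of PG(2n+1,q) satisfying properties (P1^−) and (P2). Then there exists a nonsingular elliptic quadratic form φ on V = F^{2n+2}, with elliptic quadric Q = Q^−(2n+1,q), such that Σ is exactly the set of all hyperplanes of PG(2n+1,q) that are parabolic with respect to Q, i.e. that contain exactly (q^{2n}−1)/(q−1) points of Q. -/
namespace EllQ
open Module

section counting
open Classical
variable {F : Type*} [Field F] [Fintype F] {V : Type*} [AddCommGroup V] [Module F V] [Fintype V]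
  [Fintype (Dual F V)]

/-- number of vectors of `Z` in the kernel of `l` -/
noncomputable def sec (Z : Finset V) (l : Dual F V) : ℕ := (Z.filter (fun z => l z = 0)).card

/-- functionals vanishing on `K` -/
noncomputable def ann (K : Submodule F V) : Finset (Dual F V) :=
  Finset.univ.filter (fun l => ∀ k ∈ K, l k = 0)

/-- vectors of `Z` in `K` -/
noncomputable def inter (Z : Finset V) (K : Submodule F V) : ℕ := (Z.filter (fun z => z ∈ K)).card

lemma ann_card (K : Submodule F V) :
    (ann K).card * Fintype.card F ^ finrank F K = Fintype.card F ^ finrank F V := by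
  have h1 : (ann K).card = Nat.card K.dualAnnihilator := by
    rw [Nat.card_eq_fintype_card, Fintype.card_subtype]
    congr 1
    ext l
    simp [ann, Submodule.mem_dualAnnihilator]
  rw [h1, Module.natCard_eq_pow_finrank (K := F), Nat.card_eq_fintype_card, ← pow_add, add_comm,
    Subspace.finrank_add_finrank_dualAnnihilator_eq]

lemma finrank_sup_singleton (K : Submodule F V) {v : V} (hv : v ∉ K) :
    finrank F (K ⊔ Submodule.span F {v} : Submodule F V) = finrank F K + 1 := by
  have h := Submodule.finrank_sup_add_finrank_inf_eq K (Submodule.span F {v})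
  have hv0 : v ≠ 0 := fun h => hv (h ▸ K.zero_mem)
  have hinf : K ⊓ Submodule.span F {v} = ⊥ := by
    rw [← disjoint_iff, Submodule.disjoint_span_singleton' hv0]
    exact hv
  rw [hinf, finrank_bot, finrank_span_singleton hv0] at h
  omega

lemma ann_step (K : Submodule F V) {v : V} (hv : v ∉ K) :
    (ann (K ⊔ Submodule.span F {v})).card * Fintype.card F = (ann K).card := by
  have h1 := ann_card K
  have h2 := ann_card (K ⊔ Submodule.span F {v})
  rw [finrank_sup_singleton K hv] at h2
  have hq : 0 < Fintype.card F ^ finrank F K := pow_pos Fintype.card_pos _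
  apply Nat.eq_of_mul_eq_mul_right hq
  rw [h1, ← h2]; ring

lemma mem_ann_sup (K : Submodule F V) (v : V) (l : Dual F V) :
    l ∈ ann (K ⊔ Submodule.span F {v}) ↔ l ∈ ann K ∧ l v = 0 := by
  simp only [ann, Finset.mem_filter, Finset.mem_univ, true_and]
  constructor
  · intro h
    exact ⟨fun k hk => h k (Submodule.mem_sup_left hk),
      h v (Submodule.mem_sup_right (Submodule.mem_span_singleton_self v))⟩
  · rintro ⟨h1, h2⟩ k hk
    obtain ⟨a, ha, b, hb, rfl⟩ := Submodule.mem_sup.1 hk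
    obtain ⟨c, rfl⟩ := Submodule.mem_span_singleton.1 hb
    simp [h1 a ha, h2]

lemma sup_of_mem (K : Submodule F V) {v : V} (hv : v ∈ K) : K ⊔ Submodule.span F {v} = K := by
  rw [sup_eq_left, Submodule.span_singleton_le_iff_mem]; exact hv

/-- double counting with an arbitrary weight -/
lemma sum_swap (Z : Finset V) (K : Submodule F V) (g : Dual F V → ℤ) :
    ∑ l ∈ ann K, (sec Z l : ℤ) * g l
      = ∑ z ∈ Z, ∑ l ∈ ann (K ⊔ Submodule.span F {z}), g l := by
  have h1 : ∀ l ∈ ann K, (sec Z l : ℤ) * g l = ∑ z ∈ Z, if l z = 0 then g l else 0 := by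
    intro l _
    rw [← Finset.sum_filter, Finset.sum_const, sec, nsmul_eq_mul]
  rw [Finset.sum_congr rfl h1, Finset.sum_comm]
  refine Finset.sum_congr rfl fun z _ => ?_
  rw [← Finset.sum_filter]
  refine Finset.sum_congr ?_ fun _ _ => rfl
  ext l
  rw [Finset.mem_filter, mem_ann_sup]

lemma inter_add (Z : Finset V) (K : Submodule F V) :
    (inter Z K : ℤ) + ((Z.filter (fun z => z ∉ K)).card : ℤ) = Z.card := by
  rw [inter]; exact_mod_cast Finset.card_filter_add_card_filter_not (s := Z) (fun z => z ∈ K)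

lemma first_moment (Z : Finset V) (K : Submodule F V) :
    (Fintype.card F : ℤ) * ∑ l ∈ ann K, (sec Z l : ℤ)
      = (ann K).card * (((Fintype.card F : ℤ) - 1) * inter Z K + Z.card) := by
  have h := sum_swap Z K (fun _ => 1)
  simp only [mul_one, Finset.sum_const, nsmul_eq_mul] at h
  rw [h, Finset.mul_sum, ← Finset.sum_filter_add_sum_filter_not Z (fun z => z ∈ K)]
  have h1 : ∀ z ∈ Z.filter (fun z => z ∈ K), (Fintype.card F : ℤ) *
      ((ann (K ⊔ Submodule.span F {z})).card : ℤ) = Fintype.card F * (ann K).card := by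
    intro z hz
    rw [sup_of_mem K (Finset.mem_filter.1 hz).2]
  have h2 : ∀ z ∈ Z.filter (fun z => z ∉ K), (Fintype.card F : ℤ) *
      ((ann (K ⊔ Submodule.span F {z})).card : ℤ) = (ann K).card := by
    intro z hz
    rw [mul_comm]
    exact_mod_cast ann_step K (Finset.mem_filter.1 hz).2
  rw [Finset.sum_congr rfl h1, Finset.sum_congr rfl h2, Finset.sum_const, Finset.sum_const]
  have h3 := inter_add Z K
  simp only [nsmul_eq_mul]
  rw [← inter]
  linear_combination ((ann K).card : ℤ) * h3

lemma second_moment (Z : Finset V) (K : Submodule F V) :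
    (Fintype.card F : ℤ) * ∑ l ∈ ann K, (sec Z l : ℤ) ^ 2
      = ∑ z ∈ Z, ((ann (K ⊔ Submodule.span F {z})).card : ℤ) *
        (((Fintype.card F : ℤ) - 1) * inter Z (K ⊔ Submodule.span F {z}) + Z.card) := by
  have h := sum_swap Z K (fun l => (sec Z l : ℤ))
  simp only [pow_two]
  rw [h, Finset.mul_sum]
  exact Finset.sum_congr rfl fun z _ => first_moment Z _

end counting
end EllQ


namespace EllQ
open Module
set_option linter.unusedSectionVars false

/-- The abstract situation: a cone `Z` with the line property and two hyperplane section sizes. -/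
structure Hyp (F : Type*) [Field F] [Fintype F] {V : Type*} [AddCommGroup V] [Module F V] [Fintype V]
    (n q : ℕ) (Z : Finset V) : Prop where
  hn : 2 ≤ n
  hq : Fintype.card F = q
  hq2 : 2 < q
  dim : finrank F V = 2 * n + 2
  zero_mem : (0 : V) ∈ Z
  smul_mem : ∀ (c : F) (z : V), z ∈ Z → c • z ∈ Z
  line : ∀ x ∈ Z, ∀ y ∈ Z, x + y ∈ Z → ∀ c : F, x + c • y ∈ Z
  count : ∀ l : Dual F V, l ≠ 0 → (sec Z l : ℤ) = ((q : ℤ) ^ n) ^ 2 ∨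
    (sec Z l : ℤ) = ((q : ℤ) ^ n) ^ 2 - q * (q : ℤ) ^ n + (q : ℤ) ^ n

section
open Classical
variable {F : Type*} [Field F] [Fintype F] {V : Type*} [AddCommGroup V] [Module F V] [Fintype V]
  [Fintype (Dual F V)] {n q : ℕ} {Z : Finset V}

lemma sec_zero : sec (F := F) Z 0 = Z.card := by simp [sec]

lemma zero_mem_ann (K : Submodule F V) : (0 : Dual F V) ∈ ann K := by simp [ann]

lemma Hyp.two_val (h : Hyp F n q Z) (K : Submodule F V) (A B : ℤ) (hA : A = ((q : ℤ) ^ n) ^ 2)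
    (hB : B = ((q : ℤ) ^ n) ^ 2 - q * (q : ℤ) ^ n + (q : ℤ) ^ n) :
    ∑ l ∈ ann K, (sec Z l : ℤ) ^ 2 - (A + B) * ∑ l ∈ ann K, (sec Z l : ℤ) + A * B * (ann K).card
      = (Z.card - A) * (Z.card - B) := by
  have h1 : ∑ l ∈ ann K, ((sec Z l : ℤ) - A) * ((sec Z l : ℤ) - B)
      = (Z.card - A) * (Z.card - B) := by
    rw [Finset.sum_eq_single (0 : Dual F V)]
    · rw [sec_zero]
    · intro l _ hl
      rcases h.count l hl with h | h
      · rw [h, hA]; ring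
      · rw [h, hB]; ring
    · intro h0; exact absurd (zero_mem_ann K) h0
  rw [← h1, Finset.mul_sum, mul_comm (A * B), ← nsmul_eq_mul, ← Finset.sum_const,
    ← Finset.sum_sub_distrib, ← Finset.sum_add_distrib]
  exact Finset.sum_congr rfl fun l _ => by ring

lemma Hyp.inter_span (h : Hyp F n q Z) {z : V} (hz : z ∈ Z) (h0 : z ≠ 0) :
    inter Z (Submodule.span F {z}) = q := by
  rw [inter, ← h.hq, ← Finset.card_univ]
  symm
  apply Finset.card_bij (fun (c : F) _ => c • z)
  · intro c _
    exact Finset.mem_filter.2 ⟨h.smul_mem c z hz, Submodule.smul_mem _ _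
      (Submodule.mem_span_singleton_self z)⟩
  · intro a _ b _ hab
    exact smul_left_injective F h0 hab
  · intro b hb
    obtain ⟨c, rfl⟩ := Submodule.mem_span_singleton.1 (Finset.mem_filter.1 hb).2
    exact ⟨c, Finset.mem_univ _, rfl⟩

lemma Hyp.ann_bot_card (h : Hyp F n q Z) :
    ((ann (⊥ : Submodule F V)).card : ℤ) = q ^ 2 * ((q : ℤ) ^ n) ^ 2 := by
  have := ann_card (⊥ : Submodule F V)
  rw [h.hq, finrank_bot, h.dim, pow_zero, mul_one] at this
  rw [this]; push_cast; ring

lemma Hyp.ann_span_card (h : Hyp F n q Z) {z : V} (h0 : z ≠ 0) :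
    ((ann (Submodule.span F {z} : Submodule F V)).card : ℤ) = q * ((q : ℤ) ^ n) ^ 2 := by
  have := ann_card (Submodule.span F {z} : Submodule F V)
  rw [h.hq, finrank_span_singleton h0, h.dim, pow_one] at this
  have hq := h.hq2
  have hq0 : (q : ℤ) ≠ 0 := by positivity
  apply mul_right_cancel₀ hq0
  have h2 : ((ann (Submodule.span F {z} : Submodule F V)).card : ℤ) * q = (q : ℤ) ^ (2 * n + 2) := by
    exact_mod_cast this
  rw [h2]; ring

lemma Hyp.qn_ge (h : Hyp F n q Z) : (q : ℤ) ^ 2 ≤ (q : ℤ) ^ n := by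
  have := h.hq2
  exact pow_le_pow_right₀ (by linarith) h.hn

lemma Hyp.card_Z (h : Hyp F n q Z) :
    (Z.card : ℤ) = q * ((q : ℤ) ^ n) ^ 2 - q * (q : ℤ) ^ n + (q : ℤ) ^ n := by
  have h1 := h.two_val ⊥ _ _ rfl rfl
  have h2 := first_moment Z (⊥ : Submodule F V)
  have h3 := second_moment Z (⊥ : Submodule F V)
  have i0 : inter Z (⊥ : Submodule F V) = 1 := by
    rw [inter, Finset.card_eq_one]
    refine ⟨0, ?_⟩
    ext z
    simp only [Finset.mem_filter, Submodule.mem_bot, Finset.mem_singleton]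
    constructor
    · exact fun h => h.2
    · rintro rfl; exact ⟨h.zero_mem, rfl⟩
  rw [← Finset.add_sum_erase Z _ h.zero_mem] at h3
  have h4 : ∀ z ∈ Z.erase 0, ((ann ((⊥ : Submodule F V) ⊔ Submodule.span F {z})).card : ℤ) *
        (((Fintype.card F : ℤ) - 1) * inter Z ((⊥ : Submodule F V) ⊔ Submodule.span F {z}) + Z.card)
        = (q * ((q : ℤ) ^ n) ^ 2) * (((q : ℤ) - 1) * q + Z.card) := by
    intro z hz
    rw [bot_sup_eq, h.inter_span (Finset.mem_of_mem_erase hz) (Finset.ne_of_mem_erase hz),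
      h.ann_span_card (Finset.ne_of_mem_erase hz), h.hq]
  rw [Finset.sum_congr rfl h4, Finset.sum_const, sup_of_mem _ (Submodule.zero_mem _), i0,
    h.ann_bot_card, h.hq, nsmul_eq_mul, Finset.card_erase_of_mem h.zero_mem] at h3
  rw [i0, h.ann_bot_card, h.hq] at h2
  rw [h.ann_bot_card] at h1
  have hN1 : 1 ≤ Z.card := Finset.card_pos.2 ⟨0, h.zero_mem⟩
  push_cast [Nat.cast_sub hN1] at h3 h2
  have hQ := h.qn_ge
  have hq2 : (2 : ℤ) < q := by exact_mod_cast h.hq2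
  have hdvd : ((q : ℤ) ^ n - 1) ∣ ((q : ℤ) ^ n - 1) := dvd_refl _
  generalize (Z.card : ℤ) = N at *
  generalize (q : ℤ) ^ n = Q at *
  generalize (q : ℤ) = r at *
  generalize ∑ l ∈ ann (⊥ : Submodule F V), (sec Z l : ℤ) = S1 at *
  generalize ∑ l ∈ ann (⊥ : Submodule F V), (sec Z l : ℤ) ^ 2 = S2 at *
  have hr : r ≠ 0 := by positivity
  have h2' : S1 = r * Q ^ 2 * (r - 1 + N) := by
    apply mul_left_cancel₀ hr; linear_combination h2
  have h3' : S2 = r * Q ^ 2 * (r - 1 + N) + Q ^ 2 * (N - 1) * ((r - 1) * r + N) := by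
    apply mul_left_cancel₀ hr; linear_combination h3
  rw [h2', h3'] at h1
  have key : (N - (r * Q ^ 2 - r * Q + Q)) * ((Q - 1) * (r ^ 2 * Q ^ 2 - N)
      - (r - 1) * Q ^ 2 * (r * Q - 1)) * (Q + 1) = 0 := by
    linear_combination (-1) * h1
  have hQ1 : Q + 1 ≠ 0 := by nlinarith
  rcases mul_eq_zero.1 ((mul_eq_zero.1 key).resolve_right hQ1) with h5 | h5
  · linarith
  · exfalso
    have h6 : (Q - 1) ∣ (r - 1) ^ 2 := by
      refine ⟨(r ^ 2 * Q ^ 2 - N) - (r - 1) * (r * Q ^ 2 + (r - 1) * Q + (r - 1)) , ?_⟩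
      linear_combination (-1) * h5
    have h7 := Int.le_of_dvd (by nlinarith) h6
    nlinarith
end
end EllQ


namespace EllQ
open Module
set_option linter.unusedSectionVars false

section
open Classical
variable {F : Type*} [Field F] [Fintype F] {V : Type*} [AddCommGroup V] [Module F V] [Fintype V]
  {n q : ℕ} {Z : Finset V}

lemma Hyp.line2 (h : Hyp F n q Z) {x y : V} (hx : x ∈ Z) (hy : y ∈ Z) (hxy : x + y ∈ Z) (a b : F) :
    a • x + b • y ∈ Z := by
  by_cases ha : a = 0
  · subst ha; rw [zero_smul, zero_add]; exact h.smul_mem b y hy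
  · have h1 := h.smul_mem a _ (h.line x hx y hy hxy (a⁻¹ * b))
    rwa [smul_add, smul_smul, mul_inv_cancel_left₀ ha] at h1

lemma Hyp.line3 (h : Hyp F n q Z) {x y : V} (hx : x ∈ Z) (hy : y ∈ Z) {a b : F} (ha : a ≠ 0)
    (hb : b ≠ 0) (hxy : a • x + b • y ∈ Z) : x + y ∈ Z := by
  have := h.line2 (h.smul_mem a x hx) (h.smul_mem b y hy) hxy a⁻¹ b⁻¹
  rwa [smul_smul, smul_smul, inv_mul_cancel₀ ha, inv_mul_cancel₀ hb, one_smul, one_smul] at this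

lemma Hyp.exists_ne (h : Hyp F n q Z) (b : F) : ∃ c : F, c ≠ 0 ∧ c ≠ b := by
  have h1 : ({0, b} : Finset F).card < Fintype.card F := by
    have := Finset.card_le_two (a := (0 : F)) (b := b)
    have := h.hq2
    have := h.hq
    omega
  obtain ⟨c, hc⟩ := Finset.exists_mem_notMem_of_card_lt_card (s := {0, b}) (t := Finset.univ)
    (by rwa [Finset.card_univ])
  refine ⟨c, ?_, ?_⟩ <;> rintro rfl <;> simp at hc

/-- a triangle of full lines spans a full plane -/
lemma Hyp.triangle (h : Hyp F n q Z) {x y r : V} (hx : x ∈ Z) (hy : y ∈ Z) (hr : r ∈ Z)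
    (hxy : x + y ∈ Z) (hyr : y + r ∈ Z) (hxr : x + r ∈ Z) : x + y + r ∈ Z := by
  obtain ⟨c, hc0, hc1⟩ := h.exists_ne (1 : F)
  have e1 : x + c • y ∈ Z := h.line x hx y hy hxy c
  have e2 : (1 - c) • y + (1 : F) • r ∈ Z := h.line2 hy hr hyr _ _
  have e3 : ((c - 1) / c) • x + (1 : F) • r ∈ Z := h.line2 hx hr hxr _ _
  have e4 : (x + c • y) + ((1 - c) • y + (1 : F) • r) ∈ Z := by
    refine h.line3 e1 e2 (a := (c - 1) / c) (b := 1) (div_ne_zero (sub_ne_zero.2 hc1) hc0)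
      one_ne_zero ?_
    convert e3 using 1
    rw [smul_add, smul_smul, div_mul_cancel₀ _ hc0]
    module
  convert e4 using 1
  module

/-- perp set of `p` inside `Z` -/
noncomputable def perp (Z : Finset V) (p : V) : Finset V := Z.filter (fun z => z + p ∈ Z)

lemma mem_perp {p z : V} : z ∈ perp Z p ↔ z ∈ Z ∧ z + p ∈ Z := by simp [perp]

lemma Hyp.inter_pair (h : Hyp F n q Z) {p z : V} (hp : p ∈ Z) (hz : z ∈ Z)
    (h0 : p ≠ 0) (hzp : z ∉ Submodule.span F {p}) :
    (inter Z (Submodule.span F {p} ⊔ Submodule.span F {z}) : ℤ) =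
      if z + p ∈ Z then (q : ℤ) ^ 2 else 2 * q - 1 := by
  have h1 : inter Z (Submodule.span F {p} ⊔ Submodule.span F {z}) =
      ((Finset.univ : Finset (F × F)).filter (fun ab => ab.1 • p + ab.2 • z ∈ Z)).card := by
    rw [inter]
    symm
    apply Finset.card_bij (fun (c : F × F) _ => c.1 • p + c.2 • z)
    · intro c hc
      refine Finset.mem_filter.2 ⟨(Finset.mem_filter.1 hc).2, Submodule.add_mem_sup ?_ ?_⟩
      · exact Submodule.smul_mem _ _ (Submodule.mem_span_singleton_self p)
      · exact Submodule.smul_mem _ _ (Submodule.mem_span_singleton_self z)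
    · rintro ⟨a, b⟩ _ ⟨a', b'⟩ _ hab
      simp only at hab
      have hb : b = b' := by
        by_contra hne
        apply hzp
        rw [Submodule.mem_span_singleton]
        have hne' : b - b' ≠ 0 := sub_ne_zero.2 hne
        refine ⟨(b - b')⁻¹ * (a' - a), ?_⟩
        have : (b - b') • z = (a' - a) • p := by
          rw [sub_smul, sub_smul, sub_eq_sub_iff_add_eq_add, add_comm, hab, add_comm]
        rw [mul_smul, ← this, smul_smul, inv_mul_cancel₀ hne', one_smul]
      subst hb
      have := smul_left_injective F h0 (add_right_cancel hab)
      rw [this]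
    · intro b hb
      obtain ⟨hb1, hb2⟩ := Finset.mem_filter.1 hb
      obtain ⟨y, hy, w, hw, rfl⟩ := Submodule.mem_sup.1 hb2
      obtain ⟨c, rfl⟩ := Submodule.mem_span_singleton.1 hy
      obtain ⟨d, rfl⟩ := Submodule.mem_span_singleton.1 hw
      exact ⟨(c, d), Finset.mem_filter.2 ⟨Finset.mem_univ _, hb1⟩, rfl⟩
  rw [h1]
  split_ifs with hc
  · rw [Finset.filter_true_of_mem, Finset.card_univ, Fintype.card_prod, h.hq]
    · push_cast; ring
    · intro ab _
      rw [add_comm] at hc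
      exact h.line2 hp hz hc _ _
  · have h2 : (Finset.univ.filter (fun ab : F × F => ¬ (ab.1 • p + ab.2 • z ∈ Z)))
        = (Finset.univ.erase (0 : F)) ×ˢ (Finset.univ.erase (0 : F)) := by
      ext ⟨a, b⟩
      simp only [Finset.mem_filter, Finset.mem_univ, true_and, Finset.mem_product,
        Finset.mem_erase, and_true]
      constructor
      · intro hn
        constructor
        · rintro rfl; apply hn; rw [zero_smul, zero_add]; exact h.smul_mem _ _ hz
        · rintro rfl; apply hn; rw [zero_smul, add_zero]; exact h.smul_mem _ _ hp
      · rintro ⟨ha, hb⟩ hab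
        apply hc
        rw [add_comm]
        exact h.line3 hp hz ha hb hab
    have h3 := Finset.card_filter_add_card_filter_not (s := (Finset.univ : Finset (F × F)))
      (fun ab => ab.1 • p + ab.2 • z ∈ Z)
    rw [h2, Finset.card_product, Finset.card_erase_of_mem (Finset.mem_univ _), Finset.card_univ,
      Finset.card_univ, Fintype.card_prod, h.hq] at h3
    have hq : 1 ≤ q := by have := h.hq2; omega
    zify [hq] at h3
    linear_combination h3

variable [Fintype (Dual F V)]

lemma Hyp.card_perp (h : Hyp F n q Z) {p : V} (hp : p ∈ Z) (h0 : p ≠ 0) :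
    ((perp Z p).card : ℤ) = ((q : ℤ) ^ n) ^ 2 - q * (q : ℤ) ^ n + (q : ℤ) ^ n := by
  set K : Submodule F V := Submodule.span F {p} with hK
  have h1 := h.two_val K _ _ rfl rfl
  have h2 := first_moment Z K
  have h3 := second_moment Z K
  have i1 : inter Z K = q := h.inter_span hp h0
  have a1 := h.ann_span_card h0
  rw [← hK] at a1
  have hZK : (Z.filter (fun z => z ∈ K)).card = q := i1
  have hZK' := inter_add Z K
  rw [i1] at hZK'
  rw [← Finset.sum_filter_add_sum_filter_not Z (fun z => z ∈ K)] at h3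
  have e1 : ∀ z ∈ Z.filter (fun z => z ∈ K), ((ann (K ⊔ Submodule.span F {z})).card : ℤ) *
        (((Fintype.card F : ℤ) - 1) * inter Z (K ⊔ Submodule.span F {z}) + Z.card)
        = (q * ((q : ℤ) ^ n) ^ 2) * (((q : ℤ) - 1) * q + Z.card) := by
    intro z hz
    rw [sup_of_mem K (Finset.mem_filter.1 hz).2, a1, i1, h.hq]
  have hq2 : (2 : ℤ) < q := by exact_mod_cast h.hq2
  have hq0 : (q : ℤ) ≠ 0 := by positivity
  have e2 : ∀ z ∈ Z.filter (fun z => z ∉ K), ((ann (K ⊔ Submodule.span F {z})).card : ℤ) *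
        (((Fintype.card F : ℤ) - 1) * inter Z (K ⊔ Submodule.span F {z}) + Z.card)
        = ((q : ℤ) ^ n) ^ 2 * (((q : ℤ) - 1) * (2 * q - 1) + Z.card)
          + if z + p ∈ Z then ((q : ℤ) ^ n) ^ 2 * (q - 1) ^ 3 else 0 := by
    intro z hz
    obtain ⟨hz1, hz2⟩ := Finset.mem_filter.1 hz
    have s := ann_step K hz2
    have s' : ((ann (K ⊔ Submodule.span F {z})).card : ℤ) = ((q : ℤ) ^ n) ^ 2 := by
      apply mul_right_cancel₀ hq0
      rw [h.hq] at s
      have s2 : ((ann (K ⊔ Submodule.span F {z})).card : ℤ) * q = (ann K).card := by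
        exact_mod_cast s
      rw [s2, a1]; ring
    rw [s', h.inter_pair hp hz1 h0 hz2, h.hq]
    split_ifs
    · ring
    · ring
  rw [Finset.sum_congr rfl e1, Finset.sum_congr rfl e2, Finset.sum_const, Finset.sum_add_distrib,
    Finset.sum_const, ← Finset.sum_filter, Finset.sum_const, hZK, h.hq] at h3
  simp only [nsmul_eq_mul] at h3
  have hD : ((perp Z p).card : ℤ) = q +
      (((Z.filter (fun z => z ∉ K)).filter (fun z => z + p ∈ Z)).card : ℤ) := by
    have := Finset.card_filter_add_card_filter_not (s := perp Z p) (fun z => z ∈ K)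
    have t1 : (perp Z p).filter (fun z => z ∈ K) = Z.filter (fun z => z ∈ K) := by
      ext z
      simp only [Finset.mem_filter, mem_perp]
      constructor
      · rintro ⟨⟨a, _⟩, b⟩; exact ⟨a, b⟩
      · rintro ⟨a, b⟩
        refine ⟨⟨a, ?_⟩, b⟩
        obtain ⟨c, rfl⟩ := Submodule.mem_span_singleton.1 b
        have e : c • p + p = (c + 1) • p := by module
        rw [e]
        exact h.smul_mem _ _ hp
    have t2 : (perp Z p).filter (fun z => z ∉ K) =
        (Z.filter (fun z => z ∉ K)).filter (fun z => z + p ∈ Z) := by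
      rw [perp, Finset.filter_comm]
    rw [t1, t2, hZK] at this
    exact_mod_cast this.symm
  rw [hD]
  have hN := h.card_Z
  have hQ := h.qn_ge
  rw [i1, a1, h.hq] at h2
  rw [a1] at h1
  generalize (((Z.filter (fun z => z ∉ K)).filter (fun z => z + p ∈ Z)).card : ℤ) = D at *
  generalize ((Z.filter (fun z => z ∉ K)).card : ℤ) = M at *
  generalize (Z.card : ℤ) = N at *
  generalize (q : ℤ) ^ n = Q at *
  generalize (q : ℤ) = r at *
  generalize ∑ l ∈ ann K, (sec Z l : ℤ) = S1 at *
  generalize ∑ l ∈ ann K, (sec Z l : ℤ) ^ 2 = S2 at *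
  have h2' : S1 = Q ^ 2 * ((r - 1) * r + N) := by
    apply mul_left_cancel₀ hq0; linear_combination h2
  have hM : M = N - r := by linarith
  subst hM
  subst h2'
  have hQ0 : Q ^ 2 ≠ 0 := by
    have : 0 < Q := by nlinarith
    positivity
  have hr1 : (r - 1) ^ 3 ≠ 0 := by
    have : 0 < r - 1 := by linarith
    positivity
  apply mul_left_cancel₀ (mul_ne_zero hQ0 hr1)
  subst hN
  linear_combination (r) * h1 - h3
end
end EllQ


namespace EllQ
open Module
set_option linter.unusedSectionVars false

section
open Classical
variable {F : Type*} [Field F] [Fintype F] {V : Type*} [AddCommGroup V] [Module F V] [Fintype V]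
  {n q : ℕ} {Z : Finset V}

lemma Hyp.exists_perp_sub (h : Hyp F n q Z) {U : Submodule F V} (hU : ∀ u ∈ U, u ∈ Z) {r : V}
    (hr : r ∈ Z) : ∃ W : Submodule F V, ∀ p, p ∈ W ↔ p ∈ U ∧ p + r ∈ Z := by
  refine ⟨{ carrier := {p | p ∈ U ∧ p + r ∈ Z}, add_mem' := ?_, zero_mem' := ?_, smul_mem' := ?_ },
    fun p => Iff.rfl⟩
  · rintro a b ⟨ha, ha'⟩ ⟨hb, hb'⟩
    exact ⟨U.add_mem ha hb, h.triangle (hU a ha) (hU b hb) hr (hU _ (U.add_mem ha hb)) hb' ha'⟩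
  · exact ⟨U.zero_mem, by rwa [zero_add]⟩
  · rintro c x ⟨hx, hx'⟩
    refine ⟨U.smul_mem c hx, ?_⟩
    have := h.line2 (hU x hx) hr hx' c 1
    rwa [one_smul] at this

/-- number of vectors of `U` -/
noncomputable def fin (U : Submodule F V) : Finset V := Finset.univ.filter (fun v => v ∈ U)

lemma mem_fin {U : Submodule F V} {v : V} : v ∈ fin U ↔ v ∈ U := by simp [fin]

lemma card_fin (U : Submodule F V) : (fin U).card = Fintype.card F ^ finrank F U := by
  rw [fin, ← Fintype.card_subtype, ← Nat.card_eq_fintype_card]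
  exact (Module.natCard_eq_pow_finrank (K := F) (V := U)).trans (by rw [Nat.card_eq_fintype_card])

/-- number of elements of `Z` in the coset `v + U` -/
noncomputable def cos (Z : Finset V) (U : Submodule F V) (v : V) : ℕ :=
  ((fin U).filter (fun p => p + v ∈ Z)).card

lemma cos_add (U : Submodule F V) (v p : V) (hp : p ∈ U) : cos Z U (p + v) = cos Z U v := by
  rw [cos, cos]
  apply Finset.card_bij (fun x _ => x + p)
  · intro a ha
    obtain ⟨h1, h2⟩ := Finset.mem_filter.1 ha
    exact Finset.mem_filter.2 ⟨mem_fin.2 (U.add_mem (mem_fin.1 h1) hp), by rwa [add_assoc]⟩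
  · intro a _ b _ hab; exact add_right_cancel hab
  · intro b hb
    obtain ⟨h1, h2⟩ := Finset.mem_filter.1 hb
    refine ⟨b - p, Finset.mem_filter.2 ⟨mem_fin.2 (U.sub_mem (mem_fin.1 h1) hp), ?_⟩, by abel⟩
    convert h2 using 1; abel

/-- summation by cosets -/
lemma sum_cos (U : Submodule F V) (g : V → ℤ) (hg : ∀ v p, p ∈ U → g (p + v) = g v) :
    ∑ v ∈ Finset.univ.filter (fun v => v ∉ U), (cos Z U v : ℤ) * g v
      = (fin U).card * ∑ z ∈ Z.filter (fun z => z ∉ U), g z := by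
  have h1 : ∀ v ∈ Finset.univ.filter (fun v => v ∉ U), (cos Z U v : ℤ) * g v =
      ∑ p ∈ fin U, if p + v ∈ Z then g v else 0 := by
    intro v _
    rw [← Finset.sum_filter, Finset.sum_const, cos, nsmul_eq_mul]
  rw [Finset.sum_congr rfl h1, Finset.sum_comm, ← nsmul_eq_mul, ← Finset.sum_const]
  refine Finset.sum_congr rfl fun p hp => ?_
  rw [← Finset.sum_filter]
  have hp := mem_fin.1 hp
  apply Finset.sum_bij (fun v _ => p + v)
  · intro v hv
    simp only [Finset.mem_filter, Finset.mem_univ, true_and] at hv ⊢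
    exact ⟨hv.2, fun hh => hv.1 ((U.add_mem_iff_right hp).1 hh)⟩
  · intro a _ b _ hab; exact add_left_cancel hab
  · intro b hb
    simp only [Finset.mem_filter, Finset.mem_univ, true_and] at hb
    refine ⟨b - p, ?_, by abel⟩
    simp only [Finset.mem_filter, Finset.mem_univ, true_and]
    exact ⟨fun hh => hb.2 (by simpa using U.add_mem hh hp), by simpa using hb.1⟩
  · intro v _
    rw [hg v p hp]

variable [Fintype (Dual F V)]

lemma Hyp.sum_cos_Z (h : Hyp F n q Z) {U : Submodule F V} (hU : ∀ u ∈ U, u ∈ Z) :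
    ∑ z ∈ Z.filter (fun z => z ∉ U), (cos Z U z : ℤ) =
      ((Z.card : ℤ) - (fin U).card) + ((fin U).card - 1) *
      ((((q : ℤ) ^ n) ^ 2 - q * (q : ℤ) ^ n + (q : ℤ) ^ n) - (fin U).card) := by
  have h1 : ∀ z ∈ Z.filter (fun z => z ∉ U), (cos Z U z : ℤ) =
      ∑ p ∈ fin U, if p + z ∈ Z then 1 else 0 := by
    intro v _
    rw [← Finset.sum_filter, Finset.sum_const, cos, nsmul_eq_mul, mul_one]
  rw [Finset.sum_congr rfl h1, Finset.sum_comm]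
  have h2 : ∀ p ∈ fin U, (∑ z ∈ Z.filter (fun z => z ∉ U), if p + z ∈ Z then (1 : ℤ) else 0)
      = (perp Z p).card - (fin U).card := by
    intro p hp
    rw [← Finset.sum_filter, Finset.sum_const, nsmul_eq_mul, mul_one]
    have := Finset.card_filter_add_card_filter_not (s := perp Z p) (fun z => z ∈ U)
    have e1 : (perp Z p).filter (fun z => z ∈ U) = fin U := by
      ext z
      simp only [Finset.mem_filter, mem_perp, mem_fin]
      exact ⟨fun h => h.2, fun hz => ⟨⟨hU z hz, hU _ (U.add_mem hz (mem_fin.1 hp))⟩, hz⟩⟩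
    have e2 : (perp Z p).filter (fun z => z ∉ U) =
        (Z.filter (fun z => z ∉ U)).filter (fun z => p + z ∈ Z) := by
      rw [perp, Finset.filter_comm]
      simp only [add_comm]
    rw [e1, e2] at this
    zify at this
    linarith
  rw [Finset.sum_congr rfl h2, ← Finset.add_sum_erase _ _ (mem_fin.2 U.zero_mem)]
  have h3 : ∀ p ∈ (fin U).erase 0, ((perp Z p).card : ℤ) - (fin U).card =
      (((q : ℤ) ^ n) ^ 2 - q * (q : ℤ) ^ n + (q : ℤ) ^ n) - (fin U).card := by
    intro p hp
    rw [h.card_perp (hU p (mem_fin.1 (Finset.mem_of_mem_erase hp))) (Finset.ne_of_mem_erase hp)]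
  have h4 : perp Z 0 = Z := by
    rw [perp, Finset.filter_true_of_mem]
    intro x hx; rwa [add_zero]
  have hN1 : 1 ≤ (fin U).card := Finset.card_pos.2 ⟨0, mem_fin.2 U.zero_mem⟩
  rw [Finset.sum_congr rfl h3, Finset.sum_const, h4, nsmul_eq_mul,
    Finset.card_erase_of_mem (mem_fin.2 U.zero_mem)]
  push_cast [Nat.cast_sub hN1]
  ring

set_option maxHeartbeats 1000000 in
/-- one-or-all for a maximal subspace -/
lemma Hyp.maximal (h : Hyp F n q Z) {U : Submodule F V}
    (hU : Maximal (fun U : Submodule F V => ∀ u ∈ U, u ∈ Z) U) {r : V} (hr : r ∈ Z) (hrU : r ∉ U) :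
    cos Z U r * q = (fin U).card ∧ finrank F U = n := by
  have hUZ := hU.prop
  have hmax : ∀ r ∈ Z, r ∉ U → ∃ j : ℕ, cos Z U r = q ^ j ∧ j < finrank F U := by
    intro r hr hrU
    obtain ⟨W, hW⟩ := h.exists_perp_sub hUZ hr
    refine ⟨finrank F W, ?_, ?_⟩
    · rw [← h.hq, ← card_fin W, cos]
      congr 1
      ext p
      rw [Finset.mem_filter, mem_fin, mem_fin, hW]
    · apply Submodule.finrank_lt_finrank_of_lt
      refine lt_of_le_of_ne (fun p hp => ((hW p).1 hp).1) ?_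
      rintro rfl
      apply hrU
      have hle : ∀ u ∈ W ⊔ Submodule.span F {r}, u ∈ Z := by
        intro u hu
        obtain ⟨a, ha, b, hb, rfl⟩ := Submodule.mem_sup.1 hu
        obtain ⟨c, rfl⟩ := Submodule.mem_span_singleton.1 hb
        exact h.line a (hUZ a ha) r hr ((hW a).1 ha).2 c
      have := hU.le_of_ge hle le_sup_left
      exact this (Submodule.mem_sup_right (Submodule.mem_span_singleton_self r))
  obtain ⟨j0, hj0, hj0'⟩ := hmax r hr hrU
  obtain ⟨k, hk⟩ : ∃ k, finrank F U = k + 1 := ⟨finrank F U - 1, by omega⟩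
  have ht : ((fin U).card : ℤ) = q * (q : ℤ) ^ k := by
    rw [card_fin, h.hq, hk]; push_cast; ring
  have hq2 : (2 : ℤ) < q := by exact_mod_cast h.hq2
  have hq1 : (1 : ℤ) ≤ q := by linarith
  have hM : (0 : ℤ) < (q : ℤ) ^ k := by positivity
  have hQ0 : (0 : ℤ) < (q : ℤ) ^ n := by positivity
  have hval : ∀ v, v ∉ U → (cos Z U v : ℤ) = (q : ℤ) ^ k ∨ q * (cos Z U v : ℤ) ≤ (q : ℤ) ^ k := by
    intro v hv
    by_cases h0 : cos Z U v = 0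
    · right; rw [h0]; simp
    · obtain ⟨p, hp⟩ := Finset.card_pos.1 (Nat.pos_of_ne_zero h0)
      obtain ⟨hp1, hp2⟩ := Finset.mem_filter.1 hp
      have hp1 := mem_fin.1 hp1
      obtain ⟨j, hj, hj'⟩ := hmax _ hp2 (fun hh => hv ((U.add_mem_iff_right hp1).1 hh))
      rw [cos_add U v p hp1] at hj
      rw [hj]
      push_cast
      rcases Nat.lt_or_ge j k with hlt | hge
      · right
        rw [← pow_succ']
        exact pow_le_pow_right₀ hq1 hlt
      · left; congr 1; omega
  set T := Finset.univ.filter (fun v : V => v ∉ U) with hT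
  have hTc : (T.card : ℤ) = q ^ 2 * ((q : ℤ) ^ n) ^ 2 - q * (q : ℤ) ^ k := by
    have := Finset.card_filter_add_card_filter_not (s := (Finset.univ : Finset V)) (fun v => v ∈ U)
    rw [Finset.card_univ, Module.card_eq_pow_finrank (K := F) (V := V), h.dim, h.hq] at this
    have e : ((fin U).card : ℤ) + T.card = (q : ℤ) ^ (2 * n + 2) := by exact_mod_cast this
    rw [← ht]
    rw [eq_sub_iff_add_eq, add_comm, e]; ring
  have hZU : ((Z.filter (fun z => z ∉ U)).card : ℤ) = Z.card - q * (q : ℤ) ^ k := by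
    have := inter_add Z U
    have e : inter Z U = (fin U).card := by
      rw [inter]; congr 1; ext z
      simp only [Finset.mem_filter, mem_fin]
      exact ⟨fun h => h.2, fun hz => ⟨hUZ z hz, hz⟩⟩
    rw [e, ht] at this
    linarith
  have s1 := sum_cos (Z := Z) U (fun _ => 1) (fun _ _ _ => rfl)
  have s2 := sum_cos (Z := Z) U (fun v => (cos Z U v : ℤ)) (fun v p hp => by
    simp only [cos_add U v p hp])
  simp only [mul_one, Finset.sum_const, nsmul_eq_mul] at s1
  rw [hZU, ht] at s1
  rw [h.sum_cos_Z hUZ, ht] at s2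
  rw [h.card_Z] at s1 s2
  have d1 : ∑ v ∈ T, ((q : ℤ) ^ k - cos Z U v) =
      q * (q : ℤ) ^ k * ((q - 1) * ((q : ℤ) ^ n + (q : ℤ) ^ k)) := by
    rw [Finset.sum_sub_distrib, s1, Finset.sum_const, nsmul_eq_mul, hTc]
    ring
  have d2 : ∑ v ∈ T, (cos Z U v : ℤ) * ((q : ℤ) ^ k - cos Z U v) =
      q * (q : ℤ) ^ k * ((q - 1) * ((q : ℤ) ^ n + (q : ℤ) ^ k)) * (q * (q : ℤ) ^ k - (q : ℤ) ^ n) := by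
    simp only [mul_sub]
    rw [Finset.sum_sub_distrib, s2, ← Finset.sum_mul, s1]
    ring
  have hnn : ∀ v ∈ T, 0 ≤ (cos Z U v : ℤ) * ((q : ℤ) ^ k - cos Z U v) := by
    intro v hv
    have hc : (0 : ℤ) ≤ cos Z U v := by positivity
    rcases hval v (Finset.mem_filter.1 hv).2 with e | e
    · rw [e]; simp
    · apply mul_nonneg hc; nlinarith
  have hle : q * ∑ v ∈ T, (cos Z U v : ℤ) * ((q : ℤ) ^ k - cos Z U v)
      ≤ (q : ℤ) ^ k * ∑ v ∈ T, ((q : ℤ) ^ k - cos Z U v) := by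
    rw [Finset.mul_sum, Finset.mul_sum]
    apply Finset.sum_le_sum
    intro v hv
    have hc : (0 : ℤ) ≤ cos Z U v := by positivity
    rcases hval v (Finset.mem_filter.1 hv).2 with e | e
    · rw [e]; simp
    · have : (0 : ℤ) ≤ (q : ℤ) ^ k - cos Z U v := by nlinarith
      nlinarith
  have hge := Finset.sum_nonneg hnn
  rw [d1, d2] at hle
  rw [d2] at hge
  have hC : 0 < q * (q : ℤ) ^ k * ((q - 1) * ((q : ℤ) ^ n + (q : ℤ) ^ k)) := by
    have : (0 : ℤ) < q - 1 := by linarith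
    positivity
  have c1 : 0 ≤ q * (q : ℤ) ^ k - (q : ℤ) ^ n := nonneg_of_mul_nonneg_right hge hC
  have c2 : q * (q * (q : ℤ) ^ k - (q : ℤ) ^ n) ≤ (q : ℤ) ^ k := by
    refine le_of_mul_le_mul_left ?_ hC
    linarith [hle]
  have hkn : k + 1 = n := by
    rcases lt_trichotomy (k + 1) n with hlt | heq | hgt
    · exfalso
      have : (q : ℤ) ^ (k + 1) < (q : ℤ) ^ n := pow_lt_pow_right₀ (by linarith) hlt
      rw [pow_succ'] at this
      linarith
    · exact heq
    · exfalso
      have : (q : ℤ) ^ n ≤ (q : ℤ) ^ k := pow_le_pow_right₀ hq1 (by omega)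
      clear hle hge d1 d2 s1 s2 hZU hTc
      generalize (q : ℤ) ^ n = Q at *
      generalize (q : ℤ) ^ k = M at *
      have e1 : 0 ≤ (q : ℤ) * (M - Q) := mul_nonneg (by linarith) (by linarith)
      have e2 : 0 < ((q : ℤ) * (q - 1) - 1) * M := mul_pos (by nlinarith) hM
      linarith
  have hz : ∑ v ∈ T, (cos Z U v : ℤ) * ((q : ℤ) ^ k - cos Z U v) = 0 := by
    rw [d2, ← hkn]; ring
  have hr0 := (Finset.sum_eq_zero_iff_of_nonneg hnn).1 hz r (Finset.mem_filter.2 ⟨Finset.mem_univ _, hrU⟩)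
  have hcr : (cos Z U r : ℤ) ≠ 0 := by
    rw [hj0]
    have : (0 : ℤ) < (q : ℤ) ^ j0 := by positivity
    push_cast; exact this.ne'
  have hfin := (mul_eq_zero.1 hr0).resolve_left hcr
  refine ⟨?_, hk.trans hkn⟩
  zify
  rw [ht]
  linear_combination (-(q : ℤ)) * hfin

/-- the Buekenhout–Shult type property -/
lemma Hyp.one_or_all (h : Hyp F n q Z) {x y r : V} (hx : x ∈ Z) (hy : y ∈ Z) (hr : r ∈ Z)
    (hxy : x + y ∈ Z) : y + r ∈ Z ∨ ∃ c : F, x + c • y + r ∈ Z := by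
  have h0 : ∀ u ∈ Submodule.span F {x, y}, u ∈ Z := by
    intro u hu
    obtain ⟨a, b, rfl⟩ := Submodule.mem_span_pair.1 hu
    exact h.line2 hx hy hxy a b
  obtain ⟨U, hU1, hU2⟩ := (Set.toFinite {U : Submodule F V | ∀ u ∈ U, u ∈ Z}).exists_le_maximal h0
  have hxU : x ∈ U := hU1 (Submodule.subset_span (by simp))
  have hyU : y ∈ U := hU1 (Submodule.subset_span (by simp))
  have hUZ : ∀ u ∈ U, u ∈ Z := hU2.prop
  by_cases hrU : r ∈ U
  · left; exact hUZ _ (U.add_mem hyU hrU)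
  · have hc := (h.maximal hU2 hr hrU).1
    obtain ⟨W, hW⟩ := h.exists_perp_sub hUZ hr
    have hcW : cos Z U r = q ^ finrank F W := by
      rw [← h.hq, ← card_fin W, cos]
      congr 1
      ext p
      rw [Finset.mem_filter, mem_fin, mem_fin, hW]
    have hWU : W ≤ U := fun p hp => ((hW p).1 hp).1
    have hq2 := h.hq2
    rw [hcW, card_fin, h.hq, ← pow_succ] at hc
    have hd := Nat.pow_right_injective (by omega : 2 ≤ q) hc
    by_cases hyr : y + r ∈ Z
    · left; exact hyr
    · right
      have hyW : y ∉ W := fun hh => hyr ((hW y).1 hh).2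
      have e : W ⊔ Submodule.span F {y} = U := by
        apply Submodule.eq_of_le_of_finrank_eq
        · exact sup_le hWU ((Submodule.span_singleton_le_iff_mem _ _).2 hyU)
        · rw [finrank_sup_singleton W hyW]; exact hd
      rw [← e] at hxU
      obtain ⟨a, ha, b, hb, hab⟩ := Submodule.mem_sup.1 hxU
      obtain ⟨c, rfl⟩ := Submodule.mem_span_singleton.1 hb
      refine ⟨-c, ?_⟩
      have : x + -c • y + r = a + r := by rw [← hab]; module
      rw [this]
      exact ((hW a).1 ha).2
end
end EllQ


namespace EllQ
open Module
set_option linter.unusedSectionVars false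

section
open Classical
variable {F : Type*} [Field F] [Fintype F] {V : Type*} [AddCommGroup V] [Module F V] [Fintype V]
  {n q : ℕ} {Z : Finset V}

/-- number of points of `Z` in the kernel of `l` perpendicular to `p` -/
noncomputable def dh (Z : Finset V) (l : Dual F V) (p : V) : ℕ :=
  (Z.filter (fun z => l z = 0 ∧ z + p ∈ Z)).card

/-- number of points of `Z` in the kernel of `l` perpendicular to `p` and `r` -/
noncomputable def eh (Z : Finset V) (l : Dual F V) (p r : V) : ℕ :=
  (Z.filter (fun z => l z = 0 ∧ z + p ∈ Z ∧ z + r ∈ Z)).card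

lemma eh_comm (l : Dual F V) (p r : V) : eh Z l p r = eh Z l r p := by
  rw [eh, eh]; congr 1; ext z; simp only [Finset.mem_filter]; tauto

lemma Hyp.neg_mem (h : Hyp F n q Z) {z : V} (hz : z ∈ Z) : -z ∈ Z := by
  have := h.smul_mem (-1) z hz
  rwa [neg_one_smul] at this

/-- difference version of the triangle lemma -/
lemma Hyp.tri_sub (h : Hyp F n q Z) {x y r : V} (hx : x ∈ Z) (hy : y ∈ Z) (hr : r ∈ Z)
    (hxy : x + y ∈ Z) (hyr : y + r ∈ Z) (hxr : x + r ∈ Z) (a b : F) : a • x + b • y + r ∈ Z := by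
  refine h.triangle (h.smul_mem _ _ hx) (h.smul_mem _ _ hy) hr (h.line2 hx hy hxy _ _) ?_ ?_
  · have := h.line2 hy hr hyr b 1; rwa [one_smul] at this
  · have := h.line2 hx hr hxr a 1; rwa [one_smul] at this

lemma Hyp.add_self_mem (h : Hyp F n q Z) {z : V} (hz : z ∈ Z) (c : F) : z + c • z ∈ Z := by
  have e : z + c • z = (1 + c) • z := by module
  rw [e]; exact h.smul_mem _ _ hz

lemma Hyp.perp_comb (h : Hyp F n q Z) {z p : V} (hz : z ∈ Z) (hp : p ∈ Z) (hzp : z + p ∈ Z)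
    (c : F) : z + c • p + p ∈ Z := by
  have e : z + c • p + p = z + (c + 1) • p := by module
  rw [e]; exact h.line _ hz _ hp hzp _

variable [Fintype (Dual F V)]

lemma Hyp.dh_eq (h : Hyp F n q Z) (l : Dual F V) {p r : V} (hp : p ∈ Z) (hlp : l p = 0)
    (hr : r ∈ Z) (hpr : p + r ∉ Z) : dh Z l p = eh Z l p r * q := by
  rw [dh, eh, ← h.hq, ← Finset.card_univ, ← Finset.card_product]
  symm
  apply Finset.card_bij (fun (x : V × F) _ => x.1 + x.2 • p)
  · rintro ⟨e, c⟩ he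
    simp only [Finset.mem_product, Finset.mem_filter, Finset.mem_univ, and_true] at he ⊢
    obtain ⟨h1, h2, h3, h4⟩ := he
    refine ⟨h.line _ h1 _ hp h3 _, by simp [h2, hlp], h.perp_comb h1 hp h3 c⟩
  · rintro ⟨e, c⟩ he ⟨e', c'⟩ he' heq
    simp only [Finset.mem_product, Finset.mem_filter, Finset.mem_univ, and_true] at he he' heq
    obtain ⟨h1, h2, h3, h4⟩ := he
    obtain ⟨h1', h2', h3', h4'⟩ := he'
    have hc : c = c' := by
      by_contra hne
      apply hpr
      have hd : c' - c ≠ 0 := sub_ne_zero.2 (Ne.symm hne)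
      have e1 : e + (-1 : F) • e' = (c' - c) • p := by
        have : e = e' + c' • p - c • p := by rw [← heq]; abel
        rw [this]; module
      have e2 : e + e' ∈ Z := by
        apply h.line3 h1 h1' one_ne_zero (b := -1) (by simp)
        rw [one_smul, e1]; exact h.smul_mem _ _ hp
      have e3 := h.tri_sub h1 h1' hr e2 h4' h4 1 (-1)
      rw [one_smul, e1] at e3
      apply h.line3 hp hr hd one_ne_zero
      rwa [one_smul]
    subst hc
    rw [add_right_cancel heq]
  · intro z hz
    simp only [Finset.mem_filter] at hz
    obtain ⟨h1, h2, h3⟩ := hz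
    obtain ⟨c, hc⟩ := (h.one_or_all h1 hp hr h3).resolve_left hpr
    refine ⟨(z + c • p, -c), ?_, by module⟩
    simp only [Finset.mem_product, Finset.mem_filter, Finset.mem_univ, and_true]
    exact ⟨h.line _ h1 _ hp h3 _, by simp [h2, hlp], h.perp_comb h1 hp h3 c, hc⟩

lemma Hyp.dh_eq' (h : Hyp F n q Z) (l : Dual F V) {p r : V} (hp : p ∈ Z) (hlp : l p = 0)
    (hr : r ∈ Z) (hlr : l r = 0) (hpr : p + r ∉ Z) : dh Z l p = dh Z l r := by
  rw [h.dh_eq l hp hlp hr hpr, h.dh_eq l hr hlr hp (by rwa [add_comm]), eh_comm]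

lemma Hyp.dh_const (h : Hyp F n q Z) (l : Dual F V)
    (hrad : ∀ p ∈ Z, l p = 0 → p ≠ 0 → ∃ r ∈ Z, l r = 0 ∧ p + r ∉ Z)
    {p p' : V} (hp : p ∈ Z) (hlp : l p = 0) (h0 : p ≠ 0)
    (hp' : p' ∈ Z) (hlp' : l p' = 0) (h0' : p' ≠ 0) : dh Z l p = dh Z l p' := by
  obtain ⟨r, hr, hlr, hpr⟩ := hrad p hp hlp h0
  obtain ⟨r', hr', hlr', hpr'⟩ := hrad p' hp' hlp' h0'
  have d1 := h.dh_eq' l hp hlp hr hlr hpr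
  have d2 := h.dh_eq' l hp' hlp' hr' hlr' hpr'
  by_cases c1 : p' + r ∈ Z
  swap
  · exact d1.trans (h.dh_eq' l hp' hlp' hr hlr c1).symm
  by_cases c2 : p + r' ∈ Z
  swap
  · exact (h.dh_eq' l hp hlp hr' hlr' c2).trans d2.symm
  by_cases c3 : r + r' ∈ Z
  swap
  · exact (d1.trans (h.dh_eq' l hr hlr hr' hlr' c3)).trans d2.symm
  have hly : l (r + r') = 0 := by simp [hlr, hlr']
  have y1 : p + (r + r') ∉ Z := by
    intro hh
    apply hpr
    have e : r + r' + r' ∈ Z := by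
      have := h.perp_comb hr hr' c3 1
      rwa [one_smul] at this
    have := h.tri_sub c3 hr' hp e (by rwa [add_comm]) (by rwa [add_comm]) 1 (-1)
    convert this using 1; module
  have y2 : p' + (r + r') ∉ Z := by
    intro hh
    apply hpr'
    have e : r + r' + r ∈ Z := by
      rw [add_comm] at c3
      have := h.perp_comb hr' hr c3 1
      rw [one_smul] at this
      convert this using 1; abel
    have := h.tri_sub c3 hr hp' e (by rwa [add_comm]) (by rwa [add_comm]) 1 (-1)
    convert this using 1; module
  exact (h.dh_eq' l hp hlp c3 hly y1).trans (h.dh_eq' l hp' hlp' c3 hly y2).symm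

lemma Hyp.dh_off (h : Hyp F n q Z) (l : Dual F V) {r : V} (hr : r ∈ Z) (hlr : l r ≠ 0) :
    dh Z l r * q = (perp Z r).card := by
  rw [dh, ← h.hq, ← Finset.card_univ, ← Finset.card_product]
  apply Finset.card_bij (fun (x : V × F) _ => x.1 + x.2 • r)
  · rintro ⟨e, c⟩ he
    simp only [Finset.mem_product, Finset.mem_filter, Finset.mem_univ, and_true, mem_perp] at he ⊢
    obtain ⟨h1, h2, h3⟩ := he
    exact ⟨h.line _ h1 _ hr h3 _, h.perp_comb h1 hr h3 c⟩
  · rintro ⟨e, c⟩ he ⟨e', c'⟩ he' heq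
    simp only [Finset.mem_product, Finset.mem_filter, Finset.mem_univ, and_true] at he he' heq
    have := congrArg l heq
    simp only [map_add, map_smul, he.2.1, he'.2.1, zero_add, smul_eq_mul] at this
    have hc := mul_right_cancel₀ hlr this
    subst hc
    rw [add_right_cancel heq]
  · intro z hz
    rw [mem_perp] at hz
    refine ⟨(z + (-(l z / l r)) • r, l z / l r), ?_, by module⟩
    simp only [Finset.mem_product, Finset.mem_filter, Finset.mem_univ, and_true]
    exact ⟨h.line _ hz.1 _ hr hz.2 _, by simp [hlr], h.perp_comb hz.1 hr hz.2 _⟩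

lemma Hyp.double (h : Hyp F n q Z) (l : Dual F V) :
    ∑ r ∈ Z.filter (fun z => l z ≠ 0), (dh Z l r : ℤ) =
      ∑ p ∈ Z.filter (fun z => l z = 0), (((perp Z p).card : ℤ) - dh Z l p) := by
  have h1 : ∀ r ∈ Z.filter (fun z => l z ≠ 0), (dh Z l r : ℤ) =
      ∑ p ∈ Z.filter (fun z => l z = 0), if p + r ∈ Z then 1 else 0 := by
    intro r _
    rw [← Finset.sum_filter, Finset.sum_const, nsmul_eq_mul, mul_one, dh, Finset.filter_filter]
  rw [Finset.sum_congr rfl h1, Finset.sum_comm]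
  refine Finset.sum_congr rfl fun p hp => ?_
  rw [← Finset.sum_filter, Finset.sum_const, nsmul_eq_mul, mul_one]
  have := Finset.card_filter_add_card_filter_not (s := perp Z p) (fun z => l z = 0)
  have e1 : (perp Z p).filter (fun z => l z = 0) = Z.filter (fun z => l z = 0 ∧ z + p ∈ Z) := by
    ext z; simp only [Finset.mem_filter, mem_perp]; tauto
  have e2 : (perp Z p).filter (fun z => ¬ l z = 0) =
      (Z.filter (fun z => l z ≠ 0)).filter (fun z => p + z ∈ Z) := by
    ext z; simp only [Finset.mem_filter, mem_perp, add_comm]; tauto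
  rw [e1, e2] at this
  rw [← this, dh]
  push_cast; ring

lemma arith5 (q P e' : ℤ) (hq : 2 < q) (hP : q ≤ P)
    (hh : q * ((q - 1) * (q * P) ^ 2 + ((q * P) ^ 2 - q * (q * P) + q * P - 1) * (q * e')) =
      (q - 1) * (q * P) ^ 2 * ((q * P) ^ 2 - q * (q * P) + q * P)) : False := by
  have hq0 : q ^ 2 ≠ 0 := by positivity
  have h1 : ((q - 1) * P ^ 2 - e') * ((q * P) ^ 2 - q * (q * P) + q * P - 1) = (q - 1) ^ 2 * P ^ 2 := by
    apply mul_left_cancel₀ hq0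
    linear_combination (-1) * hh
  have hpos : 0 < (q - 1) ^ 2 * P ^ 2 := by
    have : 0 < P := by linarith
    have : 0 < q - 1 := by linarith
    positivity
  have hlt : (q - 1) ^ 2 * P ^ 2 < (q * P) ^ 2 - q * (q * P) + q * P - 1 := by
    have e1 : 0 ≤ (P - q) * P := mul_nonneg (by linarith) (by linarith)
    have e2 : 0 ≤ (2 * q - 1) * ((P - q) * P) := mul_nonneg (by linarith) e1
    have e3 : 0 < q * q * P - 1 := by nlinarith
    nlinarith
  have := Int.le_of_dvd hpos (Dvd.intro_left _ h1)
  linarith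

lemma Hyp.exists_rad (h : Hyp F n q Z) (l : Dual F V)
    (hs : (sec Z l : ℤ) = ((q : ℤ) ^ n) ^ 2 - q * (q : ℤ) ^ n + (q : ℤ) ^ n) :
    ∃ p ∈ Z, p ≠ 0 ∧ l p = 0 ∧ ∀ z ∈ Z, l z = 0 → p + z ∈ Z := by
  by_contra hcon
  have hrad : ∀ p ∈ Z, l p = 0 → p ≠ 0 → ∃ r ∈ Z, l r = 0 ∧ p + r ∉ Z := by
    intro p hp hlp h0
    by_contra hc
    push Not at hc
    exact hcon ⟨p, hp, h0, hlp, hc⟩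
  obtain ⟨k, rfl⟩ : ∃ k, n = k + 1 := ⟨n - 1, by have := h.hn; omega⟩
  have hk : 1 ≤ k := by have := h.hn; omega
  have hq2 : (2 : ℤ) < q := by exact_mod_cast h.hq2
  have hP : (q : ℤ) ≤ (q : ℤ) ^ k := by
    calc (q : ℤ) = (q : ℤ) ^ 1 := (pow_one _).symm
      _ ≤ _ := pow_le_pow_right₀ (by linarith) hk
  have hB1 : 1 < sec Z l := by
    zify
    rw [hs, pow_succ' (q : ℤ) k]
    generalize (q : ℤ) ^ k = P at *
    have e0 : 0 < P := by linarith
    have e1 : 0 ≤ (q : ℤ) * q * P * (P - 1) := mul_nonneg (by positivity) (by linarith)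
    have e2 : 1 < (q : ℤ) * P := by nlinarith
    nlinarith
  have h0m : (0 : V) ∈ Z.filter (fun z => l z = 0) := by simp [h.zero_mem]
  obtain ⟨p0, hp0, hp0'⟩ := Finset.exists_mem_ne hB1 (0 : V)
  obtain ⟨hp0Z, hlp0⟩ := Finset.mem_filter.1 hp0
  obtain ⟨r0, hr0, _, hpr0⟩ := hrad p0 hp0Z hlp0 hp0'
  have hd0 := h.dh_eq l hp0Z hlp0 hr0 hpr0
  have hD := h.double l
  have hN := h.card_Z
  have hc : (sec Z l : ℤ) + (Z.filter (fun z => l z ≠ 0)).card = Z.card := by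
    rw [sec]; exact_mod_cast Finset.card_filter_add_card_filter_not (s := Z) (fun z => l z = 0)
  have hL : (∑ r ∈ Z.filter (fun z => l z ≠ 0), (dh Z l r : ℤ)) * q =
      (Z.filter (fun z => l z ≠ 0)).card * (sec Z l : ℤ) := by
    rw [Finset.sum_mul, ← nsmul_eq_mul, ← Finset.sum_const]
    refine Finset.sum_congr rfl fun r hr => ?_
    obtain ⟨hr1, hr2⟩ := Finset.mem_filter.1 hr
    have := h.dh_off l hr1 hr2
    zify at this
    rw [this, hs]
    exact h.card_perp hr1 (by rintro rfl; simp at hr2)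
  rw [← Finset.add_sum_erase _ _ h0m] at hD
  have hsum : ∀ p ∈ (Z.filter (fun z => l z = 0)).erase 0,
      (((perp Z p).card : ℤ) - dh Z l p) = sec Z l - eh Z l p0 r0 * q := by
    intro p hp
    obtain ⟨hp1, hp2⟩ := Finset.mem_erase.1 hp
    obtain ⟨hp3, hp4⟩ := Finset.mem_filter.1 hp2
    rw [h.card_perp hp3 hp1, h.dh_const l hrad hp3 hp4 hp1 hp0Z hlp0 hp0', hd0, hs]
    push_cast; ring
  have hz1 : (perp Z 0).card = Z.card := by simp [perp]
  have hz2 : dh Z l 0 = sec Z l := by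
    rw [dh, sec]; congr 1; ext z; simp only [Finset.mem_filter, add_zero]; tauto
  rw [Finset.sum_congr rfl hsum, Finset.sum_const, Finset.card_erase_of_mem h0m, hz1, hz2,
    nsmul_eq_mul] at hD
  change _ = _ + (((sec Z l - 1 : ℕ) : ℤ)) * _ at hD
  rw [Nat.cast_sub hB1.le] at hD
  rw [hD] at hL
  apply arith5 q ((q : ℤ) ^ k) ((q : ℤ) ^ k * q * (q ^ k) - q * q ^ k + q ^ k - eh Z l p0 r0) hq2 hP
  have hc' : ((Z.filter (fun z => l z ≠ 0)).card : ℤ) = Z.card - sec Z l := by linarith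
  rw [hc', hN, hs] at hL
  push_cast at hL
  rw [pow_succ' (q : ℤ) k] at hL
  generalize (q : ℤ) ^ k = P at *
  generalize (eh Z l p0 r0 : ℤ) = E at *
  linear_combination hL

lemma Hyp.small_rad (h : Hyp F n q Z) (l : Dual F V)
    (hs : (sec Z l : ℤ) = ((q : ℤ) ^ n) ^ 2 - q * (q : ℤ) ^ n + (q : ℤ) ^ n) :
    ∃ p ∈ Z, p ≠ 0 ∧ ∀ z ∈ Z, l z = 0 ↔ z + p ∈ Z := by
  obtain ⟨p, hp, h0, hlp, hall⟩ := h.exists_rad l hs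
  refine ⟨p, hp, h0, ?_⟩
  have hsub : Z.filter (fun z => l z = 0) ⊆ perp Z p := by
    intro z hz
    obtain ⟨hz1, hz2⟩ := Finset.mem_filter.1 hz
    rw [mem_perp, add_comm]
    exact ⟨hz1, hall z hz1 hz2⟩
  have heq := Finset.eq_of_subset_of_card_le hsub (by
    have h1 := h.card_perp hp h0
    rw [← hs] at h1
    exact (Nat.cast_injective h1).le)
  intro z hz
  have := Finset.ext_iff.1 heq z
  rw [Finset.mem_filter, mem_perp] at this
  tauto
end
end EllQ


namespace EllQ
open Module
set_option linter.unusedSectionVars false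

section
open Classical
variable {F : Type*} [Field F] [Fintype F] {V : Type*} [AddCommGroup V] [Module F V] [Fintype V]
  {n q : ℕ} {Z : Finset V}

/-- the kernel of `l` is the tangent hyperplane at `p` -/
def Tan (Z : Finset V) (l : Dual F V) (p : V) : Prop := ∀ z ∈ Z, l z = 0 ↔ z + p ∈ Z

lemma Hyp.tan_self (h : Hyp F n q Z) {l : Dual F V} {p : V} (hp : p ∈ Z) (ht : Tan Z l p) :
    l p = 0 := by
  rw [ht p hp]
  have := h.add_self_mem hp 1
  rwa [one_smul] at this

lemma Hyp.tan_smul (h : Hyp F n q Z) {l : Dual F V} {p : V} (hp : p ∈ Z) (ht : Tan Z l p) {c : F}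
    (hc : c ≠ 0) : Tan Z l (c • p) := by
  intro z hz
  rw [ht z hz]
  constructor
  · intro hh; exact h.line _ hz _ hp hh c
  · intro hh
    apply h.line3 hz hp one_ne_zero hc
    rwa [one_smul]

/-- T1 -/
lemma Hyp.tan_ker (h : Hyp F n q Z) {l : Dual F V} {p : V} (hp : p ∈ Z) (ht : Tan Z l p) {v : V}
    (hv : l v = 0) (c : F) : v + c • p ∈ Z ↔ v ∈ Z := by
  have key : ∀ (w : V) (c : F), l w = 0 → w ∈ Z → w + c • p ∈ Z := fun w c hw hwZ =>
    h.line _ hwZ _ hp ((ht w hwZ).1 hw) c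
  refine ⟨fun hh => ?_, key v c hv⟩
  have := key _ (-c) (by simp [hv, h.tan_self hp ht]) hh
  convert this using 1; module

/-- uniqueness in T2 -/
lemma Hyp.tan_unique (h : Hyp F n q Z) {l : Dual F V} {p : V} (hp : p ∈ Z) (ht : Tan Z l p) {v : V}
    (hv : l v ≠ 0) {c d : F} (hc : v + c • p ∈ Z) (hd : v + d • p ∈ Z) : c = d := by
  by_contra hne
  have h1 : (v + c • p) + p ∈ Z := by
    apply h.line3 hc hp one_ne_zero (b := d - c) (sub_ne_zero.2 (Ne.symm hne))
    convert hd using 1; module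
  have h2 := (ht _ hc).2 h1
  rw [map_add, map_smul, h.tan_self hp ht, smul_zero, add_zero] at h2
  exact hv h2

variable [Fintype (Dual F V)]

lemma Hyp.tan_sec (h : Hyp F n q Z) {l : Dual F V} {p : V} (hp : p ∈ Z) (h0 : p ≠ 0)
    (ht : Tan Z l p) : (sec Z l : ℤ) = ((q : ℤ) ^ n) ^ 2 - q * (q : ℤ) ^ n + (q : ℤ) ^ n := by
  rw [← h.card_perp hp h0, sec, perp]
  congr 2
  ext z
  simp only [Finset.mem_filter]
  constructor
  · rintro ⟨a, b⟩; exact ⟨a, (ht z a).1 b⟩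
  · rintro ⟨a, b⟩; exact ⟨a, (ht z a).2 b⟩

lemma Hyp.tan_off (h : Hyp F n q Z) {l : Dual F V} {p : V} (hp : p ∈ Z) (h0 : p ≠ 0)
    (ht : Tan Z l p) : ((Z.filter (fun z => l z ≠ 0)).card : ℤ) = (q - 1) * ((q : ℤ) ^ n) ^ 2 := by
  have hc : (sec Z l : ℤ) + (Z.filter (fun z => l z ≠ 0)).card = Z.card := by
    rw [sec]; exact_mod_cast Finset.card_filter_add_card_filter_not (s := Z) (fun z => l z = 0)
  rw [h.tan_sec hp h0 ht, h.card_Z] at hc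
  linear_combination hc

lemma Hyp.card_V (h : Hyp F n q Z) : (Fintype.card V : ℤ) = q ^ 2 * ((q : ℤ) ^ n) ^ 2 := by
  rw [Module.card_eq_pow_finrank (K := F) (V := V), h.dim, h.hq]; push_cast; ring

lemma Hyp.card_off (h : Hyp F n q Z) {l : Dual F V} (hl : l ≠ 0) :
    ((Finset.univ.filter (fun v : V => l v ≠ 0)).card : ℤ) = q * ((q - 1) * ((q : ℤ) ^ n) ^ 2) := by
  have h1 := Finset.card_filter_add_card_filter_not (s := (Finset.univ : Finset V)) (fun v => l v = 0)
  have h2 : Finset.univ.filter (fun v : V => l v = 0) = fin (LinearMap.ker l) := by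
    ext v; simp [fin]
  have h3 : finrank F (LinearMap.ker l) = 2 * n + 1 := by
    have := Module.Dual.finrank_ker_add_one_of_ne_zero hl
    rw [h.dim] at this; omega
  rw [h2, card_fin, h3, h.hq, Finset.card_univ] at h1
  zify at h1
  rw [h.card_V] at h1
  linear_combination h1

/-- existence in T2 -/
lemma Hyp.tan_exists (h : Hyp F n q Z) {l : Dual F V} (hl : l ≠ 0) {p : V} (hp : p ∈ Z) (h0 : p ≠ 0)
    (ht : Tan Z l p) {v : V} (hv : l v ≠ 0) : ∃ c : F, v + c • p ∈ Z := by
  set A := (Z.filter (fun z => l z ≠ 0)) ×ˢ (Finset.univ : Finset F) with hA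
  have hlp := h.tan_self hp ht
  have hinj : Set.InjOn (fun x : V × F => x.1 + x.2 • p) A := by
    rintro ⟨z, c⟩ hz ⟨z', c'⟩ hz' heq
    simp only [hA, Finset.coe_product, Set.mem_prod, Finset.mem_coe, Finset.mem_filter] at hz hz' heq
    have e : z = z' + (c' - c) • p := by
      have : z = z' + c' • p - c • p := by rw [← heq]; abel
      rw [this]; module
    have := h.tan_unique hp ht hz'.1.2 (c := 0) (d := c' - c) (by simpa using hz'.1.1)
      (by rw [← e]; exact hz.1.1)
    have hcc : c = c' := by linear_combination this
    subst hcc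
    rw [add_right_cancel heq]
  have hsub : A.image (fun x : V × F => x.1 + x.2 • p) ⊆ Finset.univ.filter (fun v : V => l v ≠ 0) := by
    intro v hv
    obtain ⟨⟨z, c⟩, hz, rfl⟩ := Finset.mem_image.1 hv
    simp only [hA, Finset.mem_product, Finset.mem_filter, Finset.mem_univ, and_true, true_and] at hz ⊢
    simpa [hlp] using hz.2
  have heq := Finset.eq_of_subset_of_card_le hsub (by
    rw [Finset.card_image_of_injOn hinj, hA, Finset.card_product, Finset.card_univ, h.hq]
    zify
    rw [h.card_off hl, h.tan_off hp h0 ht]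
    apply le_of_eq; ring)
  have hvm : v ∈ Finset.univ.filter (fun v : V => l v ≠ 0) := by simpa using hv
  rw [← heq] at hvm
  obtain ⟨⟨z, c⟩, hz, rfl⟩ := Finset.mem_image.1 hvm
  simp only [hA, Finset.mem_product, Finset.mem_filter] at hz
  refine ⟨-c, ?_⟩
  convert hz.1.1 using 1
  module

lemma Hyp.tan_ker_le (h : Hyp F n q Z) {l l' : Dual F V} (hl' : l' ≠ 0) {p : V}
    (hp : p ∈ Z) (h0 : p ≠ 0) (ht : Tan Z l p) (ht' : Tan Z l' p) {v : V} (hv : l v = 0) :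
    l' v = 0 := by
  by_contra hne
  obtain ⟨c, hc⟩ := h.tan_exists hl' hp h0 ht' hne
  have h1 : l (v + c • p) = 0 := by simp [hv, h.tan_self hp ht]
  have h2 := (ht' _ hc).2 ((ht _ hc).1 h1)
  rw [map_add, map_smul, h.tan_self hp ht', smul_zero, add_zero] at h2
  exact hne h2

lemma exists_smul_of_ker {V : Type*} [AddCommGroup V] [Module F V] {l l' : Dual F V} (hl : l ≠ 0) (hker : ∀ v, l v = 0 → l' v = 0) :
    ∃ a : F, l' = a • l := by
  obtain ⟨u, hu⟩ : ∃ u, l u ≠ 0 := by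
    by_contra hcon
    push Not at hcon
    exact hl (LinearMap.ext hcon)
  refine ⟨l' u / l u, LinearMap.ext fun v => ?_⟩
  have := hker (v - (l v / l u) • u) (by simp [hu])
  rw [map_sub, map_smul, smul_eq_mul, sub_eq_zero] at this
  rw [this, LinearMap.smul_apply, smul_eq_mul]
  ring

lemma Hyp.card_small (h : Hyp F n q Z) :
    (((Finset.univ.erase (0 : Dual F V)).filter (fun l => (sec Z l : ℤ) =
      ((q : ℤ) ^ n) ^ 2 - q * (q : ℤ) ^ n + (q : ℤ) ^ n)).card : ℤ) = Z.card - 1 := by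
  have h2 := first_moment Z (⊥ : Submodule F V)
  have i0 : inter Z (⊥ : Submodule F V) = 1 := by
    rw [inter, Finset.card_eq_one]
    refine ⟨0, ?_⟩
    ext z
    simp only [Finset.mem_filter, Submodule.mem_bot, Finset.mem_singleton]
    constructor
    · exact fun h => h.2
    · rintro rfl; exact ⟨h.zero_mem, rfl⟩
  have ha : ann (⊥ : Submodule F V) = Finset.univ := by
    ext l; simp [ann]
  have hc := h.ann_bot_card
  rw [i0, hc, h.hq, ha, ← Finset.add_sum_erase _ _ (Finset.mem_univ (0 : Dual F V)), sec_zero] at h2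
  rw [ha] at hc
  have h1 : ∀ l ∈ Finset.univ.erase (0 : Dual F V), (sec Z l : ℤ) = ((q : ℤ) ^ n) ^ 2 -
      if (sec Z l : ℤ) = ((q : ℤ) ^ n) ^ 2 - q * (q : ℤ) ^ n + (q : ℤ) ^ n then
        (q - 1) * (q : ℤ) ^ n else 0 := by
    intro l hl
    split_ifs with hh
    · rw [hh]; ring
    · rw [(h.count l (Finset.ne_of_mem_erase hl)).resolve_right hh]; ring
  rw [Finset.sum_congr rfl h1, Finset.sum_sub_distrib, ← Finset.sum_filter, Finset.sum_const,
    Finset.sum_const, nsmul_eq_mul, nsmul_eq_mul, Finset.card_erase_of_mem (Finset.mem_univ _),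
    Nat.cast_sub (Finset.card_pos.2 ⟨0, Finset.mem_univ _⟩), hc] at h2
  have hN := h.card_Z
  have hQ := h.qn_ge
  have hq2 : (2 : ℤ) < q := by exact_mod_cast h.hq2
  generalize (((Finset.univ.erase (0 : Dual F V)).filter (fun l => (sec Z l : ℤ) =
      ((q : ℤ) ^ n) ^ 2 - q * (q : ℤ) ^ n + (q : ℤ) ^ n)).card : ℤ) = s at *
  generalize (Z.card : ℤ) = N at *
  clear h1 hc
  generalize (q : ℤ) ^ n = Q at *
  generalize (q : ℤ) = r at *
  have e : r * ((r - 1) * Q) ≠ 0 := by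
    have : 0 < Q := by nlinarith
    have : 0 < r - 1 := by linarith
    positivity
  apply mul_left_cancel₀ e
  subst hN
  push_cast at h2
  linear_combination (-1) * h2

lemma Hyp.exists_tan (h : Hyp F n q Z) {p : V} (hp : p ∈ Z) (h0 : p ≠ 0) :
    ∃ l : Dual F V, l ≠ 0 ∧ Tan Z l p := by
  set s := (Finset.univ.erase (0 : Dual F V)).filter (fun l => (sec Z l : ℤ) =
      ((q : ℤ) ^ n) ^ 2 - q * (q : ℤ) ^ n + (q : ℤ) ^ n) with hs
  set t := (Z.erase 0).filter (fun p => ∃ l : Dual F V, l ≠ 0 ∧ Tan Z l p) with ht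
  have hq2 := h.hq2
  have hF : (Finset.univ.erase (0 : F)).card = q - 1 := by
    rw [Finset.card_erase_of_mem (Finset.mem_univ _), Finset.card_univ, h.hq]
  have hle : s.card * (q - 1) ≤ t.card * (q - 1) := by
    apply Finset.card_mul_le_card_mul (fun l p => Tan Z l p)
    · intro l hl
      simp only [hs, Finset.mem_filter, Finset.mem_erase, Finset.mem_univ, and_true] at hl
      obtain ⟨p, hp, h0, hT⟩ := h.small_rad l hl.2
      have hT : Tan Z l p := hT
      rw [← hF, ← Finset.card_image_of_injective (Finset.univ.erase (0 : F)) (smul_left_injective F h0)]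
      apply Finset.card_le_card
      intro x hx
      obtain ⟨c, hc, rfl⟩ := Finset.mem_image.1 hx
      have hc0 := Finset.ne_of_mem_erase hc
      have hT' := h.tan_smul hp hT hc0
      refine Finset.mem_filter.2 ⟨?_, hT'⟩
      simp only [ht, Finset.mem_filter, Finset.mem_erase]
      exact ⟨⟨smul_ne_zero hc0 h0, h.smul_mem _ _ hp⟩, l, hl.1, hT'⟩
    · intro p hp
      simp only [ht, Finset.mem_filter, Finset.mem_erase] at hp
      obtain ⟨⟨h0, hp⟩, l, hl, hT⟩ := hp
      rw [← hF]
      refine le_trans (Finset.card_le_card (t := (Finset.univ.erase (0 : F)).image (fun a => a • l)) ?_)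
        Finset.card_image_le
      intro l' hl'
      rw [Finset.mem_bipartiteBelow] at hl'
      obtain ⟨hl's, hT'⟩ := hl'
      simp only [hs, Finset.mem_filter, Finset.mem_erase, Finset.mem_univ, and_true] at hl's
      obtain ⟨a, ha⟩ := exists_smul_of_ker hl (fun v hv => h.tan_ker_le hl's.1 hp h0 hT hT' hv)
      refine Finset.mem_image.2 ⟨a, ?_, ha.symm⟩
      simp only [Finset.mem_erase, Finset.mem_univ, and_true]
      rintro rfl
      exact hl's.1 (by rw [ha, zero_smul])
  have hle' := Nat.le_of_mul_le_mul_right hle (by omega)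
  have hcs : s.card = Z.card - 1 := by
    have := h.card_small
    rw [← hs] at this
    omega
  have heq : t = Z.erase 0 := Finset.eq_of_subset_of_card_le (Finset.filter_subset _ _) (by
    rw [Finset.card_erase_of_mem h.zero_mem]; omega)
  have : p ∈ t := by rw [heq]; exact Finset.mem_erase.2 ⟨h0, hp⟩
  exact (Finset.mem_filter.1 this).2
end
end EllQ


namespace EllQ
open Module
set_option linter.unusedSectionVars false

section
variable {F : Type*} [Field F] {W : Type*} [AddCommGroup W] [Module F W]

/-- a function with affine behaviour along sufficiently many directions is a quadratic form -/
lemma quad_of_affine (f : W → F) (β : W → Dual F W) (f0 : f 0 = 0)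
    (H1 : ∀ (c : F) w, f w = 0 → f (c • w) = 0)
    (H2 : Submodule.span F {w | f w = 0} = ⊤)
    (H3 : ∀ u w (t : F), f w = 0 → f (u + t • w) = f u + t * β u w)
    (H4 : ∀ w1 w2 w3, f w1 = 0 → f w2 = 0 → f w3 = 0 → f (w1 + w2) = 0 ∨ f (w1 + w3) = 0 ∨
      f (w2 + w3) = 0 ∨ ∃ c1 c2 c3 : F, c1 ≠ 0 ∧ c2 ≠ 0 ∧ c3 ≠ 0 ∧
        f (c1 • w1 + c2 • w2 + c3 • w3) = 0)
    (t0 : F) (ht0 : t0 ≠ 0) (ht1 : t0 ≠ 1) :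
    ∃ Q : QuadraticForm F W, ∀ w, Q w = f w := by
  have ind : ∀ {P : W → Prop}, (∀ w, f w = 0 → P w) → (∀ v v', P v → P v' → P (v + v')) →
      (∀ (a : F) v, P v → P (a • v)) → ∀ v, P v := by
    intro P h1 h2 h3 v
    have hv : v ∈ Submodule.span F {w | f w = 0} := by rw [H2]; trivial
    induction hv using Submodule.span_induction with
    | mem x hx => exact h1 x hx
    | zero => exact h1 0 f0
    | add x y _ _ hx hy => exact h2 x y hx hy
    | smul a x _ hx => exact h3 a x hx
  set h : W → W → W → F := fun u w w' => β (u + w) w' - β u w' with hh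
  have A1 : ∀ u w w', f w = 0 → f w' = 0 → ∀ s t : F,
      t * (β (u + s • w) w' - β u w') = s * (β (u + t • w') w - β u w) := by
    intro u w w' hw hw' s t
    have e1 := H3 (u + s • w) w' t hw'
    have e2 := H3 (u + t • w') w s hw
    rw [H3 u w s hw] at e1
    rw [H3 u w' t hw'] at e2
    rw [add_right_comm] at e1
    rw [e1] at e2
    linear_combination e2
  have hsymm : ∀ u w w', f w = 0 → f w' = 0 → h u w w' = h u w' w := by
    intro u w w' hw hw'
    have := A1 u w w' hw hw' 1 1
    simpa [hh] using this
  have A2 : ∀ u w w', f w = 0 → f w' = 0 → ∀ s : F, β (u + s • w) w' = β u w' + s * h u w w' := by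
    intro u w w' hw hw' s
    have := A1 u w w' hw hw' s 1
    rw [hsymm u w w' hw hw']
    simp only [one_smul, one_mul] at this
    simp only [hh]
    linear_combination this
  have A3 : ∀ u w w', f w = 0 → f w' = 0 → f (w + w') = 0 → h u w w' = 0 := by
    intro u w w' hw hw' hww
    have e1 := H3 u (w + w') 1 hww
    have e2 := H3 (u + w) w' 1 hw'
    have e3 := H3 u w 1 hw
    simp only [one_smul, one_mul, map_add] at e1 e2 e3
    rw [← add_assoc, e2, e3] at e1
    simp only [hh]
    linear_combination e1
  have A4 : ∀ u w1 w2 w3, f w1 = 0 → f w2 = 0 → f w3 = 0 → h (u + w3) w1 w2 = h u w1 w2 := by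
    intro u w1 w2 w3 h1 h2 h3
    have d1 : h (u + w3) w1 w2 - h u w1 w2 = h (u + w1) w3 w2 - h u w3 w2 := by
      simp only [hh]; rw [add_right_comm]; ring
    have d2 : h (u + w3) w1 w2 - h u w1 w2 = h (u + w2) w3 w1 - h u w3 w1 := by
      rw [hsymm _ w1 w2 h1 h2, hsymm _ w1 w2 h1 h2]
      simp only [hh]; rw [add_right_comm]; ring
    rcases H4 w1 w2 w3 h1 h2 h3 with c | c | c | ⟨c1, c2, c3, n1, n2, n3, hc⟩
    · rw [A3 _ w1 w2 h1 h2 c, A3 _ w1 w2 h1 h2 c]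
    · rw [add_comm] at c
      rw [A3 _ w3 w1 h3 h1 c, A3 _ w3 w1 h3 h1 c] at d2
      linear_combination d2
    · rw [add_comm] at c
      rw [A3 _ w3 w2 h3 h2 c, A3 _ w3 w2 h3 h2 c] at d1
      linear_combination d1
    · have G : ∀ a b c : F, f (u + (a • w1 + b • w2 + c • w3)) = f u + c * β u w3
          + a * (β u w1 + c * h u w3 w1) + b * (β u w2 + c * h u w3 w2)
          + a * b * (h u w1 w2 + c * (h (u + w3) w1 w2 - h u w1 w2)) := by
        intro a b c
        have e0 : u + (a • w1 + b • w2 + c • w3) = u + c • w3 + a • w1 + b • w2 := by abel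
        have e1 : h (u + c • w3) w1 w2 = h u w1 w2 + c * (h (u + w1) w3 w2 - h u w3 w2) := by
          have := A2 (u + w1) w3 w2 h3 h2 c
          have := A2 u w3 w2 h3 h2 c
          simp only [hh] at *
          rw [add_right_comm]
          linear_combination A2 (u + w1) w3 w2 h3 h2 c - A2 u w3 w2 h3 h2 c
        rw [e0, H3 _ w2 b h2, H3 _ w1 a h1, H3 _ w3 c h3, A2 _ w1 w2 h1 h2, A2 _ w3 w2 h3 h2,
          A2 _ w3 w1 h3 h1, e1, d1]
        ring
      have L : ∀ t : F, f (u + ((t * c1) • w1 + (t * c2) • w2 + (t * c3) • w3)) =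
          f u + t * (c1 * β u w1 + c2 * β u w2 + c3 * β u w3) := by
        intro t
        have := H3 u _ t hc
        simp only [smul_add, smul_smul, map_add, map_smul, smul_eq_mul] at this
        exact this
      have g1 := L 1
      have g2 := L t0
      rw [G] at g1 g2
      have hD : t0 ^ 2 * (t0 - 1) * (c1 * c2 * c3) * (h (u + w3) w1 w2 - h u w1 w2) = 0 := by
        linear_combination g2 - t0 ^ 2 * g1
      have : t0 ^ 2 * (t0 - 1) * (c1 * c2 * c3) ≠ 0 :=
        mul_ne_zero (mul_ne_zero (pow_ne_zero 2 ht0) (sub_ne_zero.2 ht1))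
          (mul_ne_zero (mul_ne_zero n1 n2) n3)
      exact sub_eq_zero.1 ((mul_eq_zero.1 hD).resolve_left this)
  have A5 : ∀ w1 w2, f w1 = 0 → f w2 = 0 → ∀ v, ∀ (c : F) u, h (u + c • v) w1 w2 = h u w1 w2 := by
    intro w1 w2 h1 h2
    apply ind
    · intro w hw c u
      exact A4 u w1 w2 _ h1 h2 (H1 c w hw)
    · intro v v' hv hv' c u
      rw [smul_add, ← add_assoc, hv', hv]
    · intro a v hv c u
      rw [smul_smul, hv]
  have β0 : ∀ w, f w = 0 → β 0 w = 0 := by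
    intro w hw
    have := H3 0 w 1 hw
    rw [one_smul, zero_add, f0, hw] at this
    linear_combination -this
  have A6 : ∀ v, ∀ (u : W) (c : F) (w' : W), f w' = 0 → β (u + c • v) w' = β u w' + c * β v w' := by
    apply ind
    · intro w hw u c w' hw'
      have e1 := A2 u w w' hw hw' c
      have e2 := A2 0 w w' hw hw' 1
      have e3 := A5 w w' hw hw' u 1 0
      rw [one_smul, zero_add] at e3
      rw [one_smul, zero_add, β0 w' hw'] at e2
      rw [e1, e2, e3]; ring
    · intro v v' hv hv' u c w' hw'
      have e2 := hv' v 1 w' hw'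
      rw [one_smul] at e2
      rw [smul_add, ← add_assoc, hv' _ _ _ hw', hv _ _ _ hw', e2]; ring
    · intro a v hv u c w' hw'
      have e2 := hv 0 a w' hw'
      rw [zero_add, β0 w' hw'] at e2
      rw [smul_smul, hv _ _ _ hw', e2]; ring
  have A7 : ∀ (v u : W) (c : F) (w' : W), β (u + c • v) w' = β u w' + c * β v w' := by
    intro v u c
    apply ind
    · exact A6 v u c
    · intro x y hx hy; rw [map_add, map_add, map_add, hx, hy]; ring
    · intro a x hx; rw [map_smul, map_smul, map_smul, hx]; simp only [smul_eq_mul]; ring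
  have β0' : β 0 = 0 := by
    ext w
    have := A7 0 0 1 w
    rw [smul_zero, add_zero, one_mul] at this
    rw [LinearMap.zero_apply]
    linear_combination -this
  have A8 : ∀ v, ∀ (u : W) (c : F), f (u + c • v) = f u + c ^ 2 * f v + c * β u v := by
    apply ind
    · intro w hw u c
      rw [H3 u w c hw, hw]; ring
    · intro v v' hv hv' u c
      have e := hv' v 1
      rw [one_smul] at e
      rw [smul_add, ← add_assoc, hv', hv, e, A7, map_add]; ring
    · intro a v hv u c
      have e := hv 0 a
      rw [zero_add, f0, β0'] at e
      rw [smul_smul, hv, e, map_smul, LinearMap.zero_apply, smul_eq_mul]; ring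
  refine ⟨⟨f, ?_, ⟨⟨⟨β, ?_⟩, ?_⟩, ?_⟩⟩, fun w => rfl⟩
  · intro a x
    have e := A8 x 0 a
    rw [zero_add, f0, β0'] at e
    rw [e, LinearMap.zero_apply, smul_eq_mul]; ring
  · intro x y
    ext w
    have := A7 y x 1 w
    simpa using this
  · intro a x
    ext w
    have := A7 x 0 a w
    simpa [β0'] using this
  · intro x y
    have := A8 y x 1
    simpa using this
end
end EllQ


namespace EllQ
open Module
set_option linter.unusedSectionVars false

section
open Classical
variable {F : Type*} [Field F] [Fintype F] {V : Type*} [AddCommGroup V] [Module F V] [Fintype V]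
  {n q : ℕ} {Z : Finset V}

lemma Hyp.tan_scale (_h : Hyp F n q Z) {l : Dual F V} {p : V} (ht : Tan Z l p) {c : F}
    (hc : c ≠ 0) : Tan Z (c • l) p := by
  intro z hz
  rw [← ht z hz]
  simp [hc]

variable [Fintype (Dual F V)]

lemma Hyp.span_aux (h : Hyp F n q Z) {lx g : Dual F V} {x y : V} (hx : x ∈ Z) (hx0 : x ≠ 0)
    (hlx : Tan Z lx x) (hxy : lx y = 1) (hgy : g y = 0)
    (hg : ∀ z ∈ Z, lx z = 0 → g z = 0) : g = 0 := by
  by_contra hg0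
  have hl0 : lx ≠ 0 := by rintro rfl; simp at hxy
  have hns : ∀ a : F, g ≠ a • lx := by
    intro a ha
    have := hgy
    rw [ha] at this
    simp [hxy] at this
    rw [this] at ha
    exact hg0 (by rw [ha, zero_smul])
  have hbig : ∀ c : F, (sec Z (g + c • lx) : ℤ) = ((q : ℤ) ^ n) ^ 2 := by
    intro c
    have hk0 : g + c • lx ≠ 0 := by
      intro hh
      apply hns (-c)
      ext v
      have := LinearMap.congr_fun hh v
      simp only [LinearMap.add_apply, LinearMap.smul_apply, LinearMap.zero_apply, smul_eq_mul] at this ⊢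
      linear_combination this
    refine (h.count _ hk0).resolve_right fun hs => ?_
    have hsub : perp Z x ⊆ Z.filter (fun z => (g + c • lx) z = 0) := by
      intro z hz
      obtain ⟨hz1, hz2⟩ := mem_perp.1 hz
      have := (hlx z hz1).2 hz2
      refine Finset.mem_filter.2 ⟨hz1, by simp [this, hg z hz1 this]⟩
    have heq := Finset.eq_of_subset_of_card_le hsub (by
      have h1 := h.card_perp hx hx0
      rw [← hs] at h1
      exact (Nat.cast_injective h1).ge)
    have hT : Tan Z (g + c • lx) x := by
      intro z hz
      have := Finset.ext_iff.1 heq z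
      rw [Finset.mem_filter, mem_perp] at this
      tauto
    obtain ⟨a, ha⟩ := exists_smul_of_ker hl0 (fun v hv => h.tan_ker_le hk0 hx hx0 hlx hT hv)
    apply hns (a - c)
    ext v
    have := LinearMap.congr_fun ha v
    simp only [LinearMap.add_apply, LinearMap.smul_apply, smul_eq_mul] at this ⊢
    linear_combination this
  have hsum : ∑ c : F, (sec Z (g + c • lx) : ℤ) =
      q * (sec Z lx : ℤ) + (Z.filter (fun z => lx z ≠ 0)).card := by
    have h1 : ∀ c : F, (sec Z (g + c • lx) : ℤ) = ∑ z ∈ Z, if g z + c * lx z = 0 then 1 else 0 := by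
      intro c
      rw [← Finset.sum_filter, Finset.sum_const, nsmul_eq_mul, mul_one, sec]
      rfl
    rw [Finset.sum_congr rfl (fun c _ => h1 c), Finset.sum_comm,
      ← Finset.sum_filter_add_sum_filter_not Z (fun z => lx z = 0)]
    congr 1
    · have : ∀ z ∈ Z.filter (fun z => lx z = 0),
          (∑ c : F, if g z + c * lx z = 0 then (1 : ℤ) else 0) = q := by
        intro z hz
        obtain ⟨hz1, hz2⟩ := Finset.mem_filter.1 hz
        simp [hz2, hg z hz1 hz2, h.hq]
      rw [Finset.sum_congr rfl this, Finset.sum_const, nsmul_eq_mul, sec, mul_comm]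
    · have : ∀ z ∈ Z.filter (fun z => ¬ lx z = 0),
          (∑ c : F, if g z + c * lx z = 0 then (1 : ℤ) else 0) = 1 := by
        intro z hz
        obtain ⟨hz1, hz2⟩ := Finset.mem_filter.1 hz
        rw [Finset.sum_eq_single (-(g z / lx z))]
        · rw [if_pos]; field_simp; ring
        · intro c _ hc
          rw [if_neg]
          intro hh
          apply hc
          field_simp
          linear_combination hh
        · intro hh; exact absurd (Finset.mem_univ _) hh
      rw [Finset.sum_congr rfl this, Finset.sum_const, nsmul_eq_mul, mul_one]
  rw [Finset.sum_congr rfl (fun c _ => hbig c), Finset.sum_const, Finset.card_univ, h.hq,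
    nsmul_eq_mul, h.tan_sec hx hx0 hlx, h.tan_off hx hx0 hlx] at hsum
  have hQ := h.qn_ge
  have hq2 : (2 : ℤ) < q := by exact_mod_cast h.hq2
  generalize (q : ℤ) ^ n = Q at *
  generalize (q : ℤ) = r at *
  have hQ0 : 0 < Q := by nlinarith
  have e : ((r - 1) * Q) * (Q - r) = 0 := by linear_combination (-1) * hsum
  have e2 : (r - 1) * Q ≠ 0 := by
    have : 0 < r - 1 := by linarith
    positivity
  have := (mul_eq_zero.1 e).resolve_left e2
  nlinarith

lemma Hyp.exists_quad (h : Hyp F n q Z) : ∃ Φ : QuadraticForm F V, ∀ v, v ∈ Z ↔ Φ v = 0 := by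
  have hQ := h.qn_ge
  have hq2 : (2 : ℤ) < q := by exact_mod_cast h.hq2
  have hQ0 : 0 < (q : ℤ) ^ n := by positivity
  -- choice of tangent functionals
  have hL : ∀ p : V, ∃ l : Dual F V, p ∈ Z → p ≠ 0 → l ≠ 0 ∧ Tan Z l p := by
    intro p
    by_cases hp : p ∈ Z ∧ p ≠ 0
    · obtain ⟨l, hl⟩ := h.exists_tan hp.1 hp.2
      exact ⟨l, fun _ _ => hl⟩
    · exact ⟨0, fun h1 h2 => absurd ⟨h1, h2⟩ hp⟩
  choose L hL using hL
  -- base points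
  obtain ⟨x, hx, hx0⟩ : ∃ x ∈ Z, x ≠ 0 := by
    have hc : 1 < Z.card := by
      zify
      rw [h.card_Z]
      generalize (q : ℤ) ^ n = Q at *
      nlinarith
    exact Finset.exists_mem_ne hc 0
  obtain ⟨lx0, hlx00, hlx0⟩ := h.exists_tan hx hx0
  obtain ⟨y, hy, hlxy0⟩ : ∃ y ∈ Z, lx0 y ≠ 0 := by
    have hpos : 0 < (Z.filter (fun z => lx0 z ≠ 0)).card := by
      zify
      rw [h.tan_off hx hx0 hlx0]
      have : (0 : ℤ) < q - 1 := by linarith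
      positivity
    obtain ⟨y, hy⟩ := Finset.card_pos.1 hpos
    exact ⟨y, (Finset.mem_filter.1 hy).1, (Finset.mem_filter.1 hy).2⟩
  have hy0 : y ≠ 0 := by rintro rfl; simp at hlxy0
  obtain ⟨ly0, hly00, hly0⟩ := h.exists_tan hy hy0
  have hlyx0 : ly0 x ≠ 0 := by
    intro hh
    rw [hly0 x hx, add_comm, ← hlx0 y hy] at hh
    exact hlxy0 hh
  obtain ⟨lx, hlx, hxy⟩ : ∃ lx : Dual F V, Tan Z lx x ∧ lx y = 1 :=
    ⟨(lx0 y)⁻¹ • lx0, h.tan_scale hlx0 (inv_ne_zero hlxy0), by simp [hlxy0]⟩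
  obtain ⟨ly, hly, hyx⟩ : ∃ ly : Dual F V, Tan Z ly y ∧ ly x = 1 :=
    ⟨(ly0 x)⁻¹ • ly0, h.tan_scale hly0 (inv_ne_zero hlyx0), by simp [hlyx0]⟩
  have hlx00 : lx ≠ 0 := by rintro rfl; simp at hxy
  have hxx := h.tan_self hx hlx
  have hyy := h.tan_self hy hly
  clear hlx00 hlx0 hlxy0 hly00 hly0 hlyx0
  have hlx_ne : lx ≠ 0 := by rintro rfl; simp at hxy
  set W : Submodule F V := LinearMap.ker lx ⊓ LinearMap.ker ly with hW
  have hWx : ∀ w : W, lx w = 0 := fun w => (Submodule.mem_inf.1 w.2).1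
  have hWy : ∀ w : W, ly w = 0 := fun w => (Submodule.mem_inf.1 w.2).2
  -- the function
  have hg : ∀ w : W, ∃ c : F, y + (w : V) - c • x ∈ Z := by
    intro w
    have : lx (y + w) ≠ 0 := by simp [hxy, hWx]
    obtain ⟨c, hc⟩ := h.tan_exists hlx_ne hx hx0 hlx this
    exact ⟨-c, by rwa [neg_smul, sub_neg_eq_add]⟩
  choose f hf using hg
  have hfu : ∀ (w : W) (c : F), y + (w : V) - c • x ∈ Z → f w = c := by
    intro w c hc
    have : lx (y + w) ≠ 0 := by simp [hxy, hWx]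
    have e := h.tan_unique hx hlx this (c := -f w) (d := -c)
      (by rw [neg_smul, ← sub_eq_add_neg]; exact hf w)
      (by rw [neg_smul, ← sub_eq_add_neg]; exact hc)
    exact neg_injective e
  have hfZ : ∀ w : W, f w = 0 ↔ (w : V) ∈ Z := by
    intro w
    rw [← h.tan_ker hy hly (hWy w) 1, one_smul, add_comm]
    constructor
    · intro h0
      have := hf w
      rwa [h0, zero_smul, sub_zero] at this
    · intro h0
      apply hfu
      rwa [zero_smul, sub_zero]
  -- projection
  let P : V →ₗ[F] W := LinearMap.codRestrict W
    (LinearMap.id - lx.smulRight y - ly.smulRight x) (by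
      intro v
      rw [hW, Submodule.mem_inf, LinearMap.mem_ker, LinearMap.mem_ker]
      simp [hxy, hyx, hxx, hyy])
  have hP : ∀ v, v = lx v • y + (P v : V) + ly v • x := by
    intro v
    simp only [P, LinearMap.codRestrict_apply, LinearMap.sub_apply, LinearMap.id_apply,
      LinearMap.smulRight_apply]
    abel
  have hPW : ∀ w : W, P w = w := by
    intro w
    have e := hP w
    rw [hWx, hWy, zero_smul, zero_smul, zero_add, add_zero] at e
    exact Subtype.ext e.symm
  -- tangent functionals at the points y + u - f(u) x
  have hpu : ∀ u : W, lx (y + (u : V) - f u • x) = 1 := by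
    intro u; simp [hxy, hWx, hxx]
  have hpu0 : ∀ u : W, y + (u : V) - f u • x ≠ 0 := by
    intro u hh
    have := hpu u
    rw [hh] at this; simp at this
  have hlu : ∀ u : W, L (y + (u : V) - f u • x) x ≠ 0 := by
    intro u hh
    rw [(hL _ (hf u) (hpu0 u)).2 x hx, add_comm, ← hlx _ (hf u), hpu] at hh
    exact one_ne_zero hh
  let β : W → Dual F W := fun u =>
    (L (y + (u : V) - f u • x) x)⁻¹ • ((L (y + (u : V) - f u • x)).comp W.subtype)
  obtain ⟨t0, ht0, ht1⟩ := h.exists_ne (1 : F)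
  obtain ⟨QW, hQW⟩ : ∃ QW : QuadraticForm F W, ∀ w, QW w = f w := by
    refine quad_of_affine f β ?_ ?_ ?_ ?_ ?_ t0 ht0 ht1
    · rw [hfZ]; exact h.zero_mem
    · intro c w hw
      rw [hfZ] at hw ⊢
      exact h.smul_mem c _ hw
    · by_contra hne
      obtain ⟨g, hg0, hgle⟩ := Submodule.exists_le_ker_of_lt_top _ (lt_top_iff_ne_top.2 hne)
      apply hg0
      have hG : g.comp P = 0 := by
        apply h.span_aux hx hx0 hlx hxy
        · have : P y = 0 := by
            apply Subtype.ext
            have e := hP y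
            rw [hxy, hyy, one_smul, zero_smul, add_zero] at e
            simpa using e
          simp [this]
        · intro z hz hlz
          have e := hP z
          rw [hlz, zero_smul, zero_add] at e
          have e2 : (P z : V) ∈ Z := by
            rw [← h.tan_ker hx hlx (hWx (P z)) (ly z), ← e]; exact hz
          have := hgle (Submodule.subset_span (show P z ∈ {w : W | f w = 0} from (hfZ _).2 e2))
          exact this
      ext w
      have := LinearMap.congr_fun hG w
      rw [LinearMap.comp_apply, hPW] at this
      exact this
    · intro u w t hw
      rw [hfZ] at hw
      have hw' : (w : V) + (-(β u w)) • x ∈ Z := (h.tan_ker hx hlx (hWx w) _).2 hw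
      have h0 : L (y + (u : V) - f u • x) ((w : V) + (-(β u w)) • x) = 0 := by
        simp only [β, map_add, map_smul, LinearMap.smul_apply, LinearMap.comp_apply,
          Submodule.subtype_apply, smul_eq_mul]
        field_simp [hlu u]
        ring
      have h1 := ((hL _ (hf u) (hpu0 u)).2 _ hw').1 h0
      rw [add_comm] at h1
      have h2 := h.line _ (hf u) _ hw' h1 t
      apply hfu
      convert h2 using 1
      rw [Submodule.coe_add, Submodule.coe_smul]
      module
    · intro w1 w2 w3 h1 h2 h3
      rw [hfZ] at h1 h2 h3
      simp only [hfZ, Submodule.coe_add, Submodule.coe_smul]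
      by_cases c12 : (w1 : V) + w2 ∈ Z
      · left; exact c12
      by_cases c13 : (w1 : V) + w3 ∈ Z
      · right; left; exact c13
      by_cases c23 : (w2 : V) + w3 ∈ Z
      · right; right; left; exact c23
      right; right; right
      have hw10 : (w1 : V) ≠ 0 := by
        intro hh; apply c12; rw [hh, zero_add]; exact h2
      obtain ⟨l, hl0, hl⟩ := h.exists_tan h1 hw10
      have l3 : l w3 ≠ 0 := by
        intro hh; rw [hl _ h3, add_comm] at hh; exact c13 hh
      obtain ⟨c, hc0, hc1⟩ := h.exists_ne (-(l w2 / l w3))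
      have hv : l ((w2 : V) + c • (w3 : V)) ≠ 0 := by
        intro hh
        apply hc1
        rw [map_add, map_smul, smul_eq_mul] at hh
        field_simp
        linear_combination hh
      obtain ⟨d, hd⟩ := h.tan_exists hl0 h1 hw10 hl hv
      refine ⟨d, 1, c, ?_, one_ne_zero, hc0, ?_⟩
      · rintro rfl
        rw [zero_smul, add_zero] at hd
        apply c23
        apply h.line3 h2 h3 one_ne_zero hc0
        rwa [one_smul]
      · convert hd using 1; module
  refine ⟨QuadraticMap.linMulLin lx ly + QW.comp P, fun v => ?_⟩
  rw [add_apply, QuadraticMap.linMulLin_apply, QuadraticMap.comp_apply, hQW]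
  by_cases ha : lx v = 0
  · rw [ha, zero_mul, zero_add, hfZ]
    have e := hP v
    rw [ha, zero_smul, zero_add] at e
    conv_lhs => rw [e]
    exact h.tan_ker hx hlx (hWx _) _
  · have e : v ∈ Z ↔ y + (((lx v)⁻¹ • P v : W) : V) - (-((lx v)⁻¹ * ly v)) • x ∈ Z := by
      have e1 : y + (((lx v)⁻¹ • P v : W) : V) - (-((lx v)⁻¹ * ly v)) • x = (lx v)⁻¹ • v := by
        have e0 : (lx v)⁻¹ • v = (lx v)⁻¹ • (lx v • y + (P v : V) + ly v • x) :=
          congrArg _ (hP v)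
        rw [e0, Submodule.coe_smul, smul_add, smul_add, smul_smul, smul_smul, inv_mul_cancel₀ ha]
        module
      rw [e1]
      constructor
      · exact h.smul_mem _ _
      · intro hh
        have := h.smul_mem (lx v) _ hh
        rwa [smul_smul, mul_inv_cancel₀ ha, one_smul] at this
    have e2 : f ((lx v)⁻¹ • P v) = (lx v)⁻¹ * (lx v)⁻¹ * f (P v) := by
      rw [← hQW, ← hQW, QuadraticMap.map_smul, smul_eq_mul]
    rw [e]
    constructor
    · intro hh
      have := hfu _ _ hh
      rw [e2] at this
      field_simp at this
      linear_combination this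
    · intro hh
      have e3 : f ((lx v)⁻¹ • P v) = -((lx v)⁻¹ * ly v) := by
        rw [e2]; field_simp; linear_combination hh
      rw [← e3]; exact hf _
end
end EllQ


namespace EllQ
open Module
set_option linter.unusedSectionVars false

section
open Classical
variable {F : Type*} [Field F] [Fintype F] {V : Type*} [AddCommGroup V] [Module F V] [Fintype V]
  {n q : ℕ} {Z : Finset V} [Fintype (Dual F V)]

lemma polar_iff {Φ : QuadraticForm F V} (hΦ : ∀ v, v ∈ Z ↔ Φ v = 0) {e : V} (he : e ∈ Z) :
    Tan Z (QuadraticMap.polarBilin Φ e) e := by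
  intro z hz
  rw [hΦ (z + e), QuadraticMap.polarBilin_apply_apply, QuadraticMap.polar, (hΦ e).1 he, (hΦ z).1 hz,
    add_comm, sub_zero, sub_zero]

lemma Hyp.nondeg (h : Hyp F n q Z) {Φ : QuadraticForm F V} (hΦ : ∀ v, v ∈ Z ↔ Φ v = 0)
    {r : V} (hr : QuadraticMap.polarBilin Φ r = 0) : r = 0 := by
  by_contra hr0
  have hQ := h.qn_ge
  have hq2 : (2 : ℤ) < q := by exact_mod_cast h.hq2
  have hQ0 : 0 < (q : ℤ) ^ n := by positivity
  have hq1 : (0 : ℤ) < q - 1 := by linarith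
  have hadd : ∀ (v : V) (t : F), Φ (v + t • r) = Φ v + t * t * Φ r := by
    intro v t
    have := LinearMap.congr_fun hr (t • v)
    have h1 : QuadraticMap.polar Φ r v = 0 := by
      have := LinearMap.congr_fun hr v
      simpa using this
    have h2 : QuadraticMap.polar Φ v (t • r) = 0 := by
      rw [QuadraticMap.polar_smul_right, QuadraticMap.polar_comm, h1, smul_zero]
    rw [QuadraticMap.polar, QuadraticMap.map_smul, smul_eq_mul] at h2
    linear_combination h2
  by_cases hrZ : Φ r = 0
  · have hrm := (hΦ r).2 hrZ
    have ht := polar_iff hΦ hrm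
    have := h.tan_off hrm hr0 ht
    rw [hr] at this
    simp at this
    rcases this with h1 | h1
    · linarith
    · have := h.hq2
      omega
  · have h2 : (2 : F) = 0 := by
      have := LinearMap.congr_fun hr r
      rw [QuadraticMap.polarBilin_apply_apply, QuadraticMap.polar_self] at this
      simp at this
      exact this.resolve_right hrZ
    have hchar : ringChar F = 2 := by
      by_contra hne
      exact (Ring.two_ne_zero hne) h2
    have hsurj : ∀ v : V, ∃ t : F, v + t • r ∈ Z := by
      intro v
      obtain ⟨t, ht⟩ := FiniteField.isSquare_of_char_two hchar (Φ v / Φ r)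
      refine ⟨t, ?_⟩
      rw [hΦ, hadd, ← ht]
      field_simp
      linear_combination Φ v * h2
    have hle : Fintype.card V ≤ (Z ×ˢ (Finset.univ : Finset F)).card := by
      rw [← Finset.card_univ]
      apply Finset.card_le_card_of_surjOn (fun x : V × F => x.1 - x.2 • r)
      intro v _
      obtain ⟨t, ht⟩ := hsurj v
      exact ⟨(v + t • r, t), by simpa using ht, by simp⟩
    rw [Finset.card_product, Finset.card_univ, h.hq] at hle
    zify at hle
    rw [h.card_V, h.card_Z] at hle
    generalize (q : ℤ) ^ n = Q at *
    generalize (q : ℤ) = r at *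
    have : 0 < r * ((r - 1) * Q) := by positivity
    nlinarith

lemma Hyp.big_iff (h : Hyp F n q Z) {Φ : QuadraticForm F V} (hΦ : ∀ v, v ∈ Z ↔ Φ v = 0)
    {e : V} (he : e ≠ 0) :
    (sec Z (QuadraticMap.polarBilin Φ e) : ℤ) = ((q : ℤ) ^ n) ^ 2 ↔ e ∉ Z := by
  have hQ := h.qn_ge
  have hq2 : (2 : ℤ) < q := by exact_mod_cast h.hq2
  have hQ0 : 0 < (q : ℤ) ^ n := by positivity
  have hq1 : (0 : ℤ) < q - 1 := by linarith
  have he0 : QuadraticMap.polarBilin Φ e ≠ 0 := fun hh => he (h.nondeg hΦ hh)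
  constructor
  · intro hs heZ
    have := h.tan_sec heZ he (polar_iff hΦ heZ)
    rw [hs] at this
    have : 0 < (q - 1) * (q : ℤ) ^ n := by positivity
    linarith
  · intro heZ
    refine (h.count _ he0).resolve_right fun hs => heZ ?_
    obtain ⟨p, hp, hp0, hT⟩ := h.small_rad _ hs
    have hp1 : QuadraticMap.polarBilin Φ p ≠ 0 := fun hh => hp0 (h.nondeg hΦ hh)
    obtain ⟨a, ha⟩ := exists_smul_of_ker he0
      (fun v hv => h.tan_ker_le hp1 hp hp0 hT (polar_iff hΦ hp) hv)
    have hpe : p - a • e = 0 := by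
      apply h.nondeg hΦ
      rw [map_sub, map_smul, ha]
      exact sub_self _
    have hpe := sub_eq_zero.1 hpe
    have ha0 : a ≠ 0 := by
      rintro rfl; rw [zero_smul] at hpe; exact hp0 hpe
    have := h.smul_mem a⁻¹ p hp
    rwa [hpe, smul_smul, inv_mul_cancel₀ ha0, one_smul] at this

/-- a totally singular subspace has dimension at most `n` -/
lemma Hyp.no_max (h : Hyp F n q Z) {Φ : QuadraticForm F V} (hΦ : ∀ v, v ∈ Z ↔ Φ v = 0)
    (W : Submodule F V) (hW : finrank F W = n + 1) (hWΦ : ∀ w ∈ W, Φ w = 0) : False := by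
  have hUZ : ∀ u ∈ W, u ∈ Z := fun u hu => (hΦ u).2 (hWΦ u hu)
  have h0 : ∀ u ∈ W, u ∈ Z := hUZ
  obtain ⟨U, hU1, hU2⟩ := (Set.toFinite {U : Submodule F V | ∀ u ∈ U, u ∈ Z}).exists_le_maximal h0
  have hU2' : ∀ u ∈ U, u ∈ Z := hU2.prop
  by_cases hr : ∃ r ∈ Z, r ∉ U
  · obtain ⟨r, hr, hrU⟩ := hr
    have h1 := (h.maximal hU2 hr hrU).2
    have h2 := Submodule.finrank_mono hU1
    omega
  · push Not at hr
    have hQ := h.qn_ge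
    have hq2 : (2 : ℤ) < q := by exact_mod_cast h.hq2
    have hQ0 : 0 < (q : ℤ) ^ n := by positivity
    have hq1 : (0 : ℤ) < q - 1 := by linarith
    have hne : W ≠ ⊥ := by
      rintro rfl
      rw [finrank_bot] at hW; omega
    obtain ⟨x, hx, hx0⟩ := Submodule.exists_mem_ne_zero_of_ne_bot hne
    have e1 := h.card_perp (hUZ x hx) hx0
    have e2 : perp Z x = Z := by
      apply Finset.filter_true_of_mem
      intro z hz
      exact hU2' _ (U.add_mem (hr z hz) (hU1 hx))
    rw [e2, h.card_Z] at e1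
    have : 0 < (q - 1) * ((q : ℤ) ^ n) ^ 2 := by positivity
    linarith
end
end EllQ


namespace EllQ
open Module
set_option linter.unusedSectionVars false

section
open Classical
variable {F : Type*} [Field F] [Fintype F] {V : Type*} [AddCommGroup V] [Module F V] [Fintype V]
  {n q : ℕ}

lemma card_fiber {β : Type*} (hq : Fintype.card F = q) (T : Finset V) (g : V → β) (t : Finset β)
    (h1 : ∀ m ∈ T, g m ∈ t)
    (h2 : ∀ b ∈ t, ∃ m0 : V, m0 ≠ 0 ∧ ∀ m, (m ∈ T ∧ g m = b) ↔ ∃ a : F, a ≠ 0 ∧ m = a • m0) :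
    T.card = (q - 1) * t.card := by
  rw [Finset.card_eq_sum_card_fiberwise h1, mul_comm, ← smul_eq_mul, ← Finset.sum_const]
  refine Finset.sum_congr rfl fun b hb => ?_
  obtain ⟨m0, hm0, hm⟩ := h2 b hb
  have : T.filter (fun m => g m = b) = (Finset.univ.erase (0 : F)).image (fun a => a • m0) := by
    ext m
    rw [Finset.mem_filter, hm]
    simp only [Finset.mem_image, Finset.mem_erase, Finset.mem_univ, and_true]
    constructor
    · rintro ⟨a, ha, rfl⟩; exact ⟨a, ha, rfl⟩
    · rintro ⟨a, ha, rfl⟩; exact ⟨a, ha, rfl⟩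
  rw [this, Finset.card_image_of_injective _ (smul_left_injective F hm0),
    Finset.card_erase_of_mem (Finset.mem_univ _), Finset.card_univ, hq]

lemma exists_ker (π : Submodule F V) (hπ : finrank F π + 1 = finrank F V) :
    ∃ e : Dual F V, e ≠ 0 ∧ LinearMap.ker e = π := by
  have hlt : π < ⊤ := by
    rw [lt_top_iff_ne_top]
    rintro rfl
    rw [finrank_top] at hπ; omega
  obtain ⟨e, he, hle⟩ := Submodule.exists_le_ker_of_lt_top π hlt
  refine ⟨e, he, (Submodule.eq_of_le_of_finrank_eq hle ?_).symm⟩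
  have := Module.Dual.finrank_ker_add_one_of_ne_zero he
  omega

lemma ker_smul_ne (e : Dual F V) {a : F} (ha : a ≠ 0) : LinearMap.ker (a • e) = LinearMap.ker e := by
  ext v; simp [ha]

variable [Fintype (Dual F V)]

lemma ker_count (hq : Fintype.card F = q) (S : Set (Submodule F V))
    (hhyp : ∀ π ∈ S, finrank F π + 1 = finrank F V) (K : Submodule F V) :
    (Finset.univ.filter (fun e : Dual F V => LinearMap.ker e ∈ S ∧ K ≤ LinearMap.ker e)).card =
      (q - 1) * {π ∈ S | K ≤ π}.ncard := by
  haveI : Fintype (Submodule F V) := Fintype.ofFinite _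
  have e : {π ∈ S | K ≤ π} = ((Finset.univ.filter (fun π : Submodule F V => π ∈ S ∧ K ≤ π)) :
      Set (Submodule F V)) := by ext π; simp
  rw [e, Set.ncard_coe_finset]
  apply card_fiber hq _ (fun e => LinearMap.ker e)
  · intro m hm; simpa using hm
  · intro π hπ
    simp only [Finset.mem_filter, Finset.mem_univ, true_and] at hπ
    obtain ⟨e0, he0, hk0⟩ := exists_ker π (hhyp π hπ.1)
    refine ⟨e0, he0, fun m => ?_⟩
    simp only [Finset.mem_filter, Finset.mem_univ, true_and]
    constructor
    · rintro ⟨hm, hm2⟩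
      obtain ⟨a, ha⟩ := exists_smul_of_ker he0 (l' := m) (fun v hv => by
        have : v ∈ LinearMap.ker m := by rw [hm2, ← hk0]; exact hv
        exact this)
      refine ⟨a, ?_, ha⟩
      rintro rfl
      have hm0 : m = 0 := by rw [ha]; ext v; simp
      have := hhyp π hπ.1
      rw [← hm2, hm0, LinearMap.ker_zero, finrank_top] at this
      omega
    · rintro ⟨a, ha, rfl⟩
      rw [ker_smul_ne e0 ha, hk0]
      exact ⟨hπ, rfl⟩

lemma point_count (hq : Fintype.card F = q) (T : Finset V) (h0 : 0 ∈ T)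
    (hT : ∀ (a : F), ∀ v ∈ T, a • v ∈ T) :
    T.card = (q - 1) * {p : Submodule F V | finrank F p = 1 ∧ ∀ v ∈ p, v ∈ T}.ncard + 1 := by
  haveI : Fintype (Submodule F V) := Fintype.ofFinite _
  have e : {p : Submodule F V | finrank F p = 1 ∧ ∀ v ∈ p, v ∈ T} =
      ((Finset.univ.filter (fun p : Submodule F V => finrank F p = 1 ∧ ∀ v ∈ p, v ∈ T)) :
      Set (Submodule F V)) := by ext π; simp
  rw [e, Set.ncard_coe_finset, ← Finset.card_erase_add_one h0]
  congr 1
  apply card_fiber hq _ (fun v => Submodule.span F {v})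
  · intro m hm
    obtain ⟨hm0, hmT⟩ := Finset.mem_erase.1 hm
    simp only [Finset.mem_filter, Finset.mem_univ, true_and]
    refine ⟨finrank_span_singleton hm0, fun v hv => ?_⟩
    obtain ⟨c, rfl⟩ := Submodule.mem_span_singleton.1 hv
    exact hT c m hmT
  · intro p hp
    simp only [Finset.mem_filter, Finset.mem_univ, true_and] at hp
    obtain ⟨hp1, hp2⟩ := hp
    obtain ⟨m0, hm0, hm⟩ := finrank_eq_one_iff'.1 hp1
    have hm00 : (m0 : V) ≠ 0 := fun hh => hm0 (Subtype.ext hh)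
    refine ⟨m0, hm00, fun m => ?_⟩
    constructor
    · rintro ⟨h1, h2⟩
      have hmp : m ∈ p := by rw [← h2]; exact Submodule.mem_span_singleton_self m
      obtain ⟨c, hc⟩ := hm ⟨m, hmp⟩
      have hc' : c • (m0 : V) = m := congrArg Subtype.val hc
      refine ⟨c, ?_, hc'.symm⟩
      rintro rfl
      rw [zero_smul] at hc'
      exact (Finset.mem_erase.1 h1).1 hc'.symm
    · rintro ⟨a, ha, rfl⟩
      refine ⟨Finset.mem_erase.2 ⟨smul_ne_zero ha hm00, hp2 _ (p.smul_mem a m0.2)⟩, ?_⟩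
      apply Submodule.eq_of_le_of_finrank_eq
      · rw [Submodule.span_singleton_le_iff_mem]; exact p.smul_mem a m0.2
      · rw [finrank_span_singleton (smul_ne_zero ha hm00), hp1]

lemma finrank_ker_inf {x y : Dual F V} (hy : y ≠ 0) (hxy : ∀ a : F, x ≠ a • y) :
    finrank F (LinearMap.ker y ⊓ LinearMap.ker x : Submodule F V) + 2 = finrank F V := by
  have h1 := Module.Dual.finrank_ker_add_one_of_ne_zero hy
  have h2 : x.comp (LinearMap.ker y).subtype ≠ 0 := by
    intro hh
    obtain ⟨a, ha⟩ := exists_smul_of_ker hy (l' := x) (fun v hv =>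
      LinearMap.congr_fun hh (⟨v, hv⟩ : LinearMap.ker y))
    exact hxy a ha
  have h3 := Module.Dual.finrank_ker_add_one_of_ne_zero (K := F) (f := x.comp (LinearMap.ker y).subtype) h2
  rw [← Submodule.map_comap_subtype, Submodule.finrank_map_subtype_eq, ← LinearMap.ker_comp]
  omega

lemma mem_pair_of_ker {x y e : Dual F V} (he : LinearMap.ker y ⊓ LinearMap.ker x ≤ LinearMap.ker e) :
    ∃ a b : F, e = a • x + b • y := by
  have h : ⨅ i : Bool, LinearMap.ker (cond i x y) ≤ LinearMap.ker e := by
    refine le_trans ?_ he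
    exact le_inf (iInf_le _ false) (iInf_le _ true)
  have := mem_span_of_iInf_ker_le_ker (L := fun i : Bool => (cond i x y : Dual F V)) h
  have hr : Set.range (fun i : Bool => (cond i x y : Dual F V)) = {x, y} := by
    ext z; simp [eq_comm, or_comm]
  rw [hr] at this
  obtain ⟨a, b, hab⟩ := Submodule.mem_span_pair.1 this
  exact ⟨a, b, hab.symm⟩

/-- the dual cone of functionals whose kernel is not in `S` -/
noncomputable def cone (S : Set (Submodule F V)) : Finset (Dual F V) :=
  Finset.univ.filter (fun e => LinearMap.ker e ∉ S)

lemma mem_cone {S : Set (Submodule F V)} {e : Dual F V} : e ∈ cone S ↔ LinearMap.ker e ∉ S := by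
  simp [cone]

lemma hyp_cone (hn : 2 ≤ n) (hq : Fintype.card F = q) (hq2 : 2 < q) (hV : finrank F V = 2 * n + 2)
    (S : Set (Submodule F V)) (hhyp : ∀ π ∈ S, finrank F π = 2 * n + 1)
    (hP1 : ∀ p : Submodule F V, finrank F p = 1 →
      {π ∈ S | p ≤ π}.ncard = q^n * (q^n + 1) ∨ {π ∈ S | p ≤ π}.ncard = q^(2*n))
    (hP2 : ∀ W : Submodule F V, finrank F W = 2*n →
      (∃ π ∈ S, W ≤ π) → q - 1 ≤ {π ∈ S | W ≤ π}.ncard) : Hyp F n q (cone S) := by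
  have hhyp' : ∀ π ∈ S, finrank F π + 1 = finrank F V := fun π hπ => by rw [hhyp π hπ, hV]
  have hz : (0 : Dual F V) ∈ cone S := by
    rw [mem_cone, LinearMap.ker_zero]
    intro hh
    have := hhyp _ hh
    rw [finrank_top] at this; omega
  have hsm : ∀ (c : F) (z : Dual F V), z ∈ cone S → c • z ∈ cone S := by
    intro c z hzz
    by_cases hc : c = 0
    · rw [hc]
      convert hz
      ext v; simp
    · rw [mem_cone, ker_smul_ne z hc]; exact mem_cone.1 hzz
  refine ⟨hn, hq, hq2, ?_, hz, hsm, ?_, ?_⟩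
  · rw [Subspace.dual_finrank_eq, hV]
  · intro x hx y hy hxy c
    by_contra hcon
    have hcS : LinearMap.ker (x + c • y) ∈ S := by
      by_contra hh; exact hcon (mem_cone.2 hh)
    have hy0 : y ≠ 0 := by
      rintro rfl
      apply hcon
      rw [smul_zero, add_zero]; exact hx
    have hxay : ∀ a : F, x ≠ a • y := by
      intro a ha
      apply hcon
      have : x + c • y = (a + c) • y := by rw [ha, add_smul]
      rw [this]; exact hsm _ _ hy
    have hd := finrank_ker_inf hy0 hxay
    have hle : LinearMap.ker y ⊓ LinearMap.ker x ≤ LinearMap.ker (x + c • y) := by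
      intro v hv
      obtain ⟨h1, h2⟩ := Submodule.mem_inf.1 hv
      rw [LinearMap.mem_ker] at *
      simp [h1, h2]
    have h2 := hP2 (LinearMap.ker y ⊓ LinearMap.ker x) (by omega) ⟨_, hcS, hle⟩
    have h3 := ker_count hq S hhyp' (LinearMap.ker y ⊓ LinearMap.ker x)
    have hF : (Finset.univ.erase (0 : F)).card = q - 1 := by
      rw [Finset.card_erase_of_mem (Finset.mem_univ _), Finset.card_univ, hq]
    have h4 : (Finset.univ.filter (fun e : Dual F V => LinearMap.ker e ∈ S ∧
        LinearMap.ker y ⊓ LinearMap.ker x ≤ LinearMap.ker e)) ⊆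
        (((Finset.univ.erase (0 : F)) ×ˢ (Finset.univ.erase (0 : F))).erase (1, 1)).image
          (fun ab => ab.1 • x + ab.2 • y) := by
      intro e he
      simp only [Finset.mem_filter, Finset.mem_univ, true_and] at he
      obtain ⟨heS, he⟩ := he
      obtain ⟨a, b, rfl⟩ := mem_pair_of_ker he
      refine Finset.mem_image.2 ⟨(a, b), ?_, rfl⟩
      simp only [Finset.mem_erase, Finset.mem_product, Finset.mem_univ, and_true]
      refine ⟨?_, ?_, ?_⟩
      · intro hab
        rw [Prod.mk.injEq] at hab
        obtain ⟨rfl, rfl⟩ := hab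
        rw [one_smul, one_smul] at heS
        exact mem_cone.1 hxy heS
      · rintro rfl
        have e0 : (0 : F) • x + b • y = b • y := by rw [zero_smul, zero_add]
        rw [e0] at heS
        exact mem_cone.1 (hsm b y hy) heS
      · rintro rfl
        have e0 : a • x + (0 : F) • y = a • x := by rw [zero_smul, add_zero]
        rw [e0] at heS
        exact mem_cone.1 (hsm a x hx) heS
    have h5 := (Finset.card_le_card h4).trans Finset.card_image_le
    rw [h3, Finset.card_erase_of_mem (by simp), Finset.card_product, hF] at h5
    have h6 : (q - 1) * (q - 1) ≤ (q - 1) * {π ∈ S | LinearMap.ker y ⊓ LinearMap.ker x ≤ π}.ncard :=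
      Nat.mul_le_mul_left _ h2
    have h7 : 0 < (q - 1) * (q - 1) := Nat.mul_pos (by omega) (by omega)
    omega
  · intro l hl
    obtain ⟨v, rfl⟩ := (Module.evalEquiv F V).surjective l
    have hv0 : v ≠ 0 := by rintro rfl; simp at hl
    have h1 := finrank_span_singleton (K := F) hv0
    have h2 := ker_count hq S hhyp' (Submodule.span F {v})
    have h3 := ann_card (Submodule.span F {v} : Submodule F V)
    have h4 := Finset.card_filter_add_card_filter_not (s := ann (Submodule.span F {v} : Submodule F V))
      (fun e => LinearMap.ker e ∈ S)
    have hann : ∀ e : Dual F V, e ∈ ann (Submodule.span F {v} : Submodule F V) ↔ e v = 0 := by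
      intro e
      simp only [ann, Finset.mem_filter, Finset.mem_univ, true_and]
      constructor
      · intro hh; exact hh v (Submodule.mem_span_singleton_self v)
      · intro hh k hk
        obtain ⟨c, rfl⟩ := Submodule.mem_span_singleton.1 hk
        simp [hh]
    have e1 : (ann (Submodule.span F {v} : Submodule F V)).filter (fun e => LinearMap.ker e ∈ S) =
        Finset.univ.filter (fun e : Dual F V => LinearMap.ker e ∈ S ∧ Submodule.span F {v} ≤ LinearMap.ker e) := by
      ext e
      rw [Finset.mem_filter, hann]
      simp only [Finset.mem_filter, Finset.mem_univ, true_and, Submodule.span_singleton_le_iff_mem,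
        LinearMap.mem_ker]
      tauto
    have e2 : (ann (Submodule.span F {v} : Submodule F V)).filter (fun e => ¬ LinearMap.ker e ∈ S) =
        (cone S).filter (fun e => (Module.evalEquiv F V v) e = 0) := by
      ext e
      rw [Finset.mem_filter, hann, Finset.mem_filter, mem_cone]
      simp only [Module.evalEquiv_apply, Module.Dual.eval_apply]
      tauto
    rw [e1, e2, h2] at h4
    change _ + sec (cone S) (Module.evalEquiv F V v) = _ at h4
    rw [h1, hV, hq] at h3
    have hq1 : 1 ≤ q := by omega
    zify [hq1] at h3 h4
    have hq0 : (q : ℤ) ≠ 0 := by positivity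
    have h5 : ((ann (Submodule.span F {v} : Submodule F V)).card : ℤ) = q * ((q : ℤ) ^ n) ^ 2 := by
      apply mul_right_cancel₀ hq0
      linear_combination h3
    rw [h5] at h4
    rcases hP1 _ h1 with h6 | h6
    · right
      rw [h6] at h4
      push_cast at h4
      linear_combination h4
    · left
      rw [h6] at h4
      push_cast at h4
      rw [pow_mul'] at h4
      linear_combination h4

end
end EllQ


namespace EllQ
open Module
set_option linter.unusedSectionVars false

section
open Classical

theorem main {F : Type} [Field F] [Fintype F] {V : Type} [AddCommGroup V] [Module F V] [Finite V]
    (n q : ℕ) (hn : 2 ≤ n) (hq : Fintype.card F = q) (hq2 : 2 < q)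
    (hV : finrank F V = 2 * n + 2)
    (S : Set (Submodule F V)) (hhyp : ∀ π ∈ S, finrank F π = 2 * n + 1)
    (hP1 : ∀ p : Submodule F V, finrank F p = 1 →
      {π ∈ S | p ≤ π}.ncard = q^n * (q^n + 1) ∨ {π ∈ S | p ≤ π}.ncard = q^(2*n))
    (hP2 : ∀ W : Submodule F V, finrank F W = 2*n →
      (∃ π ∈ S, W ≤ π) → q - 1 ≤ {π ∈ S | W ≤ π}.ncard) :
    ∃ φ : QuadraticForm F V,
      (∀ x, (∀ y, φ (x + y) - φ x - φ y = 0) → x = 0) ∧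
      (¬ ∃ W : Submodule F V, finrank F W = n+1 ∧ ∀ v ∈ W, φ v = 0) ∧
      S = {π : Submodule F V | finrank F π = 2*n+1 ∧
        {p : Submodule F V | finrank F p = 1 ∧ p ≤ π ∧ ∀ v ∈ p, φ v = 0}.ncard
          = (q^(2*n) - 1)/(q - 1)} := by
  haveI : Fintype V := Fintype.ofFinite V
  haveI : Module.Finite F V := Module.Finite.of_finite
  haveI : Finite (Dual F V) := DFunLike.finite _
  haveI : Fintype (Dual F V) := Fintype.ofFinite _
  haveI : Finite (Dual F (Dual F V)) := DFunLike.finite _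
  haveI : Fintype (Dual F (Dual F V)) := Fintype.ofFinite _
  have h := hyp_cone hn hq hq2 hV S hhyp hP1 hP2
  obtain ⟨Φ, hΦ⟩ := h.exists_quad
  have hinj : Function.Injective (QuadraticMap.polarBilin Φ) := by
    rw [← LinearMap.ker_eq_bot, LinearMap.ker_eq_bot']
    intro r hr
    exact h.nondeg hΦ hr
  let B : Dual F V ≃ₗ[F] Dual F (Dual F V) :=
    LinearEquiv.ofInjectiveOfFinrankEq (QuadraticMap.polarBilin Φ) hinj
      (Subspace.dual_finrank_eq).symm
  let ψ : V ≃ₗ[F] Dual F V := (Module.evalEquiv F V).trans B.symm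
  have hψ : ∀ v e, QuadraticMap.polarBilin Φ (ψ v) e = e v := by
    intro v e
    have : B (ψ v) = Module.evalEquiv F V v := by simp [ψ]
    have h2 : B (ψ v) e = e v := by rw [this]; simp
    exact h2
  refine ⟨Φ.comp ψ.toLinearMap, ?_, ?_, ?_⟩
  · intro x hx
    have : QuadraticMap.polarBilin Φ (ψ x) = 0 := by
      ext e
      obtain ⟨y, rfl⟩ := ψ.surjective e
      have := hx y
      simpa [QuadraticMap.polar] using this
    have := h.nondeg hΦ this
    simpa using this
  · rintro ⟨W, hW, hWφ⟩
    refine h.no_max hΦ (W.map ψ.toLinearMap) ?_ ?_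
    · rw [← hW]; exact LinearEquiv.finrank_map_eq ψ W
    · rintro _ ⟨v, hv, rfl⟩
      exact hWφ v hv
  · have key : ∀ e : Dual F V, e ≠ 0 → (LinearMap.ker e ∈ S ↔
        {p : Submodule F V | finrank F p = 1 ∧ p ≤ LinearMap.ker e ∧
          ∀ v ∈ p, Φ.comp ψ.toLinearMap v = 0}.ncard = (q^(2*n) - 1)/(q - 1)) := by
      intro e he
      let T : Finset V := Finset.univ.filter (fun v => e v = 0 ∧ Φ (ψ v) = 0)
      have hset : {p : Submodule F V | finrank F p = 1 ∧ p ≤ LinearMap.ker e ∧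
          ∀ v ∈ p, Φ.comp ψ.toLinearMap v = 0} =
          {p : Submodule F V | finrank F p = 1 ∧ ∀ v ∈ p, v ∈ T} := by
        ext p
        simp only [Set.mem_setOf_eq, T, Finset.mem_filter, Finset.mem_univ, true_and]
        constructor
        · rintro ⟨a, b, c⟩; exact ⟨a, fun v hv => ⟨b hv, c v hv⟩⟩
        · rintro ⟨a, b⟩; exact ⟨a, fun v hv => (b v hv).1, fun v hv => (b v hv).2⟩
      have hc := point_count hq T (by simp [T]) (by
        intro a v hv
        simp only [T, Finset.mem_filter, Finset.mem_univ, true_and] at hv ⊢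
        rw [map_smul, map_smul, hv.1, QuadraticMap.map_smul, hv.2]; simp)
      have hsec : sec (cone S) (QuadraticMap.polarBilin Φ e) = T.card := by
        symm
        unfold sec
        refine Finset.card_bij (fun v _ => ψ v) ?_ ?_ ?_
        · intro v hv
          simp only [T, Finset.mem_filter, Finset.mem_univ, true_and] at hv ⊢
          refine ⟨(hΦ _).2 hv.2, ?_⟩
          have h3 := hψ v e
          rw [hv.1] at h3
          simp only [QuadraticMap.polarBilin_apply_apply] at h3 ⊢
          rw [QuadraticMap.polar_comm]; exact h3
        · intro a _ b _ hab; exact ψ.injective hab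
        · intro b hb
          obtain ⟨v, rfl⟩ := ψ.surjective b
          simp only [Finset.mem_filter] at hb
          refine ⟨v, ?_, rfl⟩
          simp only [T, Finset.mem_filter, Finset.mem_univ, true_and]
          refine ⟨?_, (hΦ _).1 hb.1⟩
          rw [← hψ v e]
          have h3 := hb.2
          simp only [QuadraticMap.polarBilin_apply_apply] at h3 ⊢
          rw [QuadraticMap.polar_comm]; exact h3
      have hb := h.big_iff hΦ he
      rw [mem_cone, not_not, hsec] at hb
      rw [← hb, hset]
      have hd : q - 1 ∣ q^(2*n) - 1 := by simpa using Nat.sub_dvd_pow_sub_pow q 1 (2*n)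
      obtain ⟨k, hk⟩ := hd
      have hpos : 0 < q - 1 := by omega
      have hpow : 1 ≤ q^(2*n) := Nat.one_le_pow _ _ (by omega)
      rw [hk, Nat.mul_div_cancel_left _ hpos]
      have e1 : ((T.card : ℤ) = ((q:ℤ)^n)^2) ↔ T.card = q^(2*n) := by
        rw [← pow_mul, mul_comm n 2]; norm_cast
      rw [e1, hc]
      have e2 : q^(2*n) = (q-1)*k+1 := by omega
      rw [e2, Nat.add_right_cancel_iff]
      constructor
      · intro hh; exact Nat.eq_of_mul_eq_mul_left hpos hh
      · intro hh; rw [hh]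
    ext π
    constructor
    · intro hπ
      have hf := hhyp π hπ
      obtain ⟨e, he, rfl⟩ := exists_ker π (by rw [hf, hV])
      exact ⟨hf, (key e he).1 hπ⟩
    · rintro ⟨hf, hcnt⟩
      obtain ⟨e, he, rfl⟩ := exists_ker π (by rw [hf, hV])
      exact (key e he).2 hcnt

end
end EllQ


/-- For `n ≥ 2` and prime power `q > 2`, a nonempty family `S` of hyperplanes
of `PG(2n+1,q)` satisfying (P1⁻) and (P2) is the family of parabolic hyperplanes of some
nonsingular elliptic quadric `Q⁻(2n+1,q)`. -/
theorem stmt_1 (n : ℕ) (hn : 2 ≤ n)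
    (F : Type) [Field F] [Fintype F] (q : ℕ) (hq : Fintype.card F = q) (hq2 : 2 < q)
    (S : Set (Submodule F (Fin (2*n+2) → F)))
    (hS : S.Nonempty)
    (hhyp : ∀ π ∈ S, Module.finrank F π = 2*n+1)
    (hP1 : ∀ p : Submodule F (Fin (2*n+2) → F), Module.finrank F p = 1 →
      {π ∈ S | p ≤ π}.ncard = q^n * (q^n + 1) ∨ {π ∈ S | p ≤ π}.ncard = q^(2*n))
    (hP2 : ∀ W : Submodule F (Fin (2*n+2) → F), Module.finrank F W = 2*n →
      (∃ π ∈ S, W ≤ π) → q - 1 ≤ {π ∈ S | W ≤ π}.ncard) :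
    ∃ φ : QuadraticForm F (Fin (2*n+2) → F),
      (∀ x, (∀ y, φ (x + y) - φ x - φ y = 0) → x = 0) ∧
      (¬ ∃ W : Submodule F (Fin (2*n+2) → F), Module.finrank F W = n+1 ∧ ∀ v ∈ W, φ v = 0) ∧
      S = {π : Submodule F (Fin (2*n+2) → F) | Module.finrank F π = 2*n+1 ∧
        {p : Submodule F (Fin (2*n+2) → F) |
          Module.finrank F p = 1 ∧ p ≤ π ∧ ∀ v ∈ p, φ v = 0}.ncard = (q^(2*n) - 1)/(q - 1)} := by
  exact EllQ.main n q hn hq hq2 (by simp) S hhyp hP1 hP2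
end

section
/- Let q be any prime power and let Σ be a nonempty family of planes of PG(3,q) such that every point of PG(3,q) lies in exactly q²−q or exactly q² planes of Σ, and every line of PG(3,q) that is contained in at least one plane of Σ is contained in at least q−1 planes of Σ. Then there exists a nonsingular hyperbolic quadratic form φ on F^4, with hyperbolic quadric Q, such that Σ is exactly the set of all planes of PG(3,q) containing exactly q+1 points of Q, i.e. the planes meeting Q in an irreducible conic. -/
open Module Submodule

namespace HQ

section basics

variable {F : Type} [Field F]

/-- The orthogonal complement with respect to the dot product. -/
def oc (U : Submodule F (Fin 4 → F)) : Submodule F (Fin 4 → F) :=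
  LinearMap.BilinForm.orthogonal (dotProductBilin F F) U

theorem mem_oc {U : Submodule F (Fin 4 → F)} {v : Fin 4 → F} :
    v ∈ oc U ↔ ∀ u ∈ U, u ⬝ᵥ v = 0 := by
  unfold oc
  rw [LinearMap.BilinForm.mem_orthogonal_iff]
  rfl

theorem mem_oc_span {w v : Fin 4 → F} : v ∈ oc (span F {w}) ↔ w ⬝ᵥ v = 0 := by
  rw [mem_oc]
  constructor
  · intro h
    exact h w (mem_span_singleton_self w)
  · intro h u hu
    obtain ⟨a, rfl⟩ := mem_span_singleton.1 hu
    rw [smul_dotProduct, h, smul_zero]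

theorem mem_oc_span_comm {w v : Fin 4 → F} : v ∈ oc (span F {w}) ↔ w ∈ oc (span F {v}) := by
  rw [mem_oc_span, mem_oc_span, dotProduct_comm]

theorem dot_nondeg : LinearMap.BilinForm.Nondegenerate
    (dotProductBilin F F : LinearMap.BilinForm F (Fin 4 → F)) := by
  constructor
  · intro x hx
    exact dotProduct_eq_zero x (fun w => hx w)
  · intro x hx
    refine dotProduct_eq_zero x (fun w => ?_)
    rw [dotProduct_comm]
    exact hx w

theorem dot_refl : LinearMap.BilinForm.IsRefl
    (dotProductBilin F F : LinearMap.BilinForm F (Fin 4 → F)) := by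
  intro x y h
  have h' : x ⬝ᵥ y = 0 := h
  show y ⬝ᵥ x = 0
  rw [dotProduct_comm, h']

theorem finrank_oc (U : Submodule F (Fin 4 → F)) : finrank F (oc U) + finrank F U = 4 := by
  have h := LinearMap.BilinForm.finrank_orthogonal (dot_nondeg (F := F)) U
  have h2 : finrank F U ≤ finrank F (Fin 4 → F) := Submodule.finrank_le U
  rw [Module.finrank_fin_fun] at h h2
  unfold oc
  omega

theorem oc_oc (U : Submodule F (Fin 4 → F)) : oc (oc U) = U :=
  LinearMap.BilinForm.orthogonal_orthogonal dot_nondeg dot_refl U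

theorem oc_le {U W : Submodule F (Fin 4 → F)} (h : U ≤ W) : oc W ≤ oc U :=
  LinearMap.BilinForm.orthogonal_le h

theorem le_oc_comm {U W : Submodule F (Fin 4 → F)} : U ≤ oc W ↔ W ≤ oc U := by
  constructor
  · intro h
    have := oc_le h
    rwa [oc_oc] at this
  · intro h
    have := oc_le h
    rwa [oc_oc] at this

theorem oc_bot : oc (⊥ : Submodule F (Fin 4 → F)) = ⊤ := by
  ext x
  simp [mem_oc]

theorem finrank_oc_span {w : Fin 4 → F} (hw : w ≠ 0) : finrank F (oc (span F {w})) = 3 := by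
  have h := finrank_oc (span F {w})
  rw [finrank_span_singleton hw] at h
  omega

/-- every one-dimensional subspace is the span of a nonzero vector -/
theorem exists_span {p : Submodule F (Fin 4 → F)} (hp : finrank F p = 1) :
    ∃ w, w ≠ 0 ∧ p = span F {w} := by
  obtain ⟨⟨w, hwp⟩, hw0, hw⟩ := finrank_eq_one_iff'.1 hp
  refine ⟨w, ?_, ?_⟩
  · intro h
    apply hw0
    ext1
    exact h
  · apply le_antisymm
    · intro x hx
      obtain ⟨c, hc⟩ := hw ⟨x, hx⟩
      rw [mem_span_singleton]
      exact ⟨c, congrArg Subtype.val hc⟩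
    · rw [span_singleton_le_iff_mem]
      exact hwp

theorem exists_oc {p : Submodule F (Fin 4 → F)} (hp : finrank F p = 3) :
    ∃ w, w ≠ 0 ∧ p = oc (span F {w}) := by
  have h := finrank_oc p
  obtain ⟨w, hw, hp'⟩ := exists_span (p := oc p) (by omega)
  exact ⟨w, hw, by rw [← hp', oc_oc]⟩

theorem finrank_pair {x y : Fin 4 → F} (hx : x ≠ 0) (hy : y ∉ span F {x}) :
    finrank F (span F {x, y}) = 2 := by
  have hli : LinearIndependent F ![x, y] := by
    rw [LinearIndependent.pair_iff' hx]
    intro a ha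
    exact hy (mem_span_singleton.2 ⟨a, ha⟩)
  have := finrank_span_eq_card hli
  rw [Matrix.range_cons, Matrix.range_cons, Matrix.range_empty, Set.union_empty,
    Set.singleton_union] at this
  exact this.trans (by simp)

end basics

section counting

variable {F : Type} [Field F] [Fintype F]

theorem two_le_card : 2 ≤ Fintype.card F := Fintype.one_lt_card

theorem ncard_sub (U : Submodule F (Fin 4 → F)) :
    (U : Set (Fin 4 → F)).ncard = Fintype.card F ^ finrank F U := by
  classical
  rw [← Nat.card_coe_set_eq, ← Nat.card_eq_fintype_card]
  exact Module.natCard_eq_pow_finrank (K := F) (V := U)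

/-- hyperplane section of a subspace -/
theorem card_hyper (U : Submodule F (Fin 4 → F)) (w : Fin 4 → F) (hw : w ∉ oc U) :
    Fintype.card F * ((U ⊓ oc (span F {w}) : Submodule F (Fin 4 → F)) : Set (Fin 4 → F)).ncard
      = (U : Set (Fin 4 → F)).ncard := by
  have h1 : finrank F (U ⊓ oc (span F {w}) : Submodule F (Fin 4 → F)) + 1 = finrank F U := by
    have hw0 : w ≠ 0 := by
      rintro rfl
      exact hw (zero_mem _)
    have h2 := Submodule.finrank_sup_add_finrank_inf_eq U (oc (span F {w}))
    have h3 := finrank_oc_span hw0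
    have h4 : finrank F (U ⊔ oc (span F {w}) : Submodule F (Fin 4 → F)) = 4 := by
      have h5 : oc (span F {w}) < U ⊔ oc (span F {w}) := by
        rw [right_lt_sup]
        intro h
        apply hw
        have := oc_le h
        rw [oc_oc] at this
        exact this (mem_span_singleton_self w)
      have h6 := Submodule.finrank_lt_finrank_of_lt h5
      have h7 := Submodule.finrank_le (U ⊔ oc (span F {w}))
      rw [Module.finrank_fin_fun] at h7
      omega
    omega
  rw [ncard_sub, ncard_sub, ← h1, pow_succ, mul_comm]

/-- points of a cone -/
theorem cone_card (C : Set (Fin 4 → F)) (h0 : (0 : Fin 4 → F) ∈ C)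
    (hsm : ∀ (a : F), ∀ x ∈ C, a • x ∈ C) :
    (Fintype.card F - 1) * {p : Submodule F (Fin 4 → F) | finrank F p = 1 ∧ (p : Set _) ⊆ C}.ncard
      + 1 = C.ncard := by
  classical
  set P := {p : Submodule F (Fin 4 → F) | finrank F p = 1 ∧ (p : Set (Fin 4 → F)) ⊆ C} with hP
  have hPf : P.Finite := Set.toFinite _
  have hCf : (C \ {0}).Finite := Set.toFinite _
  have h1 : (C \ {0}).ncard + 1 = C.ncard := Set.ncard_sdiff_singleton_add_one h0
  rw [← h1, Set.ncard_eq_toFinset_card _ hPf, Set.ncard_eq_toFinset_card _ hCf]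
  congr 1
  have hmaps : ∀ x ∈ hCf.toFinset, span F {x} ∈ hPf.toFinset := by
    intro x hx
    rw [Set.Finite.mem_toFinset] at hx ⊢
    refine ⟨finrank_span_singleton hx.2, ?_⟩
    intro y hy
    obtain ⟨a, rfl⟩ := mem_span_singleton.1 hy
    exact hsm a x hx.1
  rw [Finset.card_eq_sum_card_fiberwise hmaps]
  rw [Finset.sum_const_nat (m := Fintype.card F - 1), mul_comm]
  intro p hp
  rw [Set.Finite.mem_toFinset] at hp
  have h2 : ((hCf.toFinset.filter (fun x => span F {x} = p) : Finset (Fin 4 → F)) :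
      Set (Fin 4 → F)) = (p : Set (Fin 4 → F)) \ {0} := by
    ext x
    simp only [Finset.coe_filter, Set.Finite.mem_toFinset, Set.mem_ofPred_eq, Set.mem_sdiff,
      Set.mem_singleton_iff, SetLike.mem_coe]
    constructor
    · rintro ⟨⟨-, h⟩, rfl⟩
      exact ⟨mem_span_singleton_self x, h⟩
    · rintro ⟨hx, h⟩
      refine ⟨⟨hp.2 hx, h⟩, ?_⟩
      apply Submodule.eq_of_le_of_finrank_eq
      · rw [span_singleton_le_iff_mem]
        exact hx
      · rw [finrank_span_singleton h, hp.1]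
  rw [← Set.ncard_coe_finset, h2]
  have h3 := ncard_sub p
  rw [hp.1, pow_one] at h3
  rw [Set.ncard_sdiff_singleton_of_mem (zero_mem p), h3]

open Classical in
/-- The number of elements of `A` orthogonal to `v`. -/
noncomputable def ff (A : Set (Fin 4 → F)) (v : Fin 4 → F) : ℕ :=
  (A ∩ (oc (span F {v}) : Set (Fin 4 → F))).ncard

open Classical in
/-- double counting -/
theorem star (A : Set (Fin 4 → F)) (U : Submodule F (Fin 4 → F)) :
    Fintype.card F * ∑ v ∈ (U : Set (Fin 4 → F)).toFinset, ff A v =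
      (U : Set (Fin 4 → F)).ncard *
        ((Fintype.card F - 1) * (A ∩ (oc U : Set (Fin 4 → F))).ncard + A.ncard) := by
  have e1 : ∑ v ∈ (U : Set (Fin 4 → F)).toFinset, ff A v =
      ∑ w ∈ A.toFinset,
        ((U ⊓ oc (span F {w}) : Submodule F (Fin 4 → F)) : Set (Fin 4 → F)).ncard := by
    have := Finset.sum_card_bipartiteAbove_eq_sum_card_bipartiteBelow
      (s := (U : Set (Fin 4 → F)).toFinset) (t := A.toFinset) (fun v w => v ⬝ᵥ w = 0)
    convert this using 2 with v hv w hw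
    · unfold ff
      rw [Set.ncard_eq_toFinset_card']
      congr 1
      ext w
      simp [Finset.bipartiteAbove, mem_oc_span]
    · rw [Set.ncard_eq_toFinset_card']
      congr 1
      ext v
      simp [Finset.bipartiteBelow, mem_oc_span, dotProduct_comm]
  rw [e1, Finset.mul_sum]
  have e2 : ∀ w ∈ A.toFinset, Fintype.card F *
      ((U ⊓ oc (span F {w}) : Submodule F (Fin 4 → F)) : Set (Fin 4 → F)).ncard =
      (U : Set (Fin 4 → F)).ncard + 
        if w ∈ oc U then (U : Set (Fin 4 → F)).ncard * (Fintype.card F - 1) else 0 := by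
    intro w hw
    split_ifs with h
    · have : U ⊓ oc (span F {w}) = U := by
        rw [inf_eq_left, le_oc_comm, span_singleton_le_iff_mem]
        exact h
      rw [this]
      obtain ⟨k, hk⟩ : ∃ k, Fintype.card F = k + 1 := ⟨_, (Nat.succ_pred_eq_of_pos
        Fintype.card_pos).symm⟩
      rw [hk, Nat.add_sub_cancel]
      ring
    · rw [card_hyper U w h, add_zero]
  rw [Finset.sum_congr rfl e2, Finset.sum_add_distrib, ← Finset.sum_filter, Finset.sum_const,
    Finset.sum_const]
  have e3 : (A ∩ (oc U : Set (Fin 4 → F))).ncard = (A.toFinset.filter (· ∈ oc U)).card := by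
    rw [Set.ncard_eq_toFinset_card']
    congr 1
    ext w
    simp
  rw [e3, ← Set.ncard_eq_toFinset_card']
  simp only [smul_eq_mul]
  ring

end counting


section structural

variable {F : Type} [Field F] [Fintype F]

/-- The combinatorial hypotheses on the cone `A`. -/
structure Good (A : Set (Fin 4 → F)) : Prop where
  zero : (0 : Fin 4 → F) ∈ A
  smul : ∀ (a : F), ∀ x ∈ A, a • x ∈ A
  h1 : ∀ v, v ≠ 0 → ff A v = Fintype.card F ^ 2 ∨
    ff A v + Fintype.card F = 2 * Fintype.card F ^ 2
  h2 : ∀ L : Submodule F (Fin 4 → F), finrank F L = 2 → (L : Set (Fin 4 → F)) ⊆ A ∨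
    (A ∩ (L : Set (Fin 4 → F))).ncard + 1 ≤ 2 * Fintype.card F

theorem ncard_univ4 : (Set.univ : Set (Fin 4 → F)).ncard = Fintype.card F ^ 4 := by
  have := ncard_sub (⊤ : Submodule F (Fin 4 → F))
  rw [finrank_top, Module.finrank_fin_fun] at this
  simpa only [Submodule.top_coe] using this

theorem ff_zero (A : Set (Fin 4 → F)) : ff A 0 = A.ncard := by
  unfold ff
  rw [span_zero_singleton, oc_bot]
  simp

theorem oc_top : oc (⊤ : Submodule F (Fin 4 → F)) = ⊥ := by
  rw [← oc_bot, oc_oc]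

namespace Good

variable {A : Set (Fin 4 → F)} (hA : Good A)
include hA

theorem ncard_inter_bot : (A ∩ ((⊥ : Submodule F (Fin 4 → F)) : Set (Fin 4 → F))).ncard = 1 := by
  rw [Submodule.bot_coe, Set.inter_eq_right.2 (Set.singleton_subset_iff.2 hA.zero), Set.ncard_singleton]

theorem span_sub {w : Fin 4 → F} (hw : w ∈ A) : (span F {w} : Set (Fin 4 → F)) ⊆ A := by
  intro x hx
  obtain ⟨a, rfl⟩ := mem_span_singleton.1 hx
  exact hA.smul a w hw

theorem ncard_inter_span {w : Fin 4 → F} (hw : w ∈ A) (hw0 : w ≠ 0) :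
    (A ∩ (span F {w} : Set (Fin 4 → F))).ncard = Fintype.card F := by
  rw [Set.inter_eq_right.2 (hA.span_sub hw), ncard_sub, finrank_span_singleton hw0, pow_one]

theorem ncard_inter_span' {w : Fin 4 → F} (hw : w ∉ A) :
    (A ∩ (span F {w} : Set (Fin 4 → F))).ncard = 1 := by
  have : A ∩ (span F {w} : Set (Fin 4 → F)) = {0} := by
    ext x
    constructor
    · rintro ⟨hx, hx'⟩
      obtain ⟨a, rfl⟩ := mem_span_singleton.1 hx'
      by_cases ha : a = 0
      · simp [ha]
      · exfalso
        apply hw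
        have := hA.smul a⁻¹ _ hx
        rwa [smul_smul, inv_mul_cancel₀ ha, one_smul] at this
    · rintro rfl
      exact ⟨hA.zero, zero_mem _⟩
  rw [this, Set.ncard_singleton]

open Classical in
theorem second_moment : ∑ v : Fin 4 → F, ff A v * ff A v =
    ∑ w ∈ A.toFinset, ∑ v ∈ (oc (span F {w}) : Set (Fin 4 → F)).toFinset, ff A v := by
  have : ∀ v : Fin 4 → F, ff A v * ff A v =
      ∑ w ∈ (A ∩ (oc (span F {v}) : Set (Fin 4 → F))).toFinset, ff A v := by
    intro v
    rw [Finset.sum_const, ← Set.ncard_eq_toFinset_card', smul_eq_mul]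
    rfl
  rw [Finset.sum_congr rfl (fun v _ => this v)]
  apply Finset.sum_comm'
  intro v w
  simp only [Finset.mem_univ, Set.mem_toFinset, Set.mem_inter_iff, SetLike.mem_coe, true_and]
  rw [mem_oc_span_comm, and_comm]

theorem ncard_A : A.ncard + Fintype.card F = Fintype.card F ^ 3 + Fintype.card F ^ 2 := by
  classical
  have hq := two_le_card (F := F)
  set q := Fintype.card F with hqd
  have s1 := star A ⊤
  rw [oc_top, hA.ncard_inter_bot, ← hqd] at s1
  have hu : (((⊤ : Submodule F (Fin 4 → F)) : Set (Fin 4 → F)).toFinset) = Finset.univ := by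
    ext; simp
  rw [hu, Submodule.top_coe, ncard_univ4, ← hqd] at s1
  have s2 := hA.second_moment
  set S1 := ∑ v : Fin 4 → F, ff A v with hS1
  set S2 := ∑ v : Fin 4 → F, ff A v * ff A v with hS2
  have hc := cone_card A hA.zero hA.smul
  rw [← hqd] at hc
  set n := {p : Submodule F (Fin 4 → F) | finrank F p = 1 ∧ (p : Set (Fin 4 → F)) ⊆ A}.ncard
  obtain ⟨k, hk⟩ : ∃ k, q = k + 1 := ⟨q - 1, by omega⟩
  have hk1 : q - 1 = k := by omega
  rw [hk1] at hc s1
  have hk0 : 1 ≤ k := by omega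
  -- second moment evaluated
  have s3 : q * S2 = q ^ 4 * (k + A.ncard) + (k * n) * (q ^ 3 * (k * q + A.ncard)) := by
    rw [s2, Finset.mul_sum]
    have hmem : (0 : Fin 4 → F) ∈ A.toFinset := by simpa using hA.zero
    rw [← Finset.add_sum_erase _ _ hmem]
    congr 1
    · rw [span_zero_singleton, oc_bot, hu, ← hS1, s1]
      ring
    · rw [Finset.sum_const_nat (m := q ^ 3 * (k * q + A.ncard))]
      · rw [Finset.card_erase_of_mem hmem, ← Set.ncard_eq_toFinset_card', ← hc,
          Nat.add_sub_cancel]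
      · intro w hw
        simp only [Finset.mem_erase, Set.mem_toFinset] at hw
        have := star A (oc (span F {w}))
        rw [← hqd, oc_oc, hA.ncard_inter_span hw.2 hw.1, ncard_sub, finrank_oc_span hw.1,
          ← hqd, hk1] at this
        exact this
  -- vanishing product
  have s4 : ∑ v : Fin 4 → F, ((ff A v : ℤ) - q ^ 2) * ((ff A v : ℤ) - (2 * q ^ 2 - q)) =
      ((A.ncard : ℤ) - q ^ 2) * ((A.ncard : ℤ) - (2 * q ^ 2 - q)) := by
    rw [Finset.sum_eq_single (0 : Fin 4 → F)]
    · rw [ff_zero]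
    · intro v _ hv
      rcases hA.h1 v hv with h | h
      · rw [h]; push_cast; ring
      · have h' : (ff A v : ℤ) + q = 2 * q ^ 2 := by exact_mod_cast h
        have h'' : (ff A v : ℤ) - (2 * q ^ 2 - q) = 0 := by linarith
        rw [h'', mul_zero]
    · simp
  have s5 : ∑ v : Fin 4 → F, ((ff A v : ℤ) - q ^ 2) * ((ff A v : ℤ) - (2 * q ^ 2 - q)) =
      (S2 : ℤ) - (3 * q ^ 2 - q) * S1 + q ^ 2 * (2 * q ^ 2 - q) * q ^ 4 := by
    have : ∀ v : Fin 4 → F, ((ff A v : ℤ) - q ^ 2) * ((ff A v : ℤ) - (2 * q ^ 2 - q)) =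
      (ff A v : ℤ) * ff A v - (3 * q ^ 2 - q) * ff A v + q ^ 2 * (2 * q ^ 2 - q) := by
      intro v; ring
    rw [Finset.sum_congr rfl (fun v _ => this v), Finset.sum_add_distrib, Finset.sum_sub_distrib,
      ← Finset.mul_sum, Finset.sum_const, Finset.card_univ]
    have hcv : Fintype.card (Fin 4 → F) = q ^ 4 := by simp [hqd]
    rw [hcv, hS1, hS2]
    push_cast
    rw [nsmul_eq_mul]
    push_cast
    ring
  rw [s4] at s5
  have t1 : (q : ℤ) * S1 = q ^ 4 * (k * 1 + A.ncard) := by exact_mod_cast s1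
  have t3 : (q : ℤ) * S2 = q ^ 4 * (k + A.ncard) + (k * n) * (q ^ 3 * (k * q + A.ncard)) := by
    exact_mod_cast s3
  have tN : (A.ncard : ℤ) = k * n + 1 := by exact_mod_cast hc.symm
  have tq : (q : ℤ) = k + 1 := by exact_mod_cast hk
  have key : ((n : ℤ) - (q + 1) ^ 2) * ((q + 1) * n - (2 * q + 1) * (q ^ 2 + 1)) = 0 := by
    have hne : (q : ℤ) * k ^ 3 ≠ 0 := by
      have : (0 : ℤ) < q := by omega
      have : (0 : ℤ) < k := by omega
      positivity
    apply mul_left_cancel₀ hne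
    rw [mul_zero]
    have e := congrArg (fun z => (q : ℤ) * z) s5
    have e2 : (q : ℤ) * ((S2 : ℤ) - (3 * q ^ 2 - q) * S1 + q ^ 2 * (2 * q ^ 2 - q) * q ^ 4) =
      q * S2 - (3 * q ^ 2 - q) * (q * S1) + q * (q ^ 2 * (2 * q ^ 2 - q) * q ^ 4) := by ring
    rw [e2, t1, t3, tN, tq] at e
    rw [tq]
    linear_combination (-1) * e
  rcases mul_eq_zero.1 key with h | h
  · zify
    have : (n : ℤ) = (q + 1) ^ 2 := by linarith
    rw [tN, this, tq]
    ring
  · exfalso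
    have h' : ((q : ℤ) + 1) ∣ 2 := by
      refine ⟨(2 * q ^ 2 - q + 3) - n, ?_⟩
      linear_combination h
    have := Int.le_of_dvd (by norm_num) h'
    omega

/-- big vectors -/
def _root_.HQ.GG (A : Set (Fin 4 → F)) : Set (Fin 4 → F) :=
  {v | v = 0 ∨ ff A v + Fintype.card F = 2 * Fintype.card F ^ 2}

theorem ncard_G (U : Submodule F (Fin 4 → F)) :
    (Fintype.card F : ℤ) * (Fintype.card F ^ 2 * (U : Set (Fin 4 → F)).ncard
      + (Fintype.card F ^ 2 - Fintype.card F) * (GG A ∩ (U : Set (Fin 4 → F))).ncard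
      + Fintype.card F ^ 3 - Fintype.card F ^ 2) =
    (U : Set (Fin 4 → F)).ncard *
        ((Fintype.card F - 1) * (A ∩ (oc U : Set (Fin 4 → F))).ncard
          + Fintype.card F ^ 3 + Fintype.card F ^ 2 - Fintype.card F) := by
  classical
  have hq := two_le_card (F := F)
  have s1 := star A U
  have hN := hA.ncard_A
  set q := Fintype.card F with hqd
  have hN' : (A.ncard : ℤ) = q ^ 3 + q ^ 2 - q := by
    have : (A.ncard : ℤ) + q = q ^ 3 + q ^ 2 := by exact_mod_cast hN
    linarith
  have e : ∀ v ∈ (U : Set (Fin 4 → F)).toFinset, (ff A v : ℤ) = q ^ 2 +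
      (if v ∈ GG A then ((q : ℤ) ^ 2 - q) else 0) +
      (if v = 0 then ((q : ℤ) ^ 3 - q ^ 2) else 0) := by
    intro v _
    by_cases hv : v = 0
    · have : v ∈ GG A := Or.inl hv
      rw [if_pos this, if_pos hv, hv, ff_zero, hN']
      ring
    · rw [if_neg hv]
      by_cases hG : v ∈ GG A
      · rw [if_pos hG]
        rcases hG with h | h
        · exact absurd h hv
        · have : (ff A v : ℤ) + q = 2 * q ^ 2 := by exact_mod_cast h
          linarith
      · rw [if_neg hG]
        rcases hA.h1 v hv with h | h
        · rw [h]; push_cast; ring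
        · exact absurd (Or.inr h) hG
  have e2 : (∑ v ∈ (U : Set (Fin 4 → F)).toFinset, (ff A v : ℤ)) =
      (q ^ 2 * (U : Set (Fin 4 → F)).ncard
      + (q ^ 2 - q) * (GG A ∩ (U : Set (Fin 4 → F))).ncard
      + q ^ 3 - q ^ 2) := by
    rw [Finset.sum_congr rfl e, Finset.sum_add_distrib, Finset.sum_add_distrib,
      Finset.sum_ite_eq', if_pos (by simp), ← Finset.sum_filter, Finset.sum_const,
      Finset.sum_const]
    have e3 : (GG A ∩ (U : Set (Fin 4 → F))).ncard =
        ((U : Set (Fin 4 → F)).toFinset.filter (· ∈ GG A)).card := by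
      rw [Set.ncard_eq_toFinset_card']
      congr 1
      ext w
      simp [and_comm]
    rw [e3, ← Set.ncard_eq_toFinset_card', nsmul_eq_mul, nsmul_eq_mul]
    ring
  rw [← e2]
  obtain ⟨k, hk⟩ : ∃ k, q = k + 1 := ⟨q - 1, by omega⟩
  have hk1 : q - 1 = k := by omega
  rw [hk1] at s1
  have tq : (q : ℤ) = k + 1 := by exact_mod_cast hk
  have t1 : (q : ℤ) * (∑ v ∈ (U : Set (Fin 4 → F)).toFinset, (ff A v : ℤ)) =
    (U : Set (Fin 4 → F)).ncard * (k * (A ∩ (oc U : Set (Fin 4 → F))).ncard + A.ncard) := by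
    exact_mod_cast s1
  rw [t1, hN', tq]
  ring

theorem qq_pos : (0 : ℤ) < Fintype.card F * (Fintype.card F ^ 2 - Fintype.card F) := by
  have hq := two_le_card (F := F)
  have : (2 : ℤ) ≤ Fintype.card F := by exact_mod_cast hq
  have h2 : (0 : ℤ) < (Fintype.card F : ℤ) - 1 := by linarith
  have : (Fintype.card F : ℤ) ^ 2 - Fintype.card F = Fintype.card F * (Fintype.card F - 1) := by
    ring
  rw [this]
  positivity

theorem ncard_G_univ : (GG A).ncard = A.ncard := by
  have h := hA.ncard_G ⊤
  rw [oc_top, hA.ncard_inter_bot, Submodule.top_coe, ncard_univ4, Set.inter_univ] at h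
  have hN : (A.ncard : ℤ) + Fintype.card F = Fintype.card F ^ 3 + Fintype.card F ^ 2 := by
    exact_mod_cast hA.ncard_A
  have hp := hA.qq_pos
  zify
  apply mul_left_cancel₀ hp.ne'
  push_cast at h
  have hN' := eq_sub_of_add_eq hN
  rw [hN']
  linear_combination h

theorem ncard_G_A {w : Fin 4 → F} (hw : w ∈ A) (hw0 : w ≠ 0) :
    (GG A ∩ (oc (span F {w}) : Set (Fin 4 → F))).ncard + Fintype.card F
      = 2 * Fintype.card F ^ 2 := by
  have h := hA.ncard_G (oc (span F {w}))
  rw [oc_oc, hA.ncard_inter_span hw hw0, ncard_sub, finrank_oc_span hw0] at h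
  have hp := hA.qq_pos
  zify
  apply mul_left_cancel₀ hp.ne'
  push_cast at h
  linear_combination h

theorem ncard_G_not {w : Fin 4 → F} (hw : w ∉ A) :
    (GG A ∩ (oc (span F {w}) : Set (Fin 4 → F))).ncard = Fintype.card F ^ 2 := by
  have hw0 : w ≠ 0 := by
    rintro rfl
    exact hw hA.zero
  have h := hA.ncard_G (oc (span F {w}))
  rw [oc_oc, hA.ncard_inter_span' hw, ncard_sub, finrank_oc_span hw0] at h
  have hp := hA.qq_pos
  zify
  apply mul_left_cancel₀ hp.ne'
  push_cast at h
  linear_combination h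

theorem line_G {L : Submodule F (Fin 4 → F)} (hL : finrank F L = 2)
    (hLA : (L : Set (Fin 4 → F)) ⊆ A) : (oc L : Set (Fin 4 → F)) ⊆ GG A := by
  have h := hA.ncard_G (oc L)
  have h2 : finrank F (oc L) = 2 := by
    have := finrank_oc L
    omega
  rw [oc_oc, Set.inter_eq_right.2 hLA, ncard_sub, ncard_sub, hL, h2] at h
  have hp := hA.qq_pos
  have h3 : (GG A ∩ (oc L : Set (Fin 4 → F))).ncard = (oc L : Set (Fin 4 → F)).ncard := by
    rw [ncard_sub, h2]
    zify
    apply mul_left_cancel₀ hp.ne'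
    push_cast at h
    linear_combination h
  have h4 := Set.eq_of_subset_of_ncard_le (Set.inter_subset_right) h3.ge
  exact Set.inter_eq_right.1 h4

end Good

end structural


section lines

variable {F : Type} [Field F] [Fintype F]

namespace Good

variable {A : Set (Fin 4 → F)} (hA : Good A)
include hA

/-- A line with three points in `A` lies in `A`. -/
theorem three {x y : Fin 4 → F} (hx0 : x ≠ 0) (hx : x ∈ A) (hy : y ∈ A) (hyx : y ∉ span F {x})
    {a : F} (ha : a ≠ 0) (hz : y + a • x ∈ A) : (span F {x, y} : Set (Fin 4 → F)) ⊆ A := by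
  have hq := two_le_card (F := F)
  rcases hA.h2 _ (finrank_pair hx0 hyx) with h | h
  · exact h
  · exfalso
    have hy0 : y ≠ 0 := by
      rintro rfl
      exact hyx (zero_mem _)
    have hz0 : y + a • x ≠ 0 := by
      intro h0
      apply hyx
      rw [mem_span_singleton]
      exact ⟨-a, by rw [neg_smul]; exact (eq_neg_of_add_eq_zero_left h0).symm⟩
    have hxL : x ∈ span F {x, y} := subset_span (by simp)
    have hyL : y ∈ span F {x, y} := subset_span (by simp)
    have hzL : y + a • x ∈ span F {x, y} := add_mem hyL (smul_mem _ _ hxL)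
    have hsub : (span F {x} : Set (Fin 4 → F)) ∪ ((span F {y} : Set (Fin 4 → F)) \ {0}) ∪
        ((span F {y + a • x} : Set (Fin 4 → F)) \ {0}) ⊆
        A ∩ (span F {x, y} : Set (Fin 4 → F)) := by
      have aux : ∀ t, t ∈ A → t ∈ span F {x, y} → (span F {t} : Set (Fin 4 → F)) ⊆
          A ∩ (span F {x, y} : Set (Fin 4 → F)) := by
        intro t h1 h2
        refine Set.subset_inter (hA.span_sub h1) ?_
        rw [SetLike.coe_subset_coe, span_singleton_le_iff_mem]
        exact h2
      refine Set.union_subset (Set.union_subset (aux x hx hxL) ?_) ?_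
      · exact Set.sdiff_subset.trans (aux y hy hyL)
      · exact Set.sdiff_subset.trans (aux _ hz hzL)
    have hle := Set.ncard_le_ncard hsub (Set.toFinite _)
    have key : ∀ t : Fin 4 → F, t ≠ 0 → (span F {t} : Set (Fin 4 → F)).ncard = Fintype.card F := by
      intro t ht
      rw [ncard_sub, finrank_span_singleton ht, pow_one]
    rw [Set.ncard_union_eq, Set.ncard_union_eq, Set.ncard_sdiff_singleton_of_mem (zero_mem _),
      Set.ncard_sdiff_singleton_of_mem (zero_mem _), key x hx0, key y hy0, key _ hz0] at hle
    · omega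
    · rw [Set.disjoint_left]
      rintro t h1 ⟨h2, h3⟩
      obtain ⟨b, rfl⟩ := mem_span_singleton.1 h2
      apply hyx
      have hb : b ≠ 0 := by
        rintro rfl
        simp at h3
      have := smul_mem _ b⁻¹ h1
      rwa [smul_smul, inv_mul_cancel₀ hb, one_smul] at this
    · rw [Set.disjoint_left]
      rintro t h1 ⟨h2, h3⟩
      obtain ⟨b, rfl⟩ := mem_span_singleton.1 h2
      have hb : b ≠ 0 := by
        rintro rfl
        simp at h3
      rcases h1 with h1 | ⟨h1, -⟩
      · have := smul_mem _ b⁻¹ h1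
        rw [smul_smul, inv_mul_cancel₀ hb, one_smul] at this
        apply hyx
        have h5 := sub_mem this (smul_mem _ a (mem_span_singleton_self x))
        rwa [add_sub_cancel_right] at h5
      · have := smul_mem _ b⁻¹ h1
        rw [smul_smul, inv_mul_cancel₀ hb, one_smul] at this
        obtain ⟨c, hc⟩ := mem_span_singleton.1 this
        apply hyx
        rw [mem_span_singleton]
        have h6 : a • x = (c - 1) • y := by
          rw [sub_smul, hc, one_smul, add_sub_cancel_left]
        have hc1 : c - 1 ≠ 0 := by
          intro h7
          rw [h7, zero_smul] at h6
          rcases smul_eq_zero.1 h6 with h8 | h8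
          · exact ha h8
          · exact hx0 h8
        exact ⟨(c - 1)⁻¹ * a, by rw [mul_smul, h6, smul_smul, inv_mul_cancel₀ hc1, one_smul]⟩

/-- Every point of `A` in a big plane lies on a line of `A` in that plane. -/
theorem exists_line {v x : Fin 4 → F} (hv : v ∈ GG A) (hv0 : v ≠ 0) (hx : x ∈ A) (hx0 : x ≠ 0)
    (hxv : x ∈ oc (span F {v})) : ∃ L : Submodule F (Fin 4 → F), finrank F L = 2 ∧ x ∈ L ∧
      L ≤ oc (span F {v}) ∧ (L : Set (Fin 4 → F)) ⊆ A := by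
  have hq := two_le_card (F := F)
  by_contra hcon
  push Not at hcon
  have hf : ff A v + Fintype.card F = 2 * Fintype.card F ^ 2 := by
    rcases hv with h | h
    · exact absurd h hv0
    · exact h
  set W := oc (span F {v}) with hW
  set X := span F {x} with hX
  have hXW : X ≤ W := by
    rw [hX, span_singleton_le_iff_mem]
    exact hxv
  have hinj : Set.InjOn (X.mkQ) ((A ∩ (W : Set (Fin 4 → F))) \ (X : Set (Fin 4 → F))) := by
    rintro y ⟨⟨hyA, hyW⟩, hyX⟩ y' ⟨⟨hyA', hyW'⟩, hyX'⟩ h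
    by_contra hne
    have h2 : y' - y ∈ X := by
      rw [← Submodule.Quotient.eq]
      exact h.symm
    obtain ⟨a, ha⟩ := mem_span_singleton.1 h2
    have ha0 : a ≠ 0 := by
      rintro rfl
      rw [zero_smul] at ha
      exact hne (sub_eq_zero.1 ha.symm).symm
    have hz : y + a • x ∈ A := by
      rw [ha, add_sub_cancel]
      exact hyA'
    refine hcon (span F {x, y}) (finrank_pair hx0 hyX) (subset_span (by simp)) ?_
      (hA.three hx0 hx hyA hyX ha0 hz)
    rw [span_le]
    intro t ht
    rcases ht with rfl | rfl
    · exact hxv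
    · exact hyW
  have hfin : Finite ((Fin 4 → F) ⧸ X) := Finite.of_surjective _ (Submodule.mkQ_surjective X)
  have himg : X.mkQ '' ((A ∩ (W : Set (Fin 4 → F))) \ (X : Set (Fin 4 → F))) ⊆
      ((W.map X.mkQ : Submodule F _) : Set ((Fin 4 → F) ⧸ X)) \ {0} := by
    rintro _ ⟨y, ⟨⟨hyA, hyW⟩, hyX⟩, rfl⟩
    refine ⟨Submodule.mem_map_of_mem hyW, ?_⟩
    intro h
    apply hyX
    have h' : X.mkQ y = 0 := h
    rwa [Submodule.mkQ_apply, Submodule.Quotient.mk_eq_zero] at h'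
  have hle := Set.ncard_le_ncard himg (Set.toFinite _)
  rw [Set.InjOn.ncard_image hinj, Set.ncard_sdiff_singleton_of_mem (zero_mem _)] at hle
  have hfr : finrank F (W.map X.mkQ) = 2 := by
    have h1 := LinearMap.finrank_range_add_finrank_ker (X.mkQ.domRestrict W)
    rw [LinearMap.range_domRestrict, LinearMap.ker_domRestrict, Submodule.ker_mkQ] at h1
    change _ + finrank F (X.submoduleOf W) = _ at h1
    rw [(Submodule.submoduleOfEquivOfLe hXW).finrank_eq, finrank_oc_span hv0,
      finrank_span_singleton hx0] at h1
    omega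
  have hcard : ((W.map X.mkQ : Submodule F _) : Set ((Fin 4 → F) ⧸ X)).ncard
      = Fintype.card F ^ 2 := by
    rw [← Nat.card_coe_set_eq, ← Nat.card_eq_fintype_card, ← hfr]
    exact Module.natCard_eq_pow_finrank (K := F) (V := W.map X.mkQ)
  rw [hcard] at hle
  have hXA : (X : Set (Fin 4 → F)) ⊆ A ∩ (W : Set (Fin 4 → F)) :=
    Set.subset_inter (hA.span_sub hx) hXW
  have h5 := Set.ncard_sdiff_add_ncard_of_subset hXA
  have h6 : (X : Set (Fin 4 → F)).ncard = Fintype.card F := by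
    rw [ncard_sub, finrank_span_singleton hx0, pow_one]
  have h7 : (A ∩ (W : Set (Fin 4 → F))).ncard = ff A v := rfl
  rw [h6, h7] at h5
  have h8 : 2 * Fintype.card F ≤ Fintype.card F ^ 2 := by nlinarith
  have h9 : Fintype.card F ^ 2 + 1 > 2 * Fintype.card F := by omega
  omega

/-- Two distinct lines of `A` in a plane make up all of `A` in that plane. -/
theorem two_lines {v : Fin 4 → F} (hv0 : v ≠ 0) {L M : Submodule F (Fin 4 → F)}
    (hL : finrank F L = 2) (hM : finrank F M = 2) (hLM : L ≠ M)
    (hLv : L ≤ oc (span F {v})) (hMv : M ≤ oc (span F {v}))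
    (hLA : (L : Set (Fin 4 → F)) ⊆ A) (hMA : (M : Set (Fin 4 → F)) ⊆ A) :
    A ∩ (oc (span F {v}) : Set (Fin 4 → F)) = (L : Set (Fin 4 → F)) ∪ (M : Set (Fin 4 → F)) := by
  have hq := two_le_card (F := F)
  symm
  apply Set.eq_of_subset_of_ncard_le
  · apply Set.union_subset
    · exact Set.subset_inter hLA hLv
    · exact Set.subset_inter hMA hMv
  · have h1 := Set.ncard_union_add_ncard_inter (L : Set (Fin 4 → F)) (M : Set (Fin 4 → F))
    have h2 : ((L : Set (Fin 4 → F)) ∩ (M : Set (Fin 4 → F))).ncard ≤ Fintype.card F := by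
      rw [← Submodule.coe_inf, ncard_sub]
      have h3 : L ⊓ M < L := by
        rw [inf_lt_left]
        intro h
        exact hLM (Submodule.eq_of_le_of_finrank_eq h (by omega))
      have h4 := Submodule.finrank_lt_finrank_of_lt h3
      calc Fintype.card F ^ finrank F (L ⊓ M : Submodule F (Fin 4 → F))
          ≤ Fintype.card F ^ 1 := Nat.pow_le_pow_right (by omega) (by omega)
        _ = _ := pow_one _
    rw [ncard_sub, ncard_sub, hL, hM] at h1
    have h5 : ff A v + Fintype.card F ≤ 2 * Fintype.card F ^ 2 := by
      rcases hA.h1 v hv0 with h | h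
      · rw [h]
        nlinarith
      · exact h.le
    have h6 : (A ∩ (oc (span F {v}) : Set (Fin 4 → F))).ncard = ff A v := rfl
    rw [h6]
    omega
  · exact Set.toFinite _

/-- The transversal lemma. -/
theorem transversal {L : Submodule F (Fin 4 → F)} (hL : finrank F L = 2)
    (hLA : (L : Set (Fin 4 → F)) ⊆ A) {x : Fin 4 → F} (hx : x ∈ A) (hxL : x ∉ L) :
    ∃ z ∈ L, z ≠ 0 ∧ ∀ (a : F), ∀ y ∈ L, (a • x + y ∈ A ↔ a = 0 ∨ ∃ b : F, y = b • z) := by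
  have hx0 : x ≠ 0 := by
    rintro rfl
    exact hxL (zero_mem _)
  have hfr : finrank F (L ⊔ span F {x} : Submodule F (Fin 4 → F)) ≤ 3 := by
    have := Submodule.finrank_add_le_finrank_add_finrank L (span F {x})
    rw [hL, finrank_span_singleton hx0] at this
    exact this
  obtain ⟨v, hv, hv0⟩ : ∃ v ∈ oc (L ⊔ span F {x}), v ≠ 0 := by
    apply Submodule.exists_mem_ne_zero_of_ne_bot
    intro h
    have h2 := finrank_oc (L ⊔ span F {x})
    rw [h, finrank_bot] at h2
    omega
  have hle : L ⊔ span F {x} ≤ oc (span F {v}) := by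
    rw [le_oc_comm, span_singleton_le_iff_mem]
    exact hv
  have hLv : L ≤ oc (span F {v}) := le_sup_left.trans hle
  have hxv : x ∈ oc (span F {v}) := hle (le_sup_right (a := L) (mem_span_singleton_self x))
  have hvG : v ∈ GG A := hA.line_G hL hLA (oc_le le_sup_left hv)
  obtain ⟨M, hM, hxM, hMv, hMA⟩ := hA.exists_line hvG hv0 hx hx0 hxv
  have hLM : L ≠ M := by
    rintro rfl
    exact hxL hxM
  have hset := hA.two_lines hv0 hL hM hLM hLv hMv hLA hMA
  obtain ⟨z, hz, hz0⟩ : ∃ z ∈ L ⊓ M, z ≠ 0 := by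
    apply Submodule.exists_mem_ne_zero_of_ne_bot
    intro h
    have h2 := Submodule.finrank_sup_add_finrank_inf_eq L M
    rw [h, finrank_bot, hL, hM] at h2
    have h3 := Submodule.finrank_mono (sup_le hLv hMv)
    rw [finrank_oc_span hv0] at h3
    omega
  have hzx : z ∉ span F {x} := by
    intro h
    obtain ⟨a, ha⟩ := mem_span_singleton.1 h
    have ha0 : a ≠ 0 := by
      rintro rfl
      rw [zero_smul] at ha
      exact hz0 ha.symm
    apply hxL
    have := smul_mem L a⁻¹ hz.1
    rwa [← ha, smul_smul, inv_mul_cancel₀ ha0, one_smul] at this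
  have hMspan : span F {x, z} = M := by
    apply Submodule.eq_of_le_of_finrank_eq
    · rw [span_le]
      intro t ht
      rcases ht with rfl | rfl
      · exact hxM
      · exact hz.2
    · rw [finrank_pair hx0 hzx, hM]
  refine ⟨z, hz.1, hz0, ?_⟩
  intro a y hy
  constructor
  · intro h
    by_cases ha : a = 0
    · exact Or.inl ha
    · right
      have hmem : a • x + y ∈ A ∩ (oc (span F {v}) : Set (Fin 4 → F)) :=
        ⟨h, add_mem (smul_mem _ a hxv) (hLv hy)⟩
      rw [hset] at hmem
      have hnot : ∀ c : F, c • x ∈ L → c = 0 := by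
        intro c hc
        by_contra hc0
        apply hxL
        have := smul_mem L c⁻¹ hc
        rwa [smul_smul, inv_mul_cancel₀ hc0, one_smul] at this
      rcases hmem with h1 | h1
      · exfalso
        apply ha
        apply hnot
        have := sub_mem h1 hy
        rwa [add_sub_cancel_right] at this
      · have h1' : a • x + y ∈ M := h1
        rw [← hMspan, mem_span_pair] at h1'
        obtain ⟨c, d, hcd⟩ := h1'
        have h3 : (c - a) • x = y - d • z := by
          rw [sub_smul, sub_eq_sub_iff_add_eq_add, hcd, add_comm]
        have h4 : c - a = 0 := by
          apply hnot
          rw [h3]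
          exact sub_mem hy (smul_mem _ _ hz.1)
        rw [h4, zero_smul] at h3
        exact ⟨d, (sub_eq_zero.1 h3.symm)⟩
  · rintro (rfl | ⟨b, rfl⟩)
    · rw [zero_smul, zero_add]
      exact hLA hy
    · apply hMA
      exact add_mem (smul_mem _ _ hxM) (smul_mem _ _ hz.2)

end Good

end lines


section coords

variable {F : Type} [Field F] [Fintype F]

theorem line_span {L : Submodule F (Fin 4 → F)} (hL : finrank F L = 2) {x y : Fin 4 → F}
    (hx : x ∈ L) (hx0 : x ≠ 0) (hy : y ∈ L) (hyx : y ∉ span F {x}) : L = span F {x, y} := by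
  symm
  apply Submodule.eq_of_le_of_finrank_eq
  · rw [span_le]
    intro t ht
    rcases ht with rfl | rfl
    · exact hx
    · exact hy
  · rw [finrank_pair hx0 hyx, hL]

theorem exists_off {L : Submodule F (Fin 4 → F)} (hL : finrank F L = 2) (x : Fin 4 → F) :
    ∃ y ∈ L, y ∉ span F {x} := by
  by_contra h
  push Not at h
  have h1 : L ≤ span F {x} := h
  have h2 := Submodule.finrank_mono h1
  have h3 : finrank F (span F {x}) ≤ 1 := by
    by_cases hx : x = 0
    · rw [hx, span_zero_singleton, finrank_bot]
      omega
    · rw [finrank_span_singleton hx]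
  omega

namespace Good

variable {A : Set (Fin 4 → F)} (hA : Good A)
include hA

theorem smul_iff {a : F} (ha : a ≠ 0) (x : Fin 4 → F) : a • x ∈ A ↔ x ∈ A := by
  constructor
  · intro h
    have := hA.smul a⁻¹ _ h
    rwa [smul_smul, inv_mul_cancel₀ ha, one_smul] at this
  · exact hA.smul a x

theorem transversal' {L : Submodule F (Fin 4 → F)} (hL : finrank F L = 2)
    (hLA : (L : Set (Fin 4 → F)) ⊆ A) {x : Fin 4 → F} (hx : x ∈ A) (hxL : x ∉ L)
    {u : Fin 4 → F} (hu : u ∈ L) (hu0 : u ≠ 0) (hxu : x + u ∈ A) :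
    ∀ (a : F), ∀ y ∈ L, (a • x + y ∈ A ↔ a = 0 ∨ ∃ b : F, y = b • u) := by
  obtain ⟨z, hz, hz0, h⟩ := hA.transversal hL hLA hx hxL
  have h1 := (h 1 u hu).1 (by rwa [one_smul])
  rcases h1 with h1 | ⟨c, hc⟩
  · exact absurd h1 one_ne_zero
  have hc0 : c ≠ 0 := by
    rintro rfl
    rw [zero_smul] at hc
    exact hu0 hc
  intro a y hy
  rw [h a y hy]
  apply or_congr_right
  constructor
  · rintro ⟨b, rfl⟩
    exact ⟨b * c⁻¹, by rw [hc, smul_smul, mul_assoc, inv_mul_cancel₀ hc0, mul_one]⟩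
  · rintro ⟨b, rfl⟩
    exact ⟨b * c, by rw [hc, smul_smul]⟩

theorem exists_a_line : ∃ L : Submodule F (Fin 4 → F), finrank F L = 2 ∧
    (L : Set (Fin 4 → F)) ⊆ A := by
  have hq := two_le_card (F := F)
  have h8 : 2 * Fintype.card F ≤ Fintype.card F ^ 2 := by nlinarith
  obtain ⟨v, hv, hv0⟩ : ∃ v ∈ GG A, v ≠ 0 := by
    have h1 := hA.ncard_A
    rw [← hA.ncard_G_univ] at h1
    have h2 : 1 < (GG A).ncard := by
      have : 0 < Fintype.card F ^ 3 := by positivity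
      omega
    exact Set.exists_ne_of_one_lt_ncard h2 0
  have hf : ff A v + Fintype.card F = 2 * Fintype.card F ^ 2 := by
    rcases hv with h | h
    · exact absurd h hv0
    · exact h
  obtain ⟨x, hx, hx0⟩ : ∃ x ∈ A ∩ (oc (span F {v}) : Set (Fin 4 → F)), x ≠ 0 := by
    apply Set.exists_ne_of_one_lt_ncard
    have h6 : (A ∩ (oc (span F {v}) : Set (Fin 4 → F))).ncard = ff A v := rfl
    rw [h6]
    omega
  obtain ⟨L, h1, -, -, h2⟩ := hA.exists_line hv hv0 hx.1 hx0 hx.2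
  exact ⟨L, h1, h2⟩

theorem second_line {L : Submodule F (Fin 4 → F)} (hL : finrank F L = 2)
    (hLA : (L : Set (Fin 4 → F)) ⊆ A) {w : Fin 4 → F} (hw : w ∈ L) (hw0 : w ≠ 0) :
    ∃ M : Submodule F (Fin 4 → F), finrank F M = 2 ∧ (M : Set (Fin 4 → F)) ⊆ A ∧ w ∈ M ∧
      M ≠ L := by
  have hq := two_le_card (F := F)
  have h1 := hA.ncard_G_A (hLA hw) hw0
  have h2 : (oc L : Set (Fin 4 → F)).ncard = Fintype.card F ^ 2 := by
    have := finrank_oc L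
    rw [ncard_sub]
    congr 1
    omega
  obtain ⟨v, hv, hvL⟩ : ∃ v ∈ GG A ∩ (oc (span F {w}) : Set (Fin 4 → F)),
      v ∉ (oc L : Set (Fin 4 → F)) := by
    have hlt : (oc L : Set (Fin 4 → F)).ncard <
        (GG A ∩ (oc (span F {w}) : Set (Fin 4 → F))).ncard := by
      rw [h2]
      have : 2 * Fintype.card F ≤ Fintype.card F ^ 2 := by nlinarith
      omega
    exact Set.exists_mem_notMem_of_ncard_lt_ncard hlt (Set.toFinite _)
  have hv0 : v ≠ 0 := by
    rintro rfl
    exact hvL (zero_mem _)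
  obtain ⟨M, hM, hwM, hMv, hMA⟩ := hA.exists_line hv.1 hv0 (hLA hw) hw0 (mem_oc_span_comm.1 hv.2)
  refine ⟨M, hM, hMA, hwM, ?_⟩
  rintro rfl
  apply hvL
  have := le_oc_comm.1 hMv
  exact this (mem_span_singleton_self v)

theorem exists_frame : ∃ w1 w2 w3 w4 : Fin 4 → F,
    (∀ a b c d : F, a • w1 + b • w2 + c • w3 + d • w4 = 0 → a = 0 ∧ b = 0 ∧ c = 0 ∧ d = 0) ∧
    (∀ a b c d : F, a • w1 + b • w2 + c • w3 + d • w4 ∈ A ↔ a * d = b * c) := by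
  obtain ⟨L, hL, hLA⟩ := hA.exists_a_line
  obtain ⟨w1, hw1, hw10⟩ := exists_off hL 0
  have hw10 : w1 ≠ 0 := by
    rintro rfl
    exact hw10 (zero_mem _)
  obtain ⟨w2, hw2, hw21⟩ := exists_off hL w1
  have hw20 : w2 ≠ 0 := by
    rintro rfl
    exact hw21 (zero_mem _)
  have hw12 : ∀ a b : F, a • w1 = b • w2 → b = 0 := by
    intro a b h
    by_contra hb
    apply hw21
    rw [mem_span_singleton]
    exact ⟨b⁻¹ * a, by rw [mul_smul, h, smul_smul, inv_mul_cancel₀ hb, one_smul]⟩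
  obtain ⟨M1, hM1, hM1A, hwM1, hM1L⟩ := hA.second_line hL hLA hw1 hw10
  obtain ⟨M2, hM2, hM2A, hwM2, hM2L⟩ := hA.second_line hL hLA hw2 hw20
  obtain ⟨w3, hw3, hw31⟩ := exists_off hM1 w1
  have hw3L : w3 ∉ L := by
    intro h
    apply hM1L
    rw [line_span hM1 hwM1 hw10 hw3 hw31, line_span hL hw1 hw10 h hw31]
  have fact1 := hA.transversal' hL hLA (hM1A hw3) hw3L hw1 hw10 (hM1A (add_mem hw3 hwM1))
  have no32 : ∀ c : F, c ≠ 0 → w3 + c • w2 ∉ A := by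
    intro c hc h
    have := (fact1 1 (c • w2) (smul_mem _ _ hw2)).1 (by rwa [one_smul])
    rcases this with h1 | ⟨b, hb⟩
    · exact one_ne_zero h1
    · exact hc (hw12 b c hb.symm)
  have hw3M2 : w3 ∉ M2 := by
    intro h
    apply no32 1 one_ne_zero
    rw [one_smul]
    exact hM2A (add_mem h hwM2)
  obtain ⟨w4, hw4, hw40, fact4⟩ := hA.transversal hM2 hM2A (hM1A hw3) hw3M2
  have hw42 : w4 ∉ span F {w2} := by
    intro h
    obtain ⟨c, hc⟩ := mem_span_singleton.1 h
    apply no32 c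
    · rintro rfl
      rw [zero_smul] at hc
      exact hw40 hc.symm
    · rw [hc]
      have := (fact4 1 w4 hw4).2 (Or.inr ⟨1, by rw [one_smul]⟩)
      rwa [one_smul] at this
  have hw43 : w4 ∉ span F {w3} := by
    intro h
    obtain ⟨c, hc⟩ := mem_span_singleton.1 h
    apply hw3M2
    have hc0 : c ≠ 0 := by
      rintro rfl
      rw [zero_smul] at hc
      exact hw40 hc.symm
    have := smul_mem M2 c⁻¹ hw4
    rwa [← hc, smul_smul, inv_mul_cancel₀ hc0, one_smul] at this
  have hw30 : w3 ≠ 0 := by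
    rintro rfl
    exact hw3L (zero_mem _)
  have hM2s := line_span hM2 hwM2 hw20 hw4 hw42
  have hL34 : finrank F (span F {w3, w4}) = 2 := finrank_pair hw30 hw43
  have hL34A : (span F {w3, w4} : Set (Fin 4 → F)) ⊆ A := by
    intro t ht
    obtain ⟨a, b, rfl⟩ := mem_span_pair.1 ht
    exact (fact4 a (b • w4) (smul_mem _ _ hw4)).2 (Or.inr ⟨b, rfl⟩)
  have hw4n : ∀ a b c : F, w4 ≠ a • w3 + (b • w1 + c • w2) := by
    intro a b c h
    have hmem : ∀ b c : F, b • w1 + c • w2 ∈ L := fun b c =>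
      add_mem (smul_mem _ _ hw1) (smul_mem _ _ hw2)
    have ha : a ≠ 0 := by
      rintro rfl
      rw [zero_smul, zero_add] at h
      apply hM2L
      rw [hM2s, line_span hL hw2 hw20 (by rw [h]; exact hmem b c) hw42]
    have h1 : ∀ d : F, ∃ e : F, b • w1 + (c + d) • w2 = e • w1 := by
      intro d
      have h2 : a • w3 + (b • w1 + (c + d) • w2) ∈ A := by
        have h3 : a • w3 + (b • w1 + (c + d) • w2) = w4 + d • w2 := by
          rw [h]; module
        rw [h3]
        exact hM2A (add_mem hw4 (smul_mem _ _ hwM2))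
      rcases (fact1 a _ (hmem _ _)).1 h2 with h4 | h4
      · exact absurd h4 ha
      · exact h4
    obtain ⟨e, he⟩ := h1 (1 - c)
    have h5 := hw12 (e - b) (c + (1 - c)) (by rw [sub_smul, ← he]; module)
    apply one_ne_zero (α := F)
    rw [← h5]; ring
  have ind : ∀ a b c d : F, a • w1 + b • w2 + c • w3 + d • w4 = 0 →
      a = 0 ∧ b = 0 ∧ c = 0 ∧ d = 0 := by
    intro a b c d h
    have hd : d = 0 := by
      by_contra hd
      apply hw4n (-(d⁻¹ * c)) (-(d⁻¹ * a)) (-(d⁻¹ * b))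
      have h2 : d⁻¹ • (a • w1 + b • w2 + c • w3 + d • w4) = 0 := by rw [h, smul_zero]
      rw [smul_add, smul_smul d⁻¹ d, inv_mul_cancel₀ hd, one_smul] at h2
      rw [eq_neg_of_add_eq_zero_right h2]
      module
    subst hd
    have hc : c = 0 := by
      by_contra hc
      apply hw3L
      have h2 : c⁻¹ • (a • w1 + b • w2 + c • w3 + (0 : F) • w4) = 0 := by rw [h, smul_zero]
      rw [zero_smul, add_zero, smul_add, smul_smul c⁻¹ c, inv_mul_cancel₀ hc, one_smul] at h2
      rw [eq_neg_of_add_eq_zero_right h2]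
      exact neg_mem (smul_mem _ _ (add_mem (smul_mem _ _ hw1) (smul_mem _ _ hw2)))
    subst hc
    rw [zero_smul, zero_smul, add_zero, add_zero] at h
    have hb : b = 0 := by
      apply hw12 (-a) b
      rw [neg_smul]
      exact (eq_neg_of_add_eq_zero_right h).symm
    subst hb
    rw [zero_smul, add_zero] at h
    rcases smul_eq_zero.1 h with h | h
    · exact ⟨h, rfl, rfl, rfl⟩
    · exact absurd h hw10
  -- pencils of planes through the lines `34` and `24`
  have hFt : ∀ t : F, ∃ z3 z4 : F, (z3 ≠ 0 ∨ z4 ≠ 0) ∧ ∀ u y : F,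
      (w1 + t • w2 + u • w3 + y • w4 ∈ A ↔ ∃ b : F, u = b * z3 ∧ y = b * z4) := by
    intro t
    have hx : w1 + t • w2 ∈ A := hLA (add_mem hw1 (smul_mem _ _ hw2))
    have hx' : w1 + t • w2 ∉ span F {w3, w4} := by
      intro h
      obtain ⟨a, b, hab⟩ := mem_span_pair.1 h
      have := ind 1 t (-a) (-b) (by
        have : (1 : F) • w1 + t • w2 + (-a) • w3 + (-b) • w4 =
          (w1 + t • w2) - (a • w3 + b • w4) := by module
        rw [this, hab, sub_self])
      exact one_ne_zero this.1
    obtain ⟨z, hz, hz0, hJ⟩ := hA.transversal hL34 hL34A hx hx'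
    obtain ⟨z3, z4, rfl⟩ := mem_span_pair.1 hz
    refine ⟨z3, z4, ?_, ?_⟩
    · by_contra hcon
      push Not at hcon
      apply hz0
      rw [hcon.1, hcon.2]
      module
    · intro u y
      have := hJ 1 (u • w3 + y • w4) (mem_span_pair.2 ⟨u, y, rfl⟩)
      rw [one_smul, ← add_assoc] at this
      rw [this]
      constructor
      · rintro (h | ⟨b, hb⟩)
        · exact absurd h one_ne_zero
        · have := ind 0 0 (u - b * z3) (y - b * z4) (by
            have h : (0 : F) • w1 + (0 : F) • w2 + (u - b * z3) • w3 + (y - b * z4) • w4 =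
              (u • w3 + y • w4) - b • (z3 • w3 + z4 • w4) := by module
            rw [h, hb, sub_self])
          exact ⟨b, sub_eq_zero.1 this.2.2.1, sub_eq_zero.1 this.2.2.2⟩
      · rintro ⟨b, rfl, rfl⟩
        exact Or.inr ⟨b, by module⟩
  have hGu : ∀ u : F, ∃ z2 z4 : F, (z2 ≠ 0 ∨ z4 ≠ 0) ∧ ∀ t y : F,
      (w1 + t • w2 + u • w3 + y • w4 ∈ A ↔ ∃ b : F, t = b * z2 ∧ y = b * z4) := by
    intro u
    have hx : w1 + u • w3 ∈ A := hM1A (add_mem hwM1 (smul_mem _ _ hw3))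
    have hx' : w1 + u • w3 ∉ M2 := by
      intro h
      rw [hM2s] at h
      obtain ⟨a, b, hab⟩ := mem_span_pair.1 h
      have := ind 1 (-a) u (-b) (by
        have : (1 : F) • w1 + (-a) • w2 + u • w3 + (-b) • w4 =
          (w1 + u • w3) - (a • w2 + b • w4) := by module
        rw [this, hab, sub_self])
      exact one_ne_zero this.1
    obtain ⟨z, hz, hz0, hJ⟩ := hA.transversal hM2 hM2A hx hx'
    rw [hM2s] at hz
    obtain ⟨z2, z4, rfl⟩ := mem_span_pair.1 hz
    refine ⟨z2, z4, ?_, ?_⟩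
    · by_contra hcon
      push Not at hcon
      apply hz0
      rw [hcon.1, hcon.2]
      module
    · intro t y
      have := hJ 1 (t • w2 + y • w4) (by rw [hM2s]; exact mem_span_pair.2 ⟨t, y, rfl⟩)
      have e : w1 + t • w2 + u • w3 + y • w4 = (1 : F) • (w1 + u • w3) + (t • w2 + y • w4) := by
        module
      rw [e, this]
      constructor
      · rintro (h | ⟨b, hb⟩)
        · exact absurd h one_ne_zero
        · have := ind 0 (t - b * z2) 0 (y - b * z4) (by
            have h : (0 : F) • w1 + (t - b * z2) • w2 + (0 : F) • w3 + (y - b * z4) • w4 =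
              (t • w2 + y • w4) - b • (z2 • w2 + z4 • w4) := by module
            rw [h, hb, sub_self])
          exact ⟨b, sub_eq_zero.1 this.2.1, sub_eq_zero.1 this.2.2.2⟩
      · rintro ⟨b, rfl, rfl⟩
        exact Or.inr ⟨b, by module⟩
  have hu0 : ∀ t y : F, w1 + t • w2 + (0 : F) • w3 + y • w4 ∈ A → y = 0 := by
    obtain ⟨z2, z4, hz, h⟩ := hGu 0
    obtain ⟨b, hb, hb'⟩ := (h 1 0).1 (by
      have : w1 + (1 : F) • w2 + (0 : F) • w3 + (0 : F) • w4 = w1 + w2 := by module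
      rw [this]
      exact hLA (add_mem hw1 hw2))
    have hb0 : b ≠ 0 := by
      rintro rfl
      simp at hb
    have hz4 : z4 = 0 := by
      rcases mul_eq_zero.1 hb'.symm with h | h
      · exact absurd h hb0
      · exact h
    intro t y hty
    obtain ⟨b, -, hb⟩ := (h t y).1 hty
    rw [hb, hz4, mul_zero]
  have ht0 : ∀ u y : F, w1 + (0 : F) • w2 + u • w3 + y • w4 ∈ A → y = 0 := by
    obtain ⟨z2, z4, hz, h⟩ := hFt 0
    obtain ⟨b, hb, hb'⟩ := (h 1 0).1 (by
      have : w1 + (0 : F) • w2 + (1 : F) • w3 + (0 : F) • w4 = w1 + w3 := by module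
      rw [this]
      exact hM1A (add_mem hwM1 hw3))
    have hb0 : b ≠ 0 := by
      rintro rfl
      simp at hb
    have hz4 : z4 = 0 := by
      rcases mul_eq_zero.1 hb'.symm with h | h
      · exact absurd h hb0
      · exact h
    intro t y hty
    obtain ⟨b, -, hb⟩ := (h t y).1 hty
    rw [hb, hz4, mul_zero]
  have hs : ∀ t : F, ∃ s : F, ∀ u y : F, (w1 + t • w2 + u • w3 + y • w4 ∈ A ↔ y = s * u) := by
    intro t
    obtain ⟨z3, z4, hz, h⟩ := hFt t
    have hz3 : z3 ≠ 0 := by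
      rintro rfl
      have := hu0 t z4 ((h 0 z4).2 ⟨1, by simp, by simp⟩)
      rcases hz with hz | hz
      · exact hz rfl
      · exact hz this
    refine ⟨z4 / z3, fun u y => ?_⟩
    rw [h]
    constructor
    · rintro ⟨b, rfl, rfl⟩
      field_simp
    · rintro rfl
      exact ⟨u / z3, by field_simp, by field_simp⟩
  have hs' : ∀ u : F, ∃ s : F, ∀ t y : F, (w1 + t • w2 + u • w3 + y • w4 ∈ A ↔ y = s * t) := by
    intro t
    obtain ⟨z3, z4, hz, h⟩ := hGu t
    have hz3 : z3 ≠ 0 := by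
      rintro rfl
      have := ht0 t z4 ((h 0 z4).2 ⟨1, by simp, by simp⟩)
      rcases hz with hz | hz
      · exact hz rfl
      · exact hz this
    refine ⟨z4 / z3, fun u y => ?_⟩
    rw [h]
    constructor
    · rintro ⟨b, rfl, rfl⟩
      field_simp
    · rintro rfl
      exact ⟨u / z3, by field_simp, by field_simp⟩
  choose s hs using hs
  choose s' hs' using hs'
  set c := s 1 with hc
  have hs'c : ∀ u, s' u = c * u := by
    intro u
    have := (hs' u 1 (c * u)).1 ((hs 1 u (c * u)).2 rfl)
    rw [this, mul_one]
  have hR : ∀ t u y : F, w1 + t • w2 + u • w3 + y • w4 ∈ A ↔ y = c * u * t := by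
    intro t u y
    rw [hs', hs'c]
  have hc0 : c ≠ 0 := by
    intro h0
    have h1 := (hR 1 1 0).2 (by rw [h0]; ring)
    have e : w1 + (1 : F) • w2 + (1 : F) • w3 + (0 : F) • w4 = (1 : F) • w3 + (w1 + w2) := by
      module
    rw [e] at h1
    rcases (fact1 1 (w1 + w2) (add_mem hw1 hw2)).1 h1 with h | ⟨b, hb⟩
    · exact one_ne_zero h
    · have := hw12 (b - 1) 1 (by rw [sub_smul, ← hb]; module)
      exact one_ne_zero this
  refine ⟨w1, w2, w3, c • w4, ?_, ?_⟩
  · intro a b d e h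
    rw [smul_smul] at h
    obtain ⟨h1, h2, h3, h4⟩ := ind _ _ _ _ h
    refine ⟨h1, h2, h3, ?_⟩
    rcases mul_eq_zero.1 h4 with h | h
    · exact h
    · exact absurd h hc0
  · intro a b d e
    rw [smul_smul]
    by_cases ha : a = 0
    · subst ha
      have fact5 := hA.transversal' hM2 hM2A (hM1A hw3) hw3M2 hw4 hw40 (by
        have := (fact4 1 w4 hw4).2 (Or.inr ⟨1, by rw [one_smul]⟩)
        rwa [one_smul] at this)
      have e1 : (0 : F) • w1 + b • w2 + d • w3 + (e * c) • w4 =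
        d • w3 + (b • w2 + (e * c) • w4) := by module
      rw [e1, fact5 d _ (add_mem (smul_mem _ _ hwM2) (smul_mem _ _ hw4)), zero_mul]
      constructor
      · rintro (rfl | ⟨f, hf⟩)
        · rw [mul_zero]
        · have := ind 0 b 0 (e * c - f) (by
            have h : (0 : F) • w1 + b • w2 + (0 : F) • w3 + (e * c - f) • w4 =
              (b • w2 + (e * c) • w4) - f • w4 := by module
            rw [h, hf, sub_self])
          rw [this.2.1, zero_mul]
      · intro h
        rcases mul_eq_zero.1 h.symm with rfl | rfl
        · exact Or.inr ⟨e * c, by module⟩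
        · exact Or.inl rfl
    · have e1 : a • w1 + b • w2 + d • w3 + (e * c) • w4 =
          a • (w1 + (b / a) • w2 + (d / a) • w3 + (e * c / a) • w4) := by
        have hd : ∀ t : F, a * (t / a) = t := fun t => by field_simp
        simp only [smul_add, smul_smul, hd]
      rw [e1, hA.smul_iff ha, hR]
      constructor
      · intro h
        field_simp at h
        linear_combination h
      · intro h
        field_simp
        linear_combination h

end Good

end coords

section final

variable {F : Type} [Field F] [Fintype F]

/-- Vectors whose dual plane is not in the family (together with zero). -/
def AA (S : Set (Submodule F (Fin 4 → F))) : Set (Fin 4 → F) :=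
  {w | w = 0 ∨ oc (span F {w}) ∉ S}

theorem oc_inj {U W : Submodule F (Fin 4 → F)} (h : oc U = oc W) : U = W := by
  rw [← oc_oc U, h, oc_oc]

theorem span_smul_eq {a : F} (ha : a ≠ 0) (w : Fin 4 → F) :
    span F {a • w} = span F {w} :=
  span_singleton_smul_eq (isUnit_iff_ne_zero.2 ha) w

theorem transfer {S : Set (Submodule F (Fin 4 → F))}
    (hplane : ∀ π ∈ S, finrank F π = 3) (U : Submodule F (Fin 4 → F)) :
    (Fintype.card F - 1) * {π ∈ S | oc U ≤ π}.ncard + (AA S ∩ U).ncard =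
      (U : Set (Fin 4 → F)).ncard := by
  set C : Set (Fin 4 → F) := {w | w ∈ U ∧ (w = 0 ∨ oc (span F {w}) ∈ S)} with hC
  have hc := cone_card C ⟨zero_mem _, Or.inl rfl⟩ (by
    rintro a x ⟨hx, hx'⟩
    refine ⟨smul_mem _ _ hx, ?_⟩
    by_cases ha : a = 0
    · left
      rw [ha, zero_smul]
    · rcases hx' with rfl | h
      · left
        rw [smul_zero]
      · right
        rwa [span_smul_eq ha])
  have himg : {π ∈ S | oc U ≤ π} =
      oc '' {p : Submodule F (Fin 4 → F) | finrank F p = 1 ∧ (p : Set (Fin 4 → F)) ⊆ C} := by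
    ext π
    constructor
    · rintro ⟨hπ, hU⟩
      obtain ⟨w, hw0, rfl⟩ := exists_oc (hplane π hπ)
      refine ⟨span F {w}, ⟨finrank_span_singleton hw0, ?_⟩, rfl⟩
      have hwU : span F {w} ≤ U := by
        have := le_oc_comm.1 hU
        rwa [oc_oc] at this
      intro x hx
      refine ⟨hwU hx, ?_⟩
      obtain ⟨a, rfl⟩ := mem_span_singleton.1 hx
      by_cases ha : a = 0
      · left
        rw [ha, zero_smul]
      · right
        rwa [span_smul_eq ha]
    · rintro ⟨p, ⟨hp, hpC⟩, rfl⟩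
      obtain ⟨w, hw0, rfl⟩ := exists_span hp
      have hw := hpC (mem_span_singleton_self w)
      refine ⟨hw.2.resolve_left hw0, ?_⟩
      rw [le_oc_comm, oc_oc, span_singleton_le_iff_mem]
      exact hw.1
  rw [himg, Set.ncard_image_of_injective _ (fun _ _ h => oc_inj h)]
  have hun : C ∪ (AA S ∩ U) = (U : Set (Fin 4 → F)) := by
    ext x
    simp only [hC, AA, Set.mem_union, Set.mem_inter_iff, Set.mem_setOf_eq, SetLike.mem_coe]
    tauto
  have hin : C ∩ (AA S ∩ U) = {0} := by
    ext x
    simp only [hC, AA, Set.mem_inter_iff, Set.mem_setOf_eq, SetLike.mem_coe,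
      Set.mem_singleton_iff]
    constructor
    · tauto
    · rintro rfl
      simp
  have hcard := Set.ncard_union_add_ncard_inter C (AA S ∩ U) (Set.toFinite _) (Set.toFinite _)
  rw [hun, hin, Set.ncard_singleton] at hcard
  omega

theorem good_AA {S : Set (Submodule F (Fin 4 → F))}
    (hplane : ∀ π ∈ S, finrank F π = 3)
    (hP1 : ∀ p : Submodule F (Fin 4 → F), finrank F p = 1 →
      {π ∈ S | p ≤ π}.ncard = Fintype.card F ^ 2 - Fintype.card F ∨
        {π ∈ S | p ≤ π}.ncard = Fintype.card F ^ 2)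
    (hP2 : ∀ L : Submodule F (Fin 4 → F), finrank F L = 2 →
      (∃ π ∈ S, L ≤ π) → Fintype.card F - 1 ≤ {π ∈ S | L ≤ π}.ncard) :
    Good (AA S) := by
  have hq := two_le_card (F := F)
  refine ⟨Or.inl rfl, ?_, ?_, ?_⟩
  · intro a x hx
    by_cases ha : a = 0
    · left
      rw [ha, zero_smul]
    · rcases hx with rfl | h
      · left
        rw [smul_zero]
      · right
        rwa [span_smul_eq ha]
  · intro v hv
    have h := transfer hplane (oc (span F {v}))
    rw [oc_oc, ncard_sub, finrank_oc_span hv] at h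
    change _ + ff (AA S) v = _ at h
    obtain ⟨t, ht⟩ : ∃ t, Fintype.card F = t + 1 := ⟨Fintype.card F - 1, by omega⟩
    rcases hP1 _ (finrank_span_singleton (K := F) hv) with h1 | h1
    · right
      have e : (t + 1) ^ 2 - (t + 1) = t * (t + 1) := by
        rw [Nat.sub_eq_iff_eq_add (by nlinarith)]
        ring
      rw [h1, ht, e] at h
      rw [ht]
      simp only [Nat.add_sub_cancel] at h
      nlinarith
    · left
      rw [h1, ht] at h
      rw [ht]
      simp only [Nat.add_sub_cancel] at h
      nlinarith
  · intro L hL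
    by_cases hLA : (L : Set (Fin 4 → F)) ⊆ AA S
    · exact Or.inl hLA
    · right
      rw [Set.not_subset] at hLA
      obtain ⟨w, hwL, hw⟩ := hLA
      have hw' : oc (span F {w}) ∈ S := by
        by_contra h
        exact hw (Or.inr h)
      have hoc : finrank F (oc L) = 2 := by
        have := finrank_oc L
        omega
      have h1 := hP2 (oc L) hoc ⟨_, hw', by
        rw [le_oc_comm, oc_oc, span_singleton_le_iff_mem]
        exact hwL⟩
      have h := transfer hplane L
      rw [ncard_sub, hL] at h
      obtain ⟨t, ht⟩ : ∃ t, Fintype.card F = t + 1 := ⟨Fintype.card F - 1, by omega⟩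
      rw [ht] at h h1 ⊢
      simp only [Nat.add_sub_cancel] at h h1
      nlinarith [Nat.mul_le_mul_left t h1]

section frame

variable {w1 w2 w3 w4 : Fin 4 → F}

/-- The combination map of a frame. -/
def comb (w1 w2 w3 w4 : Fin 4 → F) : (Fin 4 → F) →ₗ[F] (Fin 4 → F) where
  toFun x := x 0 • w1 + x 1 • w2 + x 2 • w3 + x 3 • w4
  map_add' x y := by
    simp only [Pi.add_apply]
    module
  map_smul' a x := by
    simp only [Pi.smul_apply, smul_eq_mul, RingHom.id_apply]
    module

/-- The coordinate map of a frame. -/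
def coor (w1 w2 w3 w4 : Fin 4 → F) : (Fin 4 → F) →ₗ[F] (Fin 4 → F) where
  toFun v := ![w1 ⬝ᵥ v, w2 ⬝ᵥ v, w3 ⬝ᵥ v, w4 ⬝ᵥ v]
  map_add' x y := by
    simp only [dotProduct_add]
    ext i
    fin_cases i <;> simp
  map_smul' a x := by
    simp only [dotProduct_smul]
    ext i
    fin_cases i <;> simp

variable (hind : ∀ a b c d : F, a • w1 + b • w2 + c • w3 + d • w4 = 0 →
  a = 0 ∧ b = 0 ∧ c = 0 ∧ d = 0)
include hind

theorem comb_bij : Function.Bijective (comb w1 w2 w3 w4) := by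
  have hinj : Function.Injective (comb w1 w2 w3 w4) := by
    rw [← LinearMap.ker_eq_bot, LinearMap.ker_eq_bot']
    intro x hx
    obtain ⟨h0, h1, h2, h3⟩ := hind _ _ _ _ hx
    ext i
    fin_cases i <;> assumption
  exact ⟨hinj, LinearMap.injective_iff_surjective.1 hinj⟩

theorem coor_zero {v : Fin 4 → F} (h1 : w1 ⬝ᵥ v = 0) (h2 : w2 ⬝ᵥ v = 0) (h3 : w3 ⬝ᵥ v = 0)
    (h4 : w4 ⬝ᵥ v = 0) : v = 0 := by
  have : ∀ u : Fin 4 → F, u ⬝ᵥ v = 0 := by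
    intro u
    obtain ⟨x, rfl⟩ := (comb_bij hind).2 u
    change (x 0 • w1 + x 1 • w2 + x 2 • w3 + x 3 • w4) ⬝ᵥ v = 0
    simp only [add_dotProduct, smul_dotProduct, h1, h2, h3, h4, smul_zero, add_zero]
  exact dotProduct_eq_zero v (fun u => by rw [dotProduct_comm]; exact this u)

theorem coor_bij : Function.Bijective (coor w1 w2 w3 w4) := by
  have hinj : Function.Injective (coor w1 w2 w3 w4) := by
    rw [← LinearMap.ker_eq_bot, LinearMap.ker_eq_bot']
    intro x hx
    exact coor_zero hind (congrFun hx 0) (congrFun hx 1) (congrFun hx 2) (congrFun hx 3)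
  exact ⟨hinj, LinearMap.injective_iff_surjective.1 hinj⟩

theorem line_aux {A : Set (Fin 4 → F)} (hA : Good A)
    (hfr : ∀ a b c d : F, a • w1 + b • w2 + c • w3 + d • w4 ∈ A ↔ a * d = b * c)
    {s t : F} (hst : s ≠ 0 ∨ t ≠ 0) {v : Fin 4 → F}
    (hv1 : s * (w1 ⬝ᵥ v) + t * (w3 ⬝ᵥ v) = 0) (hv2 : s * (w2 ⬝ᵥ v) + t * (w4 ⬝ᵥ v) = 0) :
    v ∈ GG A := by
  have hx : s • w1 + t • w3 ≠ 0 := by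
    intro h
    have := hind s 0 t 0 (by rw [← h]; module)
    rcases hst with h | h
    · exact h this.1
    · exact h this.2.2.1
  have hy : s • w2 + t • w4 ∉ span F {s • w1 + t • w3} := by
    intro h
    obtain ⟨a, ha⟩ := mem_span_singleton.1 h
    have := hind (a * s) (-s) (a * t) (-t) (by
      have e : (a * s) • w1 + (-s) • w2 + (a * t) • w3 + (-t) • w4 =
        a • (s • w1 + t • w3) - (s • w2 + t • w4) := by module
      rw [e, ha, sub_self])
    rcases hst with h | h
    · exact h (neg_eq_zero.1 this.2.1)
    · exact h (neg_eq_zero.1 this.2.2.2)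
  have hL := finrank_pair hx hy
  refine hA.line_G hL ?_ ?_
  · intro z hz
    obtain ⟨a, b, rfl⟩ := mem_span_pair.1 hz
    have e : a • (s • w1 + t • w3) + b • (s • w2 + t • w4) =
      (a * s) • w1 + (b * s) • w2 + (a * t) • w3 + (b * t) • w4 := by module
    rw [e, hfr]
    ring
  · rw [SetLike.mem_coe, mem_oc]
    intro z hz
    obtain ⟨a, b, rfl⟩ := mem_span_pair.1 hz
    simp only [add_dotProduct, smul_dotProduct, smul_eq_mul, hv1, hv2, mul_zero, add_zero]

theorem Z_eq {A : Set (Fin 4 → F)} (hA : Good A)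
    (hfr : ∀ a b c d : F, a • w1 + b • w2 + c • w3 + d • w4 ∈ A ↔ a * d = b * c) :
    {v : Fin 4 → F | (w1 ⬝ᵥ v) * (w4 ⬝ᵥ v) = (w2 ⬝ᵥ v) * (w3 ⬝ᵥ v)} = GG A := by
  apply Set.eq_of_subset_of_ncard_le _ _ (Set.toFinite _)
  · intro v hv
    change _ = _ at hv
    by_cases h : w3 ⬝ᵥ v ≠ 0 ∨ w1 ⬝ᵥ v ≠ 0
    · exact line_aux hind hA hfr (s := - (w3 ⬝ᵥ v)) (t := w1 ⬝ᵥ v)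
        (by rwa [neg_ne_zero]) (by ring) (by linear_combination hv)
    · push Not at h
      by_cases h' : w4 ⬝ᵥ v ≠ 0 ∨ w2 ⬝ᵥ v ≠ 0
      · exact line_aux hind hA hfr (s := - (w4 ⬝ᵥ v)) (t := w2 ⬝ᵥ v)
          (by rwa [neg_ne_zero]) (by rw [h.1, h.2]; ring) (by ring)
      · push Not at h'
        left
        exact coor_zero hind h.2 h'.2 h.1 h'.1
  · rw [hA.ncard_G_univ]
    set N : Set (Fin 4 → F) := {x | x 0 * x 3 = x 1 * x 2} with hN
    have e1 : A = comb w1 w2 w3 w4 '' N := by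
      ext x
      constructor
      · intro hx
        obtain ⟨y, rfl⟩ := (comb_bij hind).2 x
        exact ⟨y, (hfr _ _ _ _).1 hx, rfl⟩
      · rintro ⟨y, hy, rfl⟩
        exact (hfr _ _ _ _).2 hy
    have e2 : N = coor w1 w2 w3 w4 ''
        {v : Fin 4 → F | (w1 ⬝ᵥ v) * (w4 ⬝ᵥ v) = (w2 ⬝ᵥ v) * (w3 ⬝ᵥ v)} := by
      ext x
      constructor
      · intro hx
        obtain ⟨y, rfl⟩ := (coor_bij hind).2 x
        exact ⟨y, hx, rfl⟩
      · rintro ⟨y, hy, rfl⟩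
        exact hy
    rw [e1, Set.ncard_image_of_injective _ (comb_bij hind).1, e2,
      Set.ncard_image_of_injective _ (coor_bij hind).1]

end frame

/-- The quadratic form attached to a frame. -/
def phi (w1 w2 w3 w4 : Fin 4 → F) : QuadraticForm F (Fin 4 → F) :=
  QuadraticMap.linMulLin (dotProductBilin F F w1) (dotProductBilin F F w4) -
    QuadraticMap.linMulLin (dotProductBilin F F w2) (dotProductBilin F F w3)

theorem phi_apply (w1 w2 w3 w4 v : Fin 4 → F) :
    phi w1 w2 w3 w4 v = (w1 ⬝ᵥ v) * (w4 ⬝ᵥ v) - (w2 ⬝ᵥ v) * (w3 ⬝ᵥ v) := rfl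

theorem plane_count {A : Set (Fin 4 → F)} (hA : Good A) {w : Fin 4 → F} (hw0 : w ≠ 0) :
    {p : Submodule F (Fin 4 → F) | finrank F p = 1 ∧ p ≤ oc (span F {w}) ∧
      ∀ v ∈ p, v ∈ GG A}.ncard = Fintype.card F + 1 ↔ w ∉ A := by
  have hq := two_le_card (F := F)
  have hsm : ∀ a : F, ∀ x ∈ GG A, a • x ∈ GG A := by
    intro a x hx
    by_cases ha : a = 0
    · left
      rw [ha, zero_smul]
    · rcases hx with rfl | h
      · left
        rw [smul_zero]
      · right
        unfold ff at h ⊢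
        rwa [span_smul_eq ha]
  have h := cone_card (GG A ∩ (oc (span F {w}) : Set (Fin 4 → F))) ⟨Or.inl rfl, zero_mem _⟩ (by
    rintro a x ⟨hx, hx'⟩
    exact ⟨hsm a x hx, smul_mem _ _ hx'⟩)
  have e : {p : Submodule F (Fin 4 → F) | finrank F p = 1 ∧ p ≤ oc (span F {w}) ∧
      ∀ v ∈ p, v ∈ GG A} = {p : Submodule F (Fin 4 → F) | finrank F p = 1 ∧
        (p : Set (Fin 4 → F)) ⊆ GG A ∩ (oc (span F {w}) : Set (Fin 4 → F))} := by
    ext p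
    simp only [Set.mem_setOf_eq, Set.subset_inter_iff]
    constructor
    · rintro ⟨a, b, c⟩
      exact ⟨a, c, b⟩
    · rintro ⟨a, b, c⟩
      exact ⟨a, c, b⟩
  rw [e]
  obtain ⟨t, ht⟩ : ∃ t, Fintype.card F = t + 1 := ⟨Fintype.card F - 1, by omega⟩
  have ht1 : 1 ≤ t := by omega
  constructor
  · intro hn hw
    have h2 := hA.ncard_G_A hw hw0
    rw [hn] at h
    rw [← h, ht] at h2
    simp only [Nat.add_sub_cancel] at h2
    nlinarith
  · intro hw
    have h2 := hA.ncard_G_not hw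
    rw [h2, ht] at h
    rw [ht]
    simp only [Nat.add_sub_cancel] at h
    apply Nat.eq_of_mul_eq_mul_left ht1
    nlinarith

end final

end HQ

/-- For any prime power `q`, a nonempty family `S` of planes of `PG(3,q)` in which
every point lies in exactly `q²-q` or `q²` planes of `S`, and every line lying in some plane of
`S` lies in at least `q-1` planes of `S`, is the family of planes meeting some nonsingular
hyperbolic quadric of `PG(3,q)` in an irreducible conic (i.e. in exactly `q+1` points). -/
theorem stmt_2 (F : Type) [Field F] [Fintype F] (q : ℕ) (hq : Fintype.card F = q)
    (S : Set (Submodule F (Fin 4 → F)))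
    (hS : S.Nonempty)
    (hplane : ∀ π ∈ S, Module.finrank F π = 3)
    (hP1 : ∀ p : Submodule F (Fin 4 → F), Module.finrank F p = 1 →
      {π ∈ S | p ≤ π}.ncard = q^2 - q ∨ {π ∈ S | p ≤ π}.ncard = q^2)
    (hP2 : ∀ L : Submodule F (Fin 4 → F), Module.finrank F L = 2 →
      (∃ π ∈ S, L ≤ π) → q - 1 ≤ {π ∈ S | L ≤ π}.ncard) :
    ∃ φ : QuadraticForm F (Fin 4 → F),
      (∀ x, (∀ y, φ (x + y) - φ x - φ y = 0) → x = 0) ∧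
      (∃ W : Submodule F (Fin 4 → F), Module.finrank F W = 2 ∧ ∀ v ∈ W, φ v = 0) ∧
      S = {π : Submodule F (Fin 4 → F) | Module.finrank F π = 3 ∧
        {p : Submodule F (Fin 4 → F) |
          Module.finrank F p = 1 ∧ p ≤ π ∧ ∀ v ∈ p, φ v = 0}.ncard = q + 1} := by
  classical
  subst hq
  have hA := HQ.good_AA hplane hP1 hP2
  obtain ⟨w1, w2, w3, w4, hind, hfr⟩ := hA.exists_frame
  have hZ := HQ.Z_eq hind hA hfr
  have hmem : ∀ v, HQ.phi w1 w2 w3 w4 v = 0 ↔ v ∈ HQ.GG (HQ.AA S) := by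
    intro v
    rw [← hZ, HQ.phi_apply, sub_eq_zero]
    rfl
  refine ⟨HQ.phi w1 w2 w3 w4, ?_, ?_, ?_⟩
  · intro x hx
    have key : ∀ c : Fin 4 → F, (w1 ⬝ᵥ x) * c 3 + (w4 ⬝ᵥ x) * c 0 -
        (w2 ⬝ᵥ x) * c 2 - (w3 ⬝ᵥ x) * c 1 = 0 := by
      intro c
      obtain ⟨y, rfl⟩ := (HQ.coor_bij hind).2 c
      have h := hx y
      rw [HQ.phi_apply, HQ.phi_apply, HQ.phi_apply] at h
      simp only [dotProduct_add] at h
      change (w1 ⬝ᵥ x) * (w4 ⬝ᵥ y) + (w4 ⬝ᵥ x) * (w1 ⬝ᵥ y) -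
        (w2 ⬝ᵥ x) * (w3 ⬝ᵥ y) - (w3 ⬝ᵥ x) * (w2 ⬝ᵥ y) = 0
      linear_combination h
    have k1 := key ![0, 0, 0, 1]
    have k2 := key ![0, 0, 1, 0]
    have k3 := key ![0, 1, 0, 0]
    have k4 := key ![1, 0, 0, 0]
    simp at k1 k2 k3 k4
    exact HQ.coor_zero hind k1 k2 k3 k4
  · have h1 : w1 ≠ 0 := by
      intro h
      have := hind 1 0 0 0 (by rw [h]; module)
      exact one_ne_zero this.1
    have h2 : w2 ∉ Submodule.span F {w1} := by
      intro h
      obtain ⟨a, ha⟩ := Submodule.mem_span_singleton.1 h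
      have := hind a (-1) 0 0 (by rw [← ha]; module)
      exact one_ne_zero (neg_eq_zero.1 this.2.1)
    refine ⟨HQ.oc (Submodule.span F {w1, w2}), ?_, ?_⟩
    · have := HQ.finrank_oc (Submodule.span F {w1, w2})
      rw [HQ.finrank_pair h1 h2] at this
      omega
    · intro v hv
      rw [HQ.mem_oc] at hv
      rw [HQ.phi_apply, hv w1 (Submodule.subset_span (by simp)),
        hv w2 (Submodule.subset_span (by simp))]
      ring
  · ext π
    simp only [hmem, Set.mem_setOf_eq]
    constructor
    · intro hπ
      refine ⟨hplane π hπ, ?_⟩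
      obtain ⟨w, hw0, rfl⟩ := HQ.exists_oc (hplane π hπ)
      rw [HQ.plane_count hA hw0]
      rintro (h | h)
      · exact hw0 h
      · exact h hπ
    · rintro ⟨h3, hn⟩
      obtain ⟨w, hw0, rfl⟩ := HQ.exists_oc h3
      rw [HQ.plane_count hA hw0] at hn
      by_contra h
      exact hn (Or.inr h)
end
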